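/- arXiv:math/0608391 — 2 statements merged into one kernel-verified Lean document; each statement's English description precedes it below -/
import Mathlib

section
/- If C is a permutation class containing only finitely many simple permutations, then the generating function of the set of involutions in C is algebraic over ℚ[x]. -/
/-- A permutation of length `n`. -/
abbrev Perm (n : ℕ) := Equiv.Perm (Fin n)

/-- `σ` is contained in `π`: there is a strictly increasing sequence of indices of `π`
on which `π` is order isomorphic to `σ`. -/
def Contains {m n : ℕ} (σ : Perm m) (π : Perm n) : Prop :=
  ∃ f : Fin m → Fin n, StrictMono f ∧ ∀ s t : Fin m, π (f s) < π (f t) ↔ σ s < σ t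

/-- A permutation class: a downset in the containment order. -/
def IsPermClass (C : ∀ n, Set (Perm n)) : Prop :=
  ∀ ⦃m n : ℕ⦄ (σ : Perm m) (π : Perm n), π ∈ C n → Contains σ π → σ ∈ C m

/-- A set of contiguous values. -/
def IsRange {n : ℕ} (I : Finset (Fin n)) : Prop :=
  ∀ ⦃i j l : Fin n⦄, i ∈ I → l ∈ I → i ≤ j → j ≤ l → j ∈ I

/-- An interval of `π`: a set of contiguous indices mapped to a set of contiguous values. -/
def IsPermInterval {n : ℕ} (π : Perm n) (I : Finset (Fin n)) : Prop :=
  IsRange I ∧ IsRange (I.image π)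

/-- A permutation is simple if its only intervals have size `0`, `1`, or `n`. -/
def IsSimple {n : ℕ} (π : Perm n) : Prop :=
  ∀ I : Finset (Fin n), IsPermInterval π I → I.card ≤ 1 ∨ I.card = n

/-- The set of simple permutations belonging to the class `C` is finite. -/
def FinitelyManySimples (C : ∀ n, Set (Perm n)) : Prop :=
  {p : Σ n : ℕ, Perm n | p.2 ∈ C p.1 ∧ IsSimple p.2}.Finite

/-- The generating function `∑_{n ≥ 1} |S_n| xⁿ` of a set of permutations. -/
noncomputable def genFun (S : ∀ n, Set (Perm n)) : PowerSeries ℚ :=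
  PowerSeries.mk fun n => if n = 0 then 0 else (Nat.card (S n) : ℚ)

/-- A power series `f` is algebraic over `ℚ[x]` if there is a nonzero polynomial
`P(x,y) ∈ ℚ[x][y]` with `P(x,f) = 0`. -/
def IsAlgebraicOverQx (f : PowerSeries ℚ) : Prop :=
  ∃ P : Polynomial (Polynomial ℚ), P ≠ 0 ∧
    Polynomial.eval₂ Polynomial.coeToPowerSeries.ringHom f P = 0

open Polynomial in
theorem IntermediateField.isAlgebraic_of_derivation_eq_zero {K E : Type} [Field K] [Field E]
    [CharZero K] [Algebra K E] {κ : Type} [Finite κ] (f : κ → E)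
    (h : ∀ (D : Derivation K (IntermediateField.adjoin K (Set.range f)) E) (t : κ),
      D ⟨f t, IntermediateField.subset_adjoin K _ ⟨t, rfl⟩⟩ = 0) (t : κ) :
    IsAlgebraic K (f t) := by
  set L := IntermediateField.adjoin K (Set.range f) with hL
  have hmem (t : κ) : f t ∈ L := IntermediateField.subset_adjoin K _ ⟨t, rfl⟩
  have hD0 (D : Derivation K L E) : D = 0 := by
    ext ⟨x, hx⟩
    induction hx using IntermediateField.adjoin_induction with
    | mem x hx => obtain ⟨t, rfl⟩ := hx; exact h D t
    | algebraMap x => exact D.map_algebraMap x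
    | add x y hx hy hx' hy' =>
      have := D.map_add ⟨x, hx⟩ ⟨y, hy⟩
      rw [hx', hy'] at this
      simpa using this
    | inv x hx hx' =>
      have := D.leibniz_inv ⟨x, hx⟩
      rw [hx', Derivation.coe_zero, Pi.zero_apply, smul_zero] at this
      exact this
    | mul x y hx hy hx' hy' =>
      have := D.leibniz ⟨x, hx⟩ ⟨y, hy⟩
      rw [hx', hy'] at this
      simpa using this
  have hsub : Subsingleton (Ω[L⁄K]) := by
    refine subsingleton_of_forall_eq 0 fun ω ↦ ?_
    refine (Module.forall_dual_apply_eq_zero_iff L ω).1 fun φ ↦ ?_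
    let ψ : Ω[L⁄K] →ₗ[L] E := (Algebra.linearMap L E).comp φ
    have hψ : ψ = 0 := by
      apply (KaehlerDifferential.linearMapEquivDerivation K L).injective
      rw [hD0 (KaehlerDifferential.linearMapEquivDerivation K L ψ), map_zero]
    have := LinearMap.congr_fun hψ ω
    simpa [ψ] using this
  have hfin : Algebra.EssFiniteType K L :=
    IntermediateField.essFiniteType_iff.2
      (IntermediateField.fg_adjoin_of_finite (Set.finite_range f))
  have hur : Algebra.FormallyUnramified K L := ⟨hsub⟩
  have hsep : Algebra.IsSeparable K L :=
    (Algebra.FormallyUnramified.iff_isSeparable (K := K) L).1 hur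
  have := Algebra.IsAlgebraic.isAlgebraic (R := K) (⟨f t, hmem t⟩ : L)
  exact (isAlgebraic_algebraMap_iff (A := E) (algebraMap L E).injective).2 this

theorem Derivation.leibniz_finsetProd {R A M ι : Type*} [CommRing R] [CommRing A] [AddCommGroup M]
    [Algebra R A] [Module A M] [Module R M] [DecidableEq ι] (D : Derivation R A M) (s : Finset ι)
    (f : ι → A) :
    D (∏ i ∈ s, f i) = ∑ i ∈ s, (∏ j ∈ s.erase i, f j) • D (f i) := by
  induction s using Finset.induction_on with
  | empty => simp
  | insert a s ha ih =>
    rw [Finset.prod_insert ha, D.leibniz, ih, Finset.sum_insert ha, Finset.erase_insert ha,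
      add_comm, Finset.smul_sum]
    congr 1
    refine Finset.sum_congr rfl fun i hi ↦ ?_
    rw [Finset.erase_insert_of_ne (by rintro rfl; exact ha hi), Finset.prod_insert
      (fun h ↦ ha (Finset.mem_of_mem_erase h)), smul_smul]

open PowerSeries in
/-- The components of a solution of a polynomial system over the algebraic power series are
algebraic, provided that the Jacobian of the system vanishes at the origin. -/
theorem PowerSeries.isAlgebraic_of_system {κ : Type} [Fintype κ] (f : κ → ℚ⟦X⟧)
    (hf : ∀ t, constantCoeff (f t) = 0) {O : κ → Type} [∀ t, Fintype (O t)]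
    {I : ∀ t, O t → Type} [∀ t o, Fintype (I t o)] (col : ∀ t o, I t o → κ)
    (c : κ → ℚ⟦X⟧) (s : ∀ t, O t → ℚ⟦X⟧)
    (hc : ∀ t, IsAlgebraic (Polynomial ℚ) (c t))
    (hs : ∀ t o, IsAlgebraic (Polynomial ℚ) (s t o))
    (hdeg : ∀ t o, Fintype.card (I t o) ≠ 1 ∨ constantCoeff (s t o) = 0)
    (heq : ∀ t, f t = c t + ∑ o, s t o * ∏ i, f (col t o i)) (t : κ) :
    IsAlgebraic (Polynomial ℚ) (f t) := by
  classical
  have hinj : Function.Injective (algebraMap (Polynomial ℚ) (FractionRing ℚ⟦X⟧)) := by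
    rw [IsScalarTower.algebraMap_eq (Polynomial ℚ) ℚ⟦X⟧ (FractionRing ℚ⟦X⟧)]
    exact (IsFractionRing.injective ℚ⟦X⟧ (FractionRing ℚ⟦X⟧)).comp
      (g := algebraMap ℚ⟦X⟧ (FractionRing ℚ⟦X⟧)) (Polynomial.coe_injective ℚ)
  have : FaithfulSMul (Polynomial ℚ) (FractionRing ℚ⟦X⟧) :=
    (faithfulSMul_iff_algebraMap_injective _ _).2 hinj
  let _ : Algebra (FractionRing (Polynomial ℚ)) (FractionRing ℚ⟦X⟧) := FractionRing.liftAlgebra _ _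
  let K := algebraicClosure (FractionRing (Polynomial ℚ)) (FractionRing ℚ⟦X⟧)
  let e : ℚ⟦X⟧ →+* (FractionRing ℚ⟦X⟧) := algebraMap ℚ⟦X⟧ (FractionRing ℚ⟦X⟧)
  have he : Function.Injective e := FaithfulSMul.algebraMap_injective _ _
  have halg (u : ℚ⟦X⟧) :
      IsAlgebraic (Polynomial ℚ) u ↔ IsAlgebraic (FractionRing (Polynomial ℚ)) (e u) := by
    rw [← isAlgebraic_algebraMap_iff (R := Polynomial ℚ) (A := (FractionRing ℚ⟦X⟧)) he]
    exact (IsFractionRing.isAlgebraic_iff (Polynomial ℚ)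
      (FractionRing (Polynomial ℚ)) (FractionRing ℚ⟦X⟧))
  have hK (u : ℚ⟦X⟧) (hu : IsAlgebraic (Polynomial ℚ) u) : e u ∈ K :=
    mem_algebraicClosure_iff.2 ((halg u).1 hu)
  have key : IsAlgebraic K (e (f t)) := by
    refine IntermediateField.isAlgebraic_of_derivation_eq_zero (fun t ↦ e (f t)) ?_ t
    set L := IntermediateField.adjoin K (Set.range fun t ↦ e (f t)) with hL
    let F (t : κ) : L := ⟨e (f t), IntermediateField.subset_adjoin K _ ⟨t, rfl⟩⟩
    intro D
    have hF (t) : F t = algebraMap K L ⟨e (c t), hK _ (hc t)⟩ +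
        ∑ o, (⟨e (s t o), hK _ (hs t o)⟩ : K) • ∏ i, F (col t o i) := by
      apply Subtype.ext
      have := congrArg e (heq t)
      rw [map_add, map_sum] at this
      refine this.trans ?_
      simp only [map_mul, map_prod]
      push_cast
      rfl
    let M : Matrix κ κ ℚ⟦X⟧ := fun t j ↦
      ∑ o, s t o * ∑ i with col t o i = j, ∏ k ∈ Finset.univ.erase i, f (col t o k)
    have hM : M.map constantCoeff = 0 := by
      ext t j
      change constantCoeff (M t j) = 0
      simp only [M, map_sum, map_mul, map_prod, hf]
      refine Finset.sum_eq_zero fun o _ ↦ ?_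
      rcases hdeg t o with h | h
      · refine mul_eq_zero_of_right _ (Finset.sum_eq_zero fun i _ ↦ ?_)
        rw [Finset.prod_const, Finset.card_erase_of_mem (Finset.mem_univ i), Finset.card_univ]
        have : Nonempty (I t o) := ⟨i⟩
        have := Fintype.card_pos (α := I t o)
        exact zero_pow (by omega)
      · rw [h, zero_mul]
    have hDF (t) : D (F t) = ∑ j, e (M t j) * D (F j) := by
      conv_lhs => rw [hF t]
      rw [map_add, D.map_algebraMap, zero_add, map_sum]
      simp only [M, map_sum, Finset.sum_mul]
      rw [Finset.sum_comm]
      refine Finset.sum_congr rfl fun o _ ↦ ?_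
      rw [D.map_smul, D.leibniz_finsetProd]
      simp only [map_mul, map_sum, mul_assoc, Finset.sum_mul, ← Finset.mul_sum]
      refine congrArg (e (s t o) * ·) ?_
      simp only [Finset.sum_filter]
      rw [Finset.sum_comm]
      refine Finset.sum_congr rfl fun i _ ↦ ?_
      rw [Finset.sum_ite_eq, if_pos (Finset.mem_univ _), map_prod]
      change ((∏ j ∈ Finset.univ.erase i, F (col t o j) : L) : (FractionRing ℚ⟦X⟧)) * _ = _
      push_cast
      rfl
    have hdet : e (1 - M).det ≠ 0 := by
      rw [Ne, map_eq_zero_iff e he]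
      intro h0
      have := congrArg (constantCoeff (R := ℚ)) h0
      rw [RingHom.map_det, RingHom.mapMatrix_apply, Matrix.map_sub _ (map_sub _), hM] at this
      rw [Matrix.map_one _ (map_zero _) (map_one _), sub_zero, Matrix.det_one, map_zero] at this
      exact one_ne_zero this
    have hvec : ((1 - M).map e).mulVec (fun t ↦ D (F t)) = 0 := by
      ext t
      rw [Matrix.map_sub _ (map_sub _), Matrix.map_one _ (map_zero _) (map_one _),
        Matrix.sub_mulVec, Matrix.one_mulVec]
      simp only [Pi.sub_apply, Pi.zero_apply]
      rw [hDF t]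
      exact sub_self _
    have := Matrix.eq_zero_of_mulVec_eq_zero (by
      rwa [RingHom.map_det, RingHom.mapMatrix_apply] at hdet) hvec
    exact fun t ↦ congrFun this t
  rw [halg]
  have : Algebra.IsAlgebraic (FractionRing (Polynomial ℚ)) K :=
    algebraicClosure.isAlgebraic (FractionRing (Polynomial ℚ)) (FractionRing ℚ⟦X⟧)
  exact key.restrictScalars (FractionRing (Polynomial ℚ))

/-- A pair of strict total orders on the same set, indexed by `Bool`. -/
structure BiOrd (α : Type) where
  r : Bool → α → α → Prop
  irrefl : ∀ b x, ¬ r b x x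
  trans : ∀ b x y z, r b x y → r b y z → r b x z
  total : ∀ b x y, x ≠ y → r b x y ∨ r b y x

namespace BiOrd

variable {α β γ κ : Type}

theorem asymm (A : BiOrd α) {b : Bool} {x y : α} (h : A.r b x y) : ¬ A.r b y x :=
  fun h' ↦ A.irrefl b x (A.trans b x y x h h')

theorem ne_of_r (A : BiOrd α) {b : Bool} {x y : α} (h : A.r b x y) : x ≠ y := by
  rintro rfl; exact A.irrefl _ _ h

theorem r_of_not_r (A : BiOrd α) {b : Bool} {x y : α} (hne : x ≠ y) (h : ¬ A.r b y x) :
    A.r b x y := (A.total b x y hne).resolve_right h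

/-- Exchange the two orders. -/
def swap (A : BiOrd α) : BiOrd α where
  r b := A.r (!b)
  irrefl _ := A.irrefl _
  trans _ := A.trans _
  total _ := A.total _

/-- The pair of orders induced on a subset. -/
def restrict (A : BiOrd α) (s : Set α) : BiOrd s where
  r b x y := A.r b x y
  irrefl _ _ := A.irrefl _ _
  trans _ _ _ _ := A.trans _ _ _ _
  total _ _ _ h := A.total _ _ _ (fun h' ↦ h (Subtype.ext h'))

/-- `f` preserves both orders. -/
def IsEmb (A : BiOrd α) (B : BiOrd β) (f : α → β) : Prop :=
  ∀ b x y, A.r b x y → B.r b (f x) (f y)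

theorem IsEmb.injective {A : BiOrd α} {B : BiOrd β} {f : α → β} (h : A.IsEmb B f) :
    Function.Injective f := by
  intro x y hxy
  by_contra hne
  rcases A.total false x y hne with h' | h'
  · exact B.irrefl _ _ (hxy ▸ h _ _ _ h')
  · exact B.irrefl _ _ (hxy ▸ h _ _ _ h')

theorem IsEmb.r_iff {A : BiOrd α} {B : BiOrd β} {f : α → β} (h : A.IsEmb B f) (b : Bool) (x y : α) :
    B.r b (f x) (f y) ↔ A.r b x y := by
  refine ⟨fun h' ↦ ?_, h b x y⟩
  by_contra hn
  have hne : x ≠ y := by rintro rfl; exact B.irrefl _ _ h'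
  exact B.asymm h' (h _ _ _ ((A.total b x y hne).resolve_left hn))

theorem IsEmb.comp {A : BiOrd α} {B : BiOrd β} {C : BiOrd γ} {g : β → γ} {f : α → β}
    (hg : B.IsEmb C g) (hf : A.IsEmb B f) : A.IsEmb C (g ∘ f) :=
  fun b _ _ h ↦ hg b _ _ (hf b _ _ h)

theorem isEmb_val (A : BiOrd α) (s : Set α) : (A.restrict s).IsEmb A Subtype.val :=
  fun _ _ _ h ↦ h

theorem IsEmb.symm {A : BiOrd α} {B : BiOrd β} {e : α ≃ β} (h : A.IsEmb B e) :
    B.IsEmb A e.symm := by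
  intro b x y hxy
  rw [← h.r_iff]
  simpa using hxy

/-- Isomorphism of pairs of orders. -/
def Iso (A : BiOrd α) (B : BiOrd β) : Prop := ∃ e : α ≃ β, A.IsEmb B e

theorem Iso.refl (A : BiOrd α) : A.Iso A := ⟨Equiv.refl α, fun _ _ _ h ↦ h⟩

theorem Iso.symm {A : BiOrd α} {B : BiOrd β} : A.Iso B → B.Iso A :=
  fun ⟨e, h⟩ ↦ ⟨e.symm, h.symm⟩

theorem Iso.trans {A : BiOrd α} {B : BiOrd β} {C : BiOrd γ} : A.Iso B → B.Iso C → A.Iso C :=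
  fun ⟨e, h⟩ ⟨e', h'⟩ ↦ ⟨e.trans e', h'.comp h⟩

theorem Iso.swap {A : BiOrd α} {B : BiOrd β} : A.Iso B → A.swap.Iso B.swap :=
  fun ⟨e, h⟩ ↦ ⟨e, fun _ _ _ h' ↦ h _ _ _ h'⟩

theorem IsEmb.restrict_iso {A : BiOrd α} {B : BiOrd β} {f : α → β} (h : A.IsEmb B f) {s : Set β}
    (hs : Set.range f = s) : A.Iso (B.restrict s) := by
  subst hs
  exact ⟨Equiv.ofInjective f h.injective, fun b x y h' ↦ h b x y h'⟩

theorem restrict_iso_restrict {A : BiOrd α} {B : BiOrd β} {e : α ≃ β} (h : A.IsEmb B e)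
    {s : Set α} {t : Set β} (hst : ∀ x, x ∈ s ↔ e x ∈ t) : (A.restrict s).Iso (B.restrict t) :=
  ⟨e.subtypeEquiv hst, fun b x y h' ↦ h b x y h'⟩

/-- The lexicographic sum of the `B i` over `S`. -/
def lex {α : κ → Type} (S : BiOrd κ) (B : ∀ i, BiOrd (α i)) : BiOrd (Σ i, α i) where
  r b x y := Sigma.Lex (S.r b) (fun i ↦ (B i).r b) x y
  irrefl b x h := by
    rcases h with ⟨_, _, h⟩ | ⟨_, _, h⟩
    · exact S.irrefl _ _ h
    · exact (B _).irrefl _ _ h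
  trans b x y z hxy hyz := by
    rcases hxy with ⟨_, _, hxy⟩ | ⟨_, _, hxy⟩ <;> rcases hyz with ⟨_, _, hyz⟩ | ⟨_, _, hyz⟩
    · exact .left _ _ (S.trans _ _ _ _ hxy hyz)
    · exact .left _ _ hxy
    · exact .left _ _ hyz
    · exact .right _ _ ((B _).trans _ _ _ _ hxy hyz)
  total b x y hne := by
    obtain ⟨i, x⟩ := x
    obtain ⟨j, y⟩ := y
    by_cases hij : i = j
    · subst hij
      have : x ≠ y := by rintro rfl; exact hne rfl
      exact ((B i).total b x y this).imp (.right _ _) (.right _ _)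
    · exact (S.total b i j hij).imp (.left _ _) (.left _ _)

/-- `q` presents `A` as an inflation of (the image of `q` in) `S`: every fibre of `q` is an
interval, and elements in different fibres are compared through `S`. -/
def IsProj (A : BiOrd α) (S : BiOrd κ) (q : α → κ) : Prop :=
  ∀ b x y, A.r b x y → q x ≠ q y → S.r b (q x) (q y)

theorem IsProj.r_iff {A : BiOrd α} {S : BiOrd κ} {q : α → κ} (h : A.IsProj S q) {b : Bool} {x y : α}
    (hne : q x ≠ q y) : A.r b x y ↔ S.r b (q x) (q y) := by
  refine ⟨fun h' ↦ h b x y h' hne, fun h' ↦ ?_⟩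
  refine A.r_of_not_r (fun h ↦ hne (congrArg q h)) fun hyx ↦ S.asymm h' (h b y x hyx hne.symm)

theorem isProj_fst {α : κ → Type} (S : BiOrd κ) (B : ∀ i, BiOrd (α i)) :
    (S.lex B).IsProj S Sigma.fst := by
  intro b x y h hne
  cases h with
  | left _ _ h => exact h
  | right => exact absurd rfl hne

theorem IsProj.comp_emb {A : BiOrd α} {B : BiOrd β} {S : BiOrd κ} {q : β → κ} (h : B.IsProj S q)
    {f : α → β} (hf : A.IsEmb B f) : A.IsProj S (q ∘ f) :=
  fun b _ _ hxy hne ↦ h b _ _ (hf b _ _ hxy) hne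

theorem IsEmb.comp_proj {A : BiOrd α} {S : BiOrd β} {T : BiOrd κ} {f : β → κ} (hf : S.IsEmb T f)
    {q : α → β} (h : A.IsProj S q) : A.IsProj T (f ∘ q) :=
  fun b x y hxy hne ↦ hf b _ _ (h b x y hxy fun h' ↦ hne (congrArg f h'))

theorem IsProj.swap {A : BiOrd α} {S : BiOrd κ} {q : α → κ} (h : A.IsProj S q) :
    A.swap.IsProj S.swap q :=
  fun b x y hxy hne ↦ h (!b) x y hxy hne

/-- A map from an inflation to a lexicographic sum, assembled from maps on the fibres. -/
theorem IsProj.isEmb_lex {α' : κ → Type} {A : BiOrd α} {S : BiOrd κ} {q : α → κ}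
    (h : A.IsProj S q) (B : ∀ i, BiOrd (α' i)) (f : ∀ i, {x | q x = i} → α' i)
    (hf : ∀ i, (A.restrict {x | q x = i}).IsEmb (B i) (f i)) :
    A.IsEmb (S.lex B) (fun x ↦ ⟨q x, f (q x) ⟨x, rfl⟩⟩) := by
  intro b x y hxy
  by_cases hne : q x = q y
  · have key : ∀ i (hx : q x = i) (hy : q y = i), (S.lex B).r b
        ⟨i, f i ⟨x, hx⟩⟩ ⟨i, f i ⟨y, hy⟩⟩ := fun i hx hy ↦ .right _ _ (hf i b _ _ hxy)
    have h1 : (⟨q x, f (q x) ⟨x, rfl⟩⟩ : Σ i, α' i) = ⟨q y, f (q y) ⟨x, hne⟩⟩ := by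
      have : ∀ i (hx : q x = i), (⟨q x, f (q x) ⟨x, rfl⟩⟩ : Σ i, α' i) = ⟨i, f i ⟨x, hx⟩⟩ := by
        rintro _ rfl; rfl
      exact this _ hne
    have := key (q y) hne rfl
    rw [← h1] at this
    exact this
  · exact .left _ _ (h b x y hxy hne)

theorem IsProj.iso_lex {α' : κ → Type} {A : BiOrd α} {S : BiOrd κ} {q : α → κ}
    (h : A.IsProj S q) (B : ∀ i, BiOrd (α' i)) (hf : ∀ i, (A.restrict {x | q x = i}).Iso (B i)) :
    A.Iso (S.lex B) := by
  choose e he using hf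
  have hemb := h.isEmb_lex B (fun i ↦ e i) he
  refine ⟨Equiv.ofBijective _ ⟨hemb.injective, ?_⟩, hemb⟩
  rintro ⟨i, y⟩
  obtain ⟨⟨x, hx⟩, rfl⟩ := (e i).surjective y
  refine ⟨x, ?_⟩
  have hx' : q x = i := hx
  subst hx'
  rfl

theorem restrict_lex_iso {α : κ → Type} (S : BiOrd κ) (B : ∀ i, BiOrd (α i)) (i : κ) :
    (B i).Iso ((S.lex B).restrict {x | x.1 = i}) := by
  refine IsEmb.restrict_iso (f := fun x ↦ ⟨i, x⟩) (fun b x y h ↦ Sigma.Lex.right _ _ h) ?_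
  ext ⟨j, y⟩
  constructor
  · rintro ⟨x, hx⟩
    exact (congrArg Sigma.fst hx).symm
  · intro h
    have h' : j = i := h
    subst h'
    exact ⟨y, rfl⟩

end BiOrd

/-- A permutation of unspecified length. -/
abbrev SPerm := Σ n, Perm n

namespace SPerm

/-- The index order and the value order of a permutation. -/
def biOrd (p : SPerm) : BiOrd (Fin p.1) where
  r b x y := cond b (p.2 x < p.2 y) (x < y)
  irrefl b x := by cases b <;> simp
  trans b x y z := by cases b <;> exact lt_trans
  total b x y h := by
    cases b
    · exact lt_or_gt_of_ne h
    · exact lt_or_gt_of_ne (p.2.injective.ne h)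

theorem emb_self_eq_id {p : SPerm} {e : Fin p.1 → Fin p.1} (h : p.biOrd.IsEmb p.biOrd e)
    (he : e.Surjective) : e = id := by
  have h1 : StrictMono e := fun x y hxy ↦ h false x y hxy
  have := Subsingleton.elim (h1.orderIsoOfSurjective _ he) (OrderIso.refl _)
  funext x
  exact congrArg (fun f : Fin p.1 ≃o Fin p.1 ↦ f x) this

theorem eq_of_iso {p q : SPerm} (h : p.biOrd.Iso q.biOrd) : p = q := by
  obtain ⟨m, σ⟩ := p
  obtain ⟨n, τ⟩ := q
  obtain ⟨e, he⟩ := h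
  obtain rfl : m = n := by simpa using Fintype.card_congr e
  have h1 : StrictMono e := fun x y hxy ↦ he false x y hxy
  have h2 : StrictMono (τ ∘ e ∘ σ.symm) := fun x y hxy ↦ he true (σ.symm x) (σ.symm y)
    (show σ (σ.symm x) < σ (σ.symm y) by simpa using hxy)
  have h1' : (e : Fin m → Fin m) = id := by
    have := Subsingleton.elim (h1.orderIsoOfSurjective _ e.surjective) (OrderIso.refl _)
    funext x
    exact congrArg (fun f : Fin m ≃o Fin m ↦ f x) this
  have h2' : (τ ∘ e ∘ σ.symm : Fin m → Fin m) = id := by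
    have := Subsingleton.elim (h2.orderIsoOfSurjective _
      (τ.surjective.comp (e.surjective.comp σ.symm.surjective))) (OrderIso.refl _)
    funext x
    exact congrArg (fun f : Fin m ≃o Fin m ↦ f x) this
  have : σ = τ := by
    ext x
    have := congrFun h2' (σ x)
    simp only [Function.comp_apply, Equiv.symm_apply_apply, h1', id] at this
    rw [this]
  rw [this]

theorem exists_iso {α : Type} [Finite α] (A : BiOrd α) : ∃ p : SPerm, p.biOrd.Iso A := by
  have key (b : Bool) : ∃ e : Fin (Nat.card α) ≃ α, ∀ x y, x < y → A.r b (e x) (e y) := by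
    classical
    have := Fintype.ofFinite α
    let _ : LinearOrder α :=
      { le := fun x y ↦ x = y ∨ A.r b x y
        lt := A.r b
        le_refl := fun x ↦ .inl rfl
        le_trans := by
          rintro x y z (rfl | h) (rfl | h')
          exacts [.inl rfl, .inr h', .inr h, .inr (A.trans _ _ _ _ h h')]
        le_antisymm := by
          rintro x y (rfl | h) (h' | h')
          exacts [rfl, rfl, h'.symm, absurd h' (A.asymm h)]
        le_total := fun x y ↦ by
          by_cases h : x = y
          · exact .inl (.inl h)
          · exact (A.total b x y h).imp .inr .inr
        lt_iff_le_not_ge := fun x y ↦ by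
          refine ⟨fun h ↦ ⟨.inr h, ?_⟩, ?_⟩
          · rintro (rfl | h')
            exacts [A.irrefl _ _ h, A.asymm h h']
          · rintro ⟨rfl | h, h'⟩
            exacts [absurd (.inl rfl) h', h]
        toDecidableLE := Classical.decRel _ }
    let e := Fintype.orderIsoFinOfCardEq α (Nat.card_eq_fintype_card).symm
    exact ⟨e.toEquiv, fun x y h ↦ e.strictMono h⟩
  obtain ⟨e, he⟩ := key false
  obtain ⟨f, hf⟩ := key true
  have hf' (x y) (h : A.r true (f x) (f y)) : x < y := by
    by_contra hn
    rcases eq_or_lt_of_le (not_lt.1 hn) with rfl | h'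
    · exact A.irrefl _ _ h
    · exact A.asymm h (hf _ _ h')
  refine ⟨⟨Nat.card α, e.trans f.symm⟩, e, ?_⟩
  rintro (_ | _) x y hxy
  · exact he _ _ hxy
  · have := hf _ _ (show f.symm (e x) < f.symm (e y) from hxy)
    simpa using this

end SPerm

namespace BiOrd

/-- The permutation isomorphic to a finite set with two orders. -/
noncomputable def std {α : Type} [Finite α] (A : BiOrd α) : SPerm := (SPerm.exists_iso A).choose

theorem std_iso {α : Type} [Finite α] (A : BiOrd α) : A.std.biOrd.Iso A :=
  (SPerm.exists_iso A).choose_spec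

theorem Iso.std_eq {α : Type} [Finite α] {A : BiOrd α} {p : SPerm} (h : A.Iso p.biOrd) :
    A.std = p :=
  SPerm.eq_of_iso (A.std_iso.trans h)

theorem Iso.std_eq_std {α β : Type} [Finite α] [Finite β] {A : BiOrd α} {B : BiOrd β}
    (h : A.Iso B) : A.std = B.std :=
  SPerm.eq_of_iso ((A.std_iso.trans h).trans B.std_iso.symm)

theorem std_fst {α : Type} [Finite α] (A : BiOrd α) : A.std.1 = Nat.card α := by
  obtain ⟨e, -⟩ := A.std_iso
  simpa using Nat.card_congr e

end BiOrd

namespace SPerm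

/-- Containment of permutations. -/
def Sub (p q : SPerm) : Prop := ∃ f, p.biOrd.IsEmb q.biOrd f

theorem Sub.refl (p : SPerm) : p.Sub p := ⟨id, fun _ _ _ h ↦ h⟩

theorem Sub.trans {p q r : SPerm} : p.Sub q → q.Sub r → p.Sub r :=
  fun ⟨f, hf⟩ ⟨g, hg⟩ ↦ ⟨g ∘ f, hg.comp hf⟩

theorem Sub.contains {p q : SPerm} : p.Sub q → Contains p.2 q.2 :=
  fun ⟨f, hf⟩ ↦ ⟨f, fun x y h ↦ hf false x y h, fun x y ↦ hf.r_iff true x y⟩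

theorem _root_.BiOrd.IsEmb.std_sub {α : Type} [Finite α] {A : BiOrd α} {q : SPerm} {f : α → Fin q.1}
    (h : A.IsEmb q.biOrd f) : A.std.Sub q := by
  obtain ⟨e, he⟩ := A.std_iso
  exact ⟨f ∘ e, h.comp he⟩

/-- The inverse permutation. -/
def inv (p : SPerm) : SPerm := ⟨p.1, p.2⁻¹⟩

theorem inv_inv (p : SPerm) : p.inv.inv = p :=
  Sigma.ext rfl (heq_of_eq (_root_.inv_inv p.2))

theorem inv_iso (p : SPerm) : p.inv.biOrd.Iso p.biOrd.swap := by
  refine ⟨(p.2⁻¹ : Perm p.1), ?_⟩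
  rintro (_ | _) (x : Fin p.1) (y : Fin p.1) h
  · change p.2 (p.2.symm x) < p.2 (p.2.symm y)
    rw [Equiv.apply_symm_apply, Equiv.apply_symm_apply]
    exact h
  · exact h

theorem inv_eq_std (p : SPerm) : p.inv = p.biOrd.swap.std := (p.inv_iso.symm.std_eq).symm

theorem Sub.inv {p q : SPerm} (h : p.Sub q) : p.inv.Sub q.inv := by
  obtain ⟨f, hf⟩ := h
  obtain ⟨e, he⟩ := p.inv_iso
  obtain ⟨e', he'⟩ := q.inv_iso
  have hf' : p.biOrd.swap.IsEmb q.biOrd.swap f := fun b ↦ hf (!b)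
  exact ⟨_, he'.symm.comp (hf'.comp he)⟩

theorem sub_inv_iff {p q : SPerm} : p.Sub q.inv ↔ p.inv.Sub q :=
  ⟨fun h ↦ q.inv_inv ▸ h.inv, fun h ↦ p.inv_inv ▸ h.inv⟩

/-- The inflation of `s` by the permutations `a i`. -/
noncomputable def inflate {k : ℕ} (s : Perm k) (a : Fin k → SPerm) : SPerm :=
  ((biOrd ⟨k, s⟩).lex fun i ↦ (a i).biOrd).std

theorem inflate_fst {k : ℕ} (s : Perm k) (a : Fin k → SPerm) : (inflate s a).1 = ∑ i, (a i).1 := by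
  rw [inflate, BiOrd.std_fst]
  simp

theorem std_eq_inflate {α κ : Type} [Finite α] {A : BiOrd α} {S : BiOrd κ} {q : α → κ}
    (h : A.IsProj S q) {k : ℕ} {s : Perm k} {a : Fin k → SPerm} {e : κ ≃ Fin k}
    (he : S.IsEmb (biOrd ⟨k, s⟩) e) (ha : ∀ c, (A.restrict {x | q x = c}).Iso (a (e c)).biOrd) :
    A.std = inflate s a := by
  have h' : A.IsProj (biOrd ⟨k, s⟩) (e ∘ q) := he.comp_proj h
  refine (h'.iso_lex (fun i ↦ (a i).biOrd) fun i ↦ ?_).std_eq_std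
  obtain ⟨c, rfl⟩ := e.surjective i
  convert ha c using 3 <;> simp

theorem eq_inflate {p : SPerm} {k : ℕ} {s : Perm k} {q : Fin p.1 → Fin k} {a : Fin k → SPerm}
    (h : p.biOrd.IsProj (biOrd ⟨k, s⟩) q)
    (ha : ∀ i, (p.biOrd.restrict {x | q x = i}).Iso (a i).biOrd) : p = inflate s a := by
  have := std_eq_inflate h (e := Equiv.refl _) (fun _ _ _ h ↦ h) ha
  rwa [(BiOrd.Iso.refl _).std_eq] at this

theorem exists_isProj_inflate {k : ℕ} (s : Perm k) (a : Fin k → SPerm) :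
    ∃ q : Fin (inflate s a).1 → Fin k, (inflate s a).biOrd.IsProj (biOrd ⟨k, s⟩) q ∧
      ∀ i, ((inflate s a).biOrd.restrict {x | q x = i}).Iso (a i).biOrd := by
  obtain ⟨e, he⟩ := ((biOrd ⟨k, s⟩).lex fun i ↦ (a i).biOrd).std_iso
  refine ⟨Sigma.fst ∘ e, (BiOrd.isProj_fst _ _).comp_emb he, fun i ↦ ?_⟩
  refine .trans ?_ (BiOrd.restrict_lex_iso (biOrd ⟨k, s⟩) (fun i ↦ (a i).biOrd) i).symm
  exact BiOrd.restrict_iso_restrict he fun x ↦ Iff.rfl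

theorem component_sub_inflate {k : ℕ} (s : Perm k) (a : Fin k → SPerm) (i : Fin k) :
    (a i).Sub (inflate s a) := by
  obtain ⟨e, he⟩ := ((biOrd ⟨k, s⟩).lex fun i ↦ (a i).biOrd).std_iso
  exact ⟨e.symm ∘ fun x ↦ ⟨i, x⟩, he.symm.comp fun b x y h ↦ Sigma.Lex.right _ _ h⟩

theorem sub_inflate {k : ℕ} (s : Perm k) (a : Fin k → SPerm) (ha : ∀ i, 0 < (a i).1) :
    Sub ⟨k, s⟩ (inflate s a) := by
  obtain ⟨e, he⟩ := ((biOrd ⟨k, s⟩).lex fun i ↦ (a i).biOrd).std_iso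
  exact ⟨e.symm ∘ fun i ↦ ⟨i, ⟨0, ha i⟩⟩, he.symm.comp fun b x y h ↦ Sigma.Lex.left _ _ h⟩

theorem inflate_sub_inflate {k : ℕ} (s : Perm k) {a a' : Fin k → SPerm}
    (h : ∀ i, (a i).Sub (a' i)) : (inflate s a).Sub (inflate s a') := by
  choose f hf using h
  obtain ⟨e, he⟩ := ((biOrd ⟨k, s⟩).lex fun i ↦ (a i).biOrd).std_iso
  obtain ⟨e', he'⟩ := ((biOrd ⟨k, s⟩).lex fun i ↦ (a' i).biOrd).std_iso
  refine ⟨e'.symm ∘ (fun x ↦ ⟨x.1, f x.1 x.2⟩) ∘ e, he'.symm.comp (BiOrd.IsEmb.comp ?_ he)⟩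
  intro b x y hxy
  rcases hxy with ⟨_, _, h⟩ | ⟨_, _, h⟩
  · exact Sigma.Lex.left _ _ h
  · exact Sigma.Lex.right _ _ (hf _ _ _ _ h)

theorem inv_inflate {k : ℕ} (s : Perm k) (a : Fin k → SPerm) :
    (inflate s a).inv = inflate s⁻¹ fun i ↦ (a (s⁻¹ i)).inv := by
  obtain ⟨q, hq, hqa⟩ := exists_isProj_inflate s a
  rw [inv_eq_std]
  obtain ⟨e, he⟩ : ∃ e : Fin k ≃ Fin k, (∀ i, s⁻¹ (e i) = i) ∧
      (biOrd ⟨k, s⟩).swap.IsEmb (biOrd ⟨k, s⁻¹⟩) e := by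
    refine ⟨s, fun i ↦ by simp, ?_⟩
    rintro (_ | _) x y h
    · exact h
    · change s.symm (s x) < s.symm (s y)
      rw [Equiv.symm_apply_apply, Equiv.symm_apply_apply]
      exact h
  refine std_eq_inflate hq.swap he.2 fun c ↦ ?_
  rw [he.1]
  exact (hqa c).swap.trans (a c).inv_iso.symm

end SPerm

namespace BiOrd

variable {α β κ κ' : Type}

/-- `I` is an interval (module): no element outside `I` separates two elements of `I`. -/
def IsMod (A : BiOrd α) (I : Set α) : Prop :=
  ∀ b, ∀ x ∉ I, ∀ y ∈ I, ∀ z ∈ I, A.r b x y → A.r b x z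

theorem IsMod.dual {A : BiOrd α} {I : Set α} (h : A.IsMod I) {b : Bool} {x y z : α} (hx : x ∉ I)
    (hy : y ∈ I) (hz : z ∈ I) (hyx : A.r b y x) : A.r b z x :=
  A.r_of_not_r (fun h' ↦ hx (h' ▸ hz)) fun hxz ↦ A.asymm hyx (h b x hx z hz y hy hxz)

theorem IsMod.union {A : BiOrd α} {I J : Set α} (hI : A.IsMod I) (hJ : A.IsMod J)
    (h : (I ∩ J).Nonempty) : A.IsMod (I ∪ J) := by
  obtain ⟨w, hwI, hwJ⟩ := h
  intro b x hx y hy z hz hxy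
  rw [Set.mem_union, not_or] at hx
  have hxw : A.r b x w := hy.elim (fun hy ↦ hI b x hx.1 y hy w hwI hxy)
    fun hy ↦ hJ b x hx.2 y hy w hwJ hxy
  exact hz.elim (fun hz ↦ hI b x hx.1 w hwI z hz hxw) fun hz ↦ hJ b x hx.2 w hwJ z hz hxw

theorem IsMod.diff {A : BiOrd α} {I J : Set α} (hI : A.IsMod I) (hJ : A.IsMod J)
    (h : (J \ I).Nonempty) : A.IsMod (I \ J) := by
  obtain ⟨w, hwJ, hwI⟩ := h
  intro b x hx y hy z hz hxy
  by_cases hxI : x ∈ I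
  · have hxJ : x ∈ J := by by_contra hn; exact hx ⟨hxI, hn⟩
    exact hJ.dual hz.2 hwJ hxJ (hI b w hwI y hy.1 z hz.1 (hJ.dual hy.2 hxJ hwJ hxy))
  · exact hI b x hxI y hy.1 z hz.1 hxy

theorem isMod_singleton (A : BiOrd α) (x : α) : A.IsMod {x} := by
  rintro b z - y rfl y' rfl h
  exact h

/-- Only trivial intervals. -/
def Simple (A : BiOrd α) : Prop := ∀ I, A.IsMod I → I.Subsingleton ∨ I = Set.univ

theorem IsProj.isMod_preimage {A : BiOrd α} {S : BiOrd κ} {q : α → κ} (h : A.IsProj S q)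
    {I : Set κ} (hI : S.IsMod I) : A.IsMod (q ⁻¹' I) := by
  intro b x hx y hy z hz hxy
  have hne (w) (hw : w ∈ q ⁻¹' I) : q x ≠ q w := fun h' ↦ hx (show q x ∈ I from h' ▸ hw)
  exact (h.r_iff (hne z hz)).2 (hI b _ hx _ hy _ hz ((h.r_iff (hne y hy)).1 hxy))

theorem IsProj.isMod_image {A : BiOrd α} {S : BiOrd κ} {q : α → κ} (h : A.IsProj S q)
    (hq : q.Surjective) {I : Set α} (hI : A.IsMod I) : S.IsMod (q '' I) := by
  rintro b c hc _ ⟨y, hy, rfl⟩ _ ⟨z, hz, rfl⟩ hxy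
  obtain ⟨x, rfl⟩ := hq c
  have hne (w) (hw : w ∈ I) : q x ≠ q w := fun h' ↦ hc ⟨w, hw, h'.symm⟩
  refine (h.r_iff (hne z hz)).1 (hI b _ (fun hx ↦ hc ⟨x, hx, rfl⟩) _ hy _ hz
    ((h.r_iff (hne y hy)).2 hxy))

theorem IsEmb.isProj {A : BiOrd α} {B : BiOrd β} {f : α → β} (h : A.IsEmb B f) : A.IsProj B f :=
  fun b x y hxy _ ↦ h b x y hxy

theorem Simple.of_iso {A : BiOrd α} {B : BiOrd β} (hA : A.Simple) (h : A.Iso B) : B.Simple := by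
  obtain ⟨e, he⟩ := h
  intro I hI
  rcases hA _ (he.isProj.isMod_preimage hI) with h' | h'
  · left
    intro x hx y hy
    simpa using @h' (e.symm x) (by simpa using hx) (e.symm y) (by simpa using hy)
  · right
    rwa [Set.preimage_eq_univ_iff, e.range_eq_univ, Set.univ_subset_iff] at h'

/-- A proper interval of an inflation of a simple permutation of length at least three is contained
in a block. -/
theorem IsProj.subset_fiber {A : BiOrd α} {S : BiOrd κ} {q : α → κ} (h : A.IsProj S q)
    (hq : q.Surjective) (hS : S.Simple) (hκ : 3 ≤ Nat.card κ) {I : Set α} (hI : A.IsMod I)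
    (hne : I ≠ Set.univ) : (q '' I).Subsingleton := by
  refine (hS _ (h.isMod_image hq hI)).resolve_right fun huniv ↦ ?_
  obtain ⟨x, hx⟩ := (Set.ne_univ_iff_exists_notMem I).1 hne
  have hmem (c) : ∃ y ∈ I, q y = c := (huniv.symm ▸ Set.mem_univ c : c ∈ q '' I)
  have hmod : S.IsMod {q x}ᶜ := by
    intro b c hc y hy z hz hcy
    obtain rfl : c = q x := by simpa using hc
    obtain ⟨y, hyI, rfl⟩ := hmem y
    obtain ⟨z, hzI, rfl⟩ := hmem z
    exact (h.r_iff (Ne.symm hz)).1 (hI b x hx y hyI z hzI ((h.r_iff (Ne.symm hy)).2 hcy))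
  rcases hS _ hmod with h' | h'
  · have hfin : Finite κ := Nat.finite_of_card_ne_zero (by omega)
    have h1 := Set.ncard_add_ncard_compl {q x}
    have h2 := Set.ncard_le_one_iff_subsingleton.2 h'
    rw [Set.ncard_singleton] at h1
    omega
  · have : q x ∈ ({q x}ᶜ : Set κ) := h' ▸ Set.mem_univ _
    simp at this

theorem exists_isProj_of_setoid (A : BiOrd α) (s : Setoid α) (h : ∀ x, A.IsMod {y | s x y}) :
    ∃ S : BiOrd (Quotient s), A.IsProj S (Quotient.mk s) := by
  refine ⟨⟨fun b c d ↦ A.r b c.out d.out, fun _ _ ↦ A.irrefl _ _, fun _ _ _ _ ↦ A.trans _ _ _ _,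
    fun b x y hne ↦ A.total b _ _ fun h' ↦ hne (Quotient.out_injective h')⟩, ?_⟩
  intro b x y hxy hne
  have hxy' : ¬ s x y := fun h' ↦ hne (Quotient.sound h')
  have hx : s x (Quotient.mk s x).out := s.symm (Quotient.mk_out x)
  have hy : s y (Quotient.mk s y).out := s.symm (Quotient.mk_out y)
  have h1 : A.r b (Quotient.mk s x).out y := (h x).dual hxy' (s.refl x) hx hxy
  exact h y b _ (fun h' ↦ hxy' (s.trans hx (s.symm h'))) _ (s.refl y) _ hy h1

/-- `A` is an inflation of `S` by nonempty blocks. -/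
def Dec (S : BiOrd κ) (A : BiOrd α) : Prop := ∃ q : α → κ, q.Surjective ∧ A.IsProj S q

theorem Dec.congr {S : BiOrd κ} {A : BiOrd α} {B : BiOrd β} (h : S.Dec A) (e : A.Iso B) :
    S.Dec B := by
  obtain ⟨q, hq, hp⟩ := h
  obtain ⟨e, he⟩ := e
  exact ⟨q ∘ e.symm, hq.comp e.symm.surjective, hp.comp_emb he.symm⟩

theorem Dec.congr_left {S : BiOrd κ} {T : BiOrd κ'} {A : BiOrd α} (h : S.Dec A) (e : S.Iso T) :
    T.Dec A := by
  obtain ⟨q, hq, hp⟩ := h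
  obtain ⟨e, he⟩ := e
  exact ⟨e ∘ q, e.surjective.comp hq, he.comp_proj hp⟩

/-- The canonical presentation of `A` as the inflation of a simple permutation: if the latter has
length two then the first block is not itself an inflation of it. -/
structure IsCanon {k : ℕ} (s : Perm k) (A : BiOrd α) (q : α → Fin k) : Prop where
  two_le : 2 ≤ k
  simple : (SPerm.biOrd ⟨k, s⟩).Simple
  surj : q.Surjective
  proj : A.IsProj (SPerm.biOrd ⟨k, s⟩) q
  indec : ∀ i : Fin k, k = 2 → i.val = 0 → ¬ (SPerm.biOrd ⟨k, s⟩).Dec (A.restrict {x | q x = i})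

theorem dec_of_compl {A : BiOrd α} {I : Set α} (hI : A.IsMod I) (hI' : A.IsMod Iᶜ)
    (hne : I.Nonempty) (hne' : I ≠ Set.univ) : ∃ τ : Perm 2, (SPerm.biOrd ⟨2, τ⟩).Dec A := by
  obtain ⟨x, hx⟩ := hne
  obtain ⟨y, hy⟩ := (Set.ne_univ_iff_exists_notMem I).1 hne'
  obtain ⟨S, hS⟩ := A.exists_isProj_of_setoid (Setoid.ker (· ∈ I)) fun z ↦ by
    by_cases hz : z ∈ I
    · convert hI using 1
      ext w
      simp [Setoid.ker_def, hz]
    · convert hI' using 1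
      ext w
      simp [Setoid.ker_def, hz]
  have hcard : Nat.card (Quotient (Setoid.ker (· ∈ I))) = 2 := by
    rw [Nat.card_eq_two_iff]
    refine ⟨Quotient.mk _ x, Quotient.mk _ y, fun h ↦ ?_, ?_⟩
    · have := Quotient.exact h
      rw [← Quotient.eq_iff_equiv, Quotient.eq] at this
      simp [Setoid.ker_def, hx, hy] at this
    · ext c
      obtain ⟨z, rfl⟩ := Quotient.exists_rep c
      simp only [Set.mem_insert_iff, Set.mem_singleton_iff, Quotient.eq, Setoid.ker_def]
      by_cases hz : z ∈ I <;> simp [hx, hy, hz]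
  have : Finite (Quotient (Setoid.ker (· ∈ I))) := Nat.finite_of_card_ne_zero (by omega)
  obtain ⟨⟨k, τ⟩, e, he⟩ := SPerm.exists_iso S
  obtain rfl : k = 2 := by
    have := Nat.card_congr e
    rw [hcard] at this
    simpa using this
  exact ⟨τ, Dec.congr_left ⟨Quotient.mk _, Quotient.mk_surjective, hS⟩ (.symm ⟨e, he⟩)⟩

theorem simple_of_card_two {S : BiOrd κ} (h : Nat.card κ = 2) : S.Simple := by
  intro I _
  have : Finite κ := Nat.finite_of_card_ne_zero (by omega)
  rcases le_or_gt I.ncard 1 with h' | h'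
  · exact .inl (Set.ncard_le_one_iff_subsingleton.1 h')
  · right
    refine Set.eq_of_subset_of_ncard_le (Set.subset_univ _) ?_
    rw [Set.ncard_univ]
    omega

theorem exists_isCanon_of_dec [Finite α] {A : BiOrd α} {τ : Perm 2}
    (h : (SPerm.biOrd ⟨2, τ⟩).Dec A) : ∃ q, IsCanon τ A q := by
  obtain ⟨q, ⟨hq, hp⟩, hmin⟩ := exists_minimalFor_of_wellFoundedLT
    (fun q : α → Fin 2 ↦ q.Surjective ∧ A.IsProj (SPerm.biOrd ⟨2, τ⟩) q)
    (fun q ↦ {x | q x = 0}.ncard) h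
  refine ⟨q, le_rfl, simple_of_card_two (by simp), hq, hp, ?_⟩
  rintro i - hi ⟨q', hq', hp'⟩
  obtain rfl : i = 0 := Fin.ext hi
  let r (x : α) : Fin 2 := if h : q x = 0 then q' ⟨x, h⟩ else 1
  have hr0 {x} (h : q x = 0) : r x = q' ⟨x, h⟩ := dif_pos h
  have hr1 {x} (h : q x ≠ 0) : r x = 1 := dif_neg h
  have h1 {u : Fin 2} (h : u ≠ 0) : u = 1 := by revert u; decide
  have h0 {u : Fin 2} (h : u ≠ 1) : u = 0 := by revert u; decide
  have hlt : {x | r x = 0} ⊂ {x | q x = 0} := by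
    refine ⟨fun x hx ↦ ?_, fun h ↦ ?_⟩
    · by_contra hn
      exact absurd ((hr1 hn).symm.trans hx) (by decide)
    · obtain ⟨⟨x, hx⟩, hx'⟩ := hq' 1
      exact absurd ((h hx).symm.trans ((hr0 hx).trans hx')) (by decide : (0 : Fin 2) ≠ 1)
  refine (Set.ncard_lt_ncard hlt (Set.toFinite _)).not_ge (hmin (j := r) ⟨?_, ?_⟩
    (Set.ncard_le_ncard hlt.1 (Set.toFinite _)))
  · intro u
    by_cases hu : u = 0
    · obtain ⟨⟨x, hx⟩, hx'⟩ := hq' 0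
      exact ⟨x, hu ▸ (hr0 hx).trans hx'⟩
    · obtain ⟨x, hx⟩ := hq 1
      exact ⟨x, (h1 hu).symm ▸ hr1 fun h ↦ absurd (hx.symm.trans h) (by decide : (1 : Fin 2) ≠ 0)⟩
  · intro b x y hxy hne
    by_cases hx : q x = 0 <;> by_cases hy : q y = 0
    · rw [hr0 hx, hr0 hy] at hne ⊢
      exact hp' b _ _ hxy hne
    · have := hp b x y hxy fun h ↦ hy (h ▸ hx)
      rw [hr1 hy] at hne ⊢
      rwa [h0 hne, ← hx, ← h1 hy]
    · have := hp b x y hxy (hy ▸ hx)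
      rw [hr1 hx] at hne ⊢
      rwa [h0 hne.symm, ← hy, ← h1 hx]
    · exact absurd ((hr1 hx).trans (hr1 hy).symm) hne

theorem exists_isCanon [Finite α] (A : BiOrd α) (hα : 2 ≤ Nat.card α) :
    ∃ (k : ℕ) (s : Perm k) (q : α → Fin k), IsCanon s A q := by
  by_cases hdec : ∃ τ : Perm 2, (SPerm.biOrd ⟨2, τ⟩).Dec A
  · obtain ⟨τ, h⟩ := hdec
    exact ⟨2, τ, exists_isCanon_of_dec h⟩
  have hnot {I : Set α} (hI : A.IsMod I) (hne : I.Nonempty) (hne' : I ≠ Set.univ) :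
      ¬ A.IsMod Iᶜ := fun h ↦ hdec (dec_of_compl hI h hne hne')
  have hunion {I J : Set α} (hI : A.IsMod I) (hJ : A.IsMod J) (hI' : I ≠ Set.univ)
      (hJ' : J ≠ Set.univ) (hIJ : (I ∩ J).Nonempty) : I ∪ J ≠ Set.univ := by
    intro h
    have hJI : Jᶜ = I \ J := by
      ext x
      have := h.symm ▸ Set.mem_univ x
      simp only [Set.mem_union, Set.mem_compl_iff, Set.mem_sdiff] at this ⊢
      tauto
    refine hnot hJ (hIJ.mono Set.inter_subset_right) hJ' (hJI ▸ hI.diff hJ ?_)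
    obtain ⟨x, hx⟩ := (Set.ne_univ_iff_exists_notMem I).1 hI'
    have := h.symm ▸ Set.mem_univ x
    exact ⟨x, this.resolve_left hx, hx⟩
  let st : Setoid α :=
    { r := fun x y ↦ ∃ I, A.IsMod I ∧ I ≠ Set.univ ∧ x ∈ I ∧ y ∈ I
      iseqv := by
        refine ⟨fun x ↦ ⟨{x}, A.isMod_singleton x, fun h ↦ ?_, rfl, rfl⟩, ?_, ?_⟩
        · have := congrArg Set.ncard h
          rw [Set.ncard_singleton, Set.ncard_univ] at this
          omega
        · rintro x y ⟨I, h1, h2, h3, h4⟩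
          exact ⟨I, h1, h2, h4, h3⟩
        · rintro x y z ⟨I, h1, h2, h3, h4⟩ ⟨J, g1, g2, g3, g4⟩
          exact ⟨I ∪ J, h1.union g1 ⟨y, h4, g3⟩, hunion h1 g1 h2 g2 ⟨y, h4, g3⟩, .inl h3, .inr g4⟩ }
  have hclass (x : α) : A.IsMod {y | st x y} := by
    rintro b z hz y ⟨I, h1, h2, h3, h4⟩ y' ⟨J, g1, g2, g3, g4⟩ hr
    exact g1 b z (fun h ↦ hz ⟨J, g1, g2, g3, h⟩) x g3 y' g4
      (h1 b z (fun h ↦ hz ⟨I, h1, h2, h3, h⟩) y h4 x h3 hr)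
  obtain ⟨S, hS⟩ := A.exists_isProj_of_setoid st hclass
  have hsimple : S.Simple := by
    intro I hI
    by_cases h : (Quotient.mk st) ⁻¹' I = Set.univ
    · right
      rwa [Set.preimage_eq_univ_iff, Set.range_eq_univ.2 Quotient.mk_surjective,
        Set.univ_subset_iff] at h
    · left
      intro x hx y hy
      obtain ⟨x, rfl⟩ := Quotient.exists_rep x
      obtain ⟨y, rfl⟩ := Quotient.exists_rep y
      exact Quotient.sound ⟨_, hS.isMod_preimage hI, h, hx, hy⟩
  have hproper (x : α) : ∃ y, ¬ st x y := by
    obtain ⟨I, ⟨h1, h2, h3⟩, hmax⟩ := exists_maximal_of_wellFoundedGT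
      (fun I : Set α ↦ A.IsMod I ∧ I ≠ Set.univ ∧ x ∈ I)
      (by obtain ⟨I, h1, h2, h3, -⟩ := st.refl x; exact ⟨I, h1, h2, h3⟩)
    obtain ⟨y, hy⟩ := (Set.ne_univ_iff_exists_notMem I).1 h2
    refine ⟨y, ?_⟩
    rintro ⟨J, g1, g2, g3, g4⟩
    have := @hmax (I ∪ J) ⟨h1.union g1 ⟨x, h3, g3⟩, hunion h1 g1 h2 g2 ⟨x, h3, g3⟩, .inl h3⟩
      Set.subset_union_left
    exact hy (this (.inr g4))
  obtain ⟨⟨k, s⟩, e, he⟩ := SPerm.exists_iso S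
  have hproj : A.IsProj (SPerm.biOrd ⟨k, s⟩) (e.symm ∘ Quotient.mk st) := he.symm.comp_proj hS
  have hsurj : (e.symm ∘ Quotient.mk st).Surjective :=
    e.symm.surjective.comp Quotient.mk_surjective
  have h2 : 2 ≤ k := by
    have : Nonempty α := (Nat.card_pos_iff.1 (by omega)).1
    obtain ⟨x⟩ := this
    obtain ⟨y, hy⟩ := hproper x
    have hne : e.symm (Quotient.mk st x) ≠ e.symm (Quotient.mk st y) :=
      fun h ↦ hy (Quotient.exact (e.symm.injective h))
    have h : Fintype.card (Fin k) > 1 := Fintype.one_lt_card_iff.2 ⟨_, _, hne⟩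
    rwa [Fintype.card_fin] at h
  refine ⟨k, s, _, h2, hsimple.of_iso (.symm ⟨e, he⟩), hsurj, hproj, fun i hk _ ↦ ?_⟩
  subst hk
  exact absurd ⟨s, _, hsurj, hproj⟩ hdec

theorem IsProj.fiber_ne_univ {q : α → κ} (hq : q.Surjective) (hκ : 2 ≤ Nat.card κ) (c : κ) :
    q ⁻¹' {c} ≠ Set.univ := by
  have : Finite κ := Nat.finite_of_card_ne_zero (by omega)
  have : Nontrivial κ := Finite.one_lt_card_iff_nontrivial.1 hκ
  obtain ⟨d, hd⟩ := exists_ne c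
  obtain ⟨x, rfl⟩ := hq d
  exact fun h ↦ hd (h ▸ Set.mem_univ x : x ∈ q ⁻¹' {c})

/-- A proper block is contained in a block of the canonical decomposition. -/
theorem IsCanon.eq_of_eq {k : ℕ} {s : Perm k} {A : BiOrd α} {q : α → Fin k} (h : IsCanon s A q)
    (hk : 3 ≤ k) {S : BiOrd κ} {q' : α → κ} (hp : A.IsProj S q') (hq : q'.Surjective)
    (hκ : 2 ≤ Nat.card κ) {x y : α} (hxy : q' x = q' y) : q x = q y :=
  h.proj.subset_fiber h.surj h.simple (by simpa using hk)
    (hp.isMod_preimage (S.isMod_singleton (q' y))) (IsProj.fiber_ne_univ hq hκ _)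
    ⟨x, hxy, rfl⟩ ⟨y, rfl, rfl⟩

theorem IsCanon.dec_iff {k : ℕ} {s : Perm k} {A : BiOrd α} {q : α → Fin k} (h : IsCanon s A q)
    {τ : Perm 2} : (SPerm.biOrd ⟨2, τ⟩).Dec A ↔ (⟨k, s⟩ : SPerm) = ⟨2, τ⟩ := by
  refine ⟨?_, fun h' ↦ h' ▸ ⟨q, h.surj, h.proj⟩⟩
  rintro ⟨q', hq, hp⟩
  rcases h.two_le.lt_or_eq with hk | rfl
  · exfalso
    obtain ⟨x, hx⟩ := hq 0
    obtain ⟨y, hy⟩ := hq 1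
    have key (c : Fin k) : c = q x ∨ c = q y := by
      obtain ⟨z, rfl⟩ := h.surj c
      have h01 : ∀ u : Fin 2, u = 0 ∨ u = 1 := by decide
      rcases h01 (q' z) with hz | hz
      · exact .inl (h.eq_of_eq hk hp hq (by simp) (hz.trans hx.symm))
      · exact .inr (h.eq_of_eq hk hp hq (by simp) (hz.trans hy.symm))
    have : (Finset.univ : Finset (Fin k)) ⊆ {q x, q y} := fun c _ ↦ by simpa using key c
    have := (Finset.card_le_card this).trans Finset.card_le_two
    simp at this
    omega
  · obtain ⟨x, y, hne, hne'⟩ : ∃ x y, q x ≠ q y ∧ q' x ≠ q' y := by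
      by_contra! hn
      obtain ⟨x, hx⟩ := h.surj 0
      obtain ⟨y, hy⟩ := h.surj 1
      have hxy := hn x y (by rw [hx, hy]; decide)
      obtain ⟨z, hz⟩ : ∃ z, q' z ≠ q' x := by
        obtain ⟨u, hu⟩ := exists_ne (q' x)
        obtain ⟨z, rfl⟩ := hq u
        exact ⟨z, hu⟩
      have h1 : q z = q x := by
        by_contra h'
        exact hz (hn _ _ h')
      have h2 : q z = q y := by
        by_contra h'
        exact hz ((hn _ _ h').trans hxy.symm)
      rw [h1, hx, hy] at h2
      exact absurd h2 (by decide)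
    have h1 : (q x < q y ↔ s (q x) < s (q y)) ↔ (q' x < q' y ↔ τ (q' x) < τ (q' y)) := by
      have e1 := h.proj.r_iff (b := false) hne
      have e2 := h.proj.r_iff (b := true) hne
      have e3 := hp.r_iff (b := false) hne'
      have e4 := hp.r_iff (b := true) hne'
      change A.r false x y ↔ q x < q y at e1
      change A.r true x y ↔ s (q x) < s (q y) at e2
      change A.r false x y ↔ q' x < q' y at e3
      change A.r true x y ↔ τ (q' x) < τ (q' y) at e4
      rw [← e1, ← e2, ← e3, ← e4]
    have h2 : ∀ (s : Perm 2) (u v : Fin 2), u ≠ v → ((u < v ↔ s u < s v) ↔ s = 1) := by decide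
    rw [h2 _ _ _ hne, h2 _ _ _ hne'] at h1
    have h3 : ∀ s τ : Perm 2, (s = 1 ↔ τ = 1) → s = τ := by decide
    rw [h3 _ _ h1]

theorem IsCanon.unique {k k' : ℕ} {s : Perm k} {s' : Perm k'} {A : BiOrd α} {q : α → Fin k}
    {q' : α → Fin k'} (h : IsCanon s A q) (h' : IsCanon s' A q') :
    (⟨k, s, q⟩ : Σ k, Perm k × (α → Fin k)) = ⟨k', s', q'⟩ := by
  suffices hker : ∀ x y, q x = q y ↔ q' x = q' y by
    choose g hg using h.surj
    choose g' hg' using h'.surj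
    let e : Fin k ≃ Fin k' :=
      { toFun := fun c ↦ q' (g c)
        invFun := fun c ↦ q (g' c)
        left_inv := fun c ↦ ((hker _ (g c)).2 (hg' _)).trans (hg c)
        right_inv := fun c ↦ ((hker _ (g' c)).1 (hg _)).trans (hg' c) }
    have he (x) : e (q x) = q' x := (hker _ _).1 (hg _)
    have hemb : (SPerm.biOrd ⟨k, s⟩).IsEmb (SPerm.biOrd ⟨k', s'⟩) e := by
      intro b c d hcd
      obtain ⟨x, rfl⟩ := h.surj c
      obtain ⟨y, rfl⟩ := h.surj d
      have hne := BiOrd.ne_of_r _ hcd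
      rw [he, he]
      exact (h'.proj.r_iff fun hn ↦ hne ((hker _ _).2 hn)).1 ((h.proj.r_iff hne).2 hcd)
    obtain ⟨rfl, hs⟩ := Sigma.mk.inj_iff.1 (SPerm.eq_of_iso ⟨e, hemb⟩)
    obtain rfl := eq_of_heq hs
    have hq : q' = q := by
      funext x
      rw [← he]
      exact congrFun (SPerm.emb_self_eq_id (p := ⟨k, s⟩) hemb e.surjective) (q x)
    rw [hq]
  by_cases hs : (⟨k, s⟩ : SPerm) = ⟨k', s'⟩
  swap
  · have hk : 3 ≤ k := by
      rcases h.two_le.lt_or_eq with hk | rfl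
      · exact hk
      · exact absurd (h'.dec_iff.1 ⟨q, h.surj, h.proj⟩).symm hs
    have hk' : 3 ≤ k' := by
      rcases h'.two_le.lt_or_eq with hk | rfl
      · exact hk
      · exact absurd (h.dec_iff.1 ⟨q', h'.surj, h'.proj⟩) hs
    exact fun x y ↦ ⟨h'.eq_of_eq hk' h.proj h.surj (by simp; omega),
      h.eq_of_eq hk h'.proj h'.surj (by simp; omega)⟩
  obtain ⟨rfl, hs⟩ := Sigma.mk.inj_iff.1 hs
  obtain rfl := eq_of_heq hs
  rcases h.two_le.lt_or_eq with hk | rfl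
  · exact fun x y ↦ ⟨h'.eq_of_eq hk h.proj h.surj (by simp; omega),
      h.eq_of_eq hk h'.proj h'.surj (by simp; omega)⟩
  have key {q q' : α → Fin 2} (h : IsCanon s A q) (h' : IsCanon s A q') (x) (hx : q x = 0) :
      q' x = 0 := by
    have h1 {u : Fin 2} (h : u ≠ 0) : u = 1 := by revert u; decide
    by_contra hx'
    refine h.indec 0 rfl rfl ⟨fun y ↦ q' y, fun u ↦ ?_,
      h'.proj.comp_emb (A.isEmb_val {x | q x = 0})⟩
    by_cases hu : u = 0
    · obtain ⟨y, hy⟩ := h'.surj 0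
      refine ⟨⟨y, ?_⟩, hu ▸ hy⟩
      by_contra hy'
      have hne : q x ≠ q y := hx ▸ Ne.symm hy'
      have r1 : A.r false x y := (h.proj.r_iff hne).2 (show q x < q y by
        rw [hx, h1 hy']; decide)
      have r2 : A.r false y x := (h'.proj.r_iff (hy ▸ Ne.symm hx')).2 (show q' y < q' x by
        rw [hy, h1 hx']; decide)
      exact A.asymm r1 r2
    · exact ⟨⟨x, hx⟩, (h1 hx').trans (h1 hu).symm⟩
  have heq : q = q' := by
    funext x
    have h2 : ∀ u v : Fin 2, (u = 0 ↔ v = 0) → u = v := by decide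
    exact h2 _ _ ⟨key h h' x, key h' h x⟩
  simp [heq]

end BiOrd

namespace SPerm

/-- The canonical presentations `inflate s a`. -/
structure Canon {k : ℕ} (s : Perm k) (a : Fin k → SPerm) : Prop where
  two_le : 2 ≤ k
  simple : (biOrd ⟨k, s⟩).Simple
  pos : ∀ i, 0 < (a i).1
  indec : ∀ i : Fin k, k = 2 → i.val = 0 → ¬ (biOrd ⟨k, s⟩).Dec (a i).biOrd

theorem Canon.exists_isCanon {k : ℕ} {s : Perm k} {a : Fin k → SPerm} (h : Canon s a) :
    ∃ q, BiOrd.IsCanon s (inflate s a).biOrd q ∧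
      ∀ i, ((inflate s a).biOrd.restrict {x | q x = i}).Iso (a i).biOrd := by
  obtain ⟨q, hq, hi⟩ := exists_isProj_inflate s a
  refine ⟨q, ⟨h.two_le, h.simple, fun i ↦ ?_, hq,
    fun i hk hi0 hd ↦ h.indec i hk hi0 (hd.congr (hi i))⟩, hi⟩
  obtain ⟨e, -⟩ := hi i
  exact ⟨_, (e.symm ⟨0, h.pos i⟩).2⟩

theorem Canon.unique {k k' : ℕ} {s : Perm k} {s' : Perm k'} {a : Fin k → SPerm}
    {a' : Fin k' → SPerm} (h : Canon s a) (h' : Canon s' a') (heq : inflate s a = inflate s' a') :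
    (⟨k, s, a⟩ : Σ k, Perm k × (Fin k → SPerm)) = ⟨k', s', a'⟩ := by
  obtain ⟨q, hq, hi⟩ := h.exists_isCanon
  obtain ⟨q', hq', hi'⟩ := h'.exists_isCanon
  generalize inflate s a = p at *
  subst heq
  obtain ⟨rfl, hsq⟩ := Sigma.mk.inj_iff.1 (hq.unique hq')
  obtain ⟨rfl, rfl⟩ := Prod.mk_inj.1 (eq_of_heq hsq)
  have : a = a' := funext fun i ↦ eq_of_iso ((hi i).symm.trans (hi' i))
  rw [this]

theorem exists_canon (p : SPerm) (hp : 2 ≤ p.1) :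
    ∃ (k : ℕ) (s : Perm k) (a : Fin k → SPerm), Canon s a ∧ inflate s a = p := by
  obtain ⟨k, s, q, hq⟩ := p.biOrd.exists_isCanon (by simpa using hp)
  refine ⟨k, s, fun i ↦ (p.biOrd.restrict {x | q x = i}).std, ⟨hq.two_le, hq.simple, fun i ↦ ?_,
    fun i hk hi hd ↦ hq.indec i hk hi (hd.congr (BiOrd.std_iso _))⟩,
    (eq_inflate hq.proj fun i ↦ (BiOrd.std_iso _).symm).symm⟩
  obtain ⟨x, hx⟩ := hq.surj i
  rw [BiOrd.std_fst]
  exact Nat.card_pos_iff.2 ⟨⟨⟨x, hx⟩⟩, inferInstance⟩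

theorem Canon.dec_iff {k : ℕ} {s : Perm k} {a : Fin k → SPerm} (h : Canon s a) {τ : Perm 2} :
    (biOrd ⟨2, τ⟩).Dec (inflate s a).biOrd ↔ (⟨k, s⟩ : SPerm) = ⟨2, τ⟩ := by
  obtain ⟨q, hq, -⟩ := h.exists_isCanon
  exact hq.dec_iff

theorem Canon.size_lt {k : ℕ} {s : Perm k} {a : Fin k → SPerm} (h : Canon s a) (i : Fin k) :
    (a i).1 < (inflate s a).1 := by
  rw [inflate_fst]
  have : Nontrivial (Fin k) := Fin.nontrivial_iff_two_le.2 h.two_le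
  obtain ⟨j, hj⟩ := exists_ne i
  exact Finset.single_lt_sum (f := fun i ↦ (a i).1) hj (Finset.mem_univ _)
    (Finset.mem_univ _) (h.pos j)
    fun _ _ _ ↦ Nat.zero_le _

theorem Canon.two_le_size {k : ℕ} {s : Perm k} {a : Fin k → SPerm} (h : Canon s a) :
    2 ≤ (inflate s a).1 :=
  lt_of_le_of_lt (h.pos ⟨0, by have := h.two_le; omega⟩) (h.size_lt _)

/-- `BiOrd.Simple` implies the definition of simplicity by intervals. -/
theorem isSimple_of_simple {p : SPerm} (h : p.biOrd.Simple) : IsSimple p.2 := by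
  intro I hI
  have hmod : p.biOrd.IsMod I := by
    rintro (_ | _) x hx y hy z hz hxy
    · by_contra hn
      exact hx (hI.1 hz hy (not_lt.1 hn) (le_of_lt hxy))
    · by_contra hn
      have := hI.2 (Finset.mem_image_of_mem _ hz) (Finset.mem_image_of_mem _ hy) (not_lt.1 hn)
        (le_of_lt hxy)
      exact hx ((Function.Injective.mem_finset_image p.2.injective).1 this)
  rcases h _ hmod with h' | h'
  · exact .inl (Finset.card_le_one_iff_subsingleton.2 h')
  · right
    rw [Finset.coe_eq_univ.1 h']
    simp

end SPerm

namespace SPerm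

/-- Closed under containment, with finitely many simple elements. -/
structure IsFinSimpleClass (D : Set SPerm) : Prop where
  down : ∀ {p q : SPerm}, p.Sub q → q ∈ D → p ∈ D
  fin : {p ∈ D | p.biOrd.Simple}.Finite

/-- The permutations all of whose simple subpermutations lie in `D`. -/
def wreath (D : Set SPerm) : Set SPerm := {p | ∀ σ : SPerm, σ.biOrd.Simple → σ.Sub p → σ ∈ D}

theorem IsFinSimpleClass.subset_wreath {D : Set SPerm} (hD : IsFinSimpleClass D) : D ⊆ wreath D :=
  fun _ hp _ _ hσ ↦ hD.down hσ hp

theorem wreath_down {D : Set SPerm} {p q : SPerm} (h : p.Sub q) (hq : q ∈ wreath D) :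
    p ∈ wreath D := fun σ hσ hs ↦ hq σ hσ (hs.trans h)

theorem IsFinSimpleClass.inflate_mem_wreath {D : Set SPerm} (hD : IsFinSimpleClass D) {k : ℕ}
    {s : Perm k} {a : Fin k → SPerm} (hs : (⟨k, s⟩ : SPerm) ∈ D) (ha : ∀ i, a i ∈ wreath D) :
    inflate s a ∈ wreath D := by
  rintro σ hσ ⟨f, hf⟩
  obtain ⟨q, hq, hi⟩ := exists_isProj_inflate s a
  have hp := hq.comp_emb hf
  by_cases h : ∃ i, (q ∘ f) ⁻¹' {i} = Set.univ
  · obtain ⟨i, h⟩ := h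
    obtain ⟨e, he⟩ := hi i
    have hmem (x) : q (f x) = i := (h.symm ▸ Set.mem_univ x : x ∈ (q ∘ f) ⁻¹' {i})
    exact ha i σ hσ ⟨fun x ↦ e ⟨f x, hmem x⟩, fun b x y hxy ↦ he b _ _ (hf b x y hxy)⟩
  · push Not at h
    have hinj : (q ∘ f).Injective := fun x y hxy ↦
      (hσ _ (hp.isMod_preimage (BiOrd.isMod_singleton _ (q (f y))))).resolve_right (h _) hxy rfl
    exact hD.down ⟨_, fun b x y hxy ↦ hp b x y hxy (hinj.ne (BiOrd.ne_of_r _ hxy))⟩ hs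

theorem finite_size_le (N : ℕ) : {p : SPerm | p.1 ≤ N}.Finite := by
  refine (Set.finite_range fun p : Σ n : Fin (N + 1), Perm n ↦ (⟨p.1, p.2⟩ : SPerm)).subset ?_
  rintro ⟨n, σ⟩ hn
  exact ⟨⟨⟨n, Nat.lt_succ_of_le hn⟩, σ⟩, rfl⟩

instance : IsPreorder SPerm Sub where
  refl := Sub.refl
  trans _ _ _ := Sub.trans

/-- The wreath closure of a class with finitely many simples is well quasi-ordered. -/
theorem IsFinSimpleClass.wreath_pwo {D : Set SPerm} (hD : IsFinSimpleClass D) :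
    (wreath D).PartiallyWellOrderedOn Sub := by
  rw [Set.PartiallyWellOrderedOn.iff_not_exists_isMinBadSeq Sigma.fst]
  rintro ⟨f, ⟨hf, hbad⟩, hmin⟩
  let R : Set SPerm := {a | ∃ n, a.Sub (f n) ∧ a.1 < (f n).1}
  have hR : R.PartiallyWellOrderedOn Sub := by
    rw [Set.partiallyWellOrderedOn_iff_exists_lt]
    by_contra! ⟨g, hg, hgbad⟩
    choose φ hφ hφ' using hg
    obtain ⟨i₀, hi₀⟩ := exists_minimalFor_of_wellFoundedLT (fun _ : ℕ ↦ True) φ ⟨0, trivial⟩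
    have hle (i) : φ i₀ ≤ φ i := by
      by_contra hn
      exact hn (hi₀.2 (j := i) trivial (le_of_not_ge hn))
    refine hmin (φ i₀) (fun m ↦ if m < φ i₀ then f m else g (i₀ + (m - φ i₀)))
      (fun m hm ↦ (if_pos hm).symm) (by simpa using hφ' i₀) ⟨fun n ↦ ?_, fun m n hmn h ↦ ?_⟩
    · dsimp only
      split_ifs
      · exact hf n
      · exact wreath_down (hφ _) (hf _)
    · dsimp only at h
      split_ifs at h with h1 h2 h2
      · exact hbad m n hmn h
      · exact hbad m _ (h1.trans_le (hle _)) (h.trans (hφ _))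
      · omega
      · exact hgbad _ _ (by omega) h
  let T : Set SPerm := {p | p.1 ≤ 1} ∪ ⋃ σ ∈ hD.fin.toFinset,
    (fun a ↦ inflate σ.2 a) '' Set.univ.pi fun _ ↦ R
  have hT : T.PartiallyWellOrderedOn Sub := by
    refine (finite_size_le 1).partiallyWellOrderedOn.union ?_
    rw [Finset.partiallyWellOrderedOn_bUnion]
    intro σ _
    exact (Set.PartiallyWellOrderedOn.pi (r := fun _ ↦ Sub) fun _ ↦ hR).image_of_monotone_on
      fun a _ a' _ h ↦ inflate_sub_inflate σ.2 h
  have hfT (n) : f n ∈ T := by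
    rcases le_or_gt (f n).1 1 with h | h
    · exact .inl h
    · right
      obtain ⟨k, s, a, ha, heq⟩ := exists_canon (f n) h
      have hs : Sub ⟨k, s⟩ (f n) := heq ▸ sub_inflate s a ha.pos
      simp only [Set.mem_iUnion]
      refine ⟨⟨k, s⟩, hD.fin.mem_toFinset.2 ⟨hf n _ ha.simple hs, ha.simple⟩, a, fun i _ ↦ ?_, heq⟩
      exact ⟨n, heq ▸ component_sub_inflate s a i, heq ▸ ha.size_lt i⟩
  obtain ⟨m, n, hmn, h⟩ := hT.exists_lt hfT
  exact hbad m n hmn h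

theorem IsFinSimpleClass.exists_bound {D : Set SPerm} (hD : IsFinSimpleClass D) :
    ∃ N, ∀ p ∈ wreath D, p ∉ D → ∃ β : SPerm, β.1 ≤ N ∧ β.Sub p ∧ β ∉ D := by
  by_contra! h
  choose p hp hpD hβ using h
  have hsize (n) : n < (p n).1 := by
    by_contra hn
    exact hpD n (hβ n _ (not_lt.1 hn) (Sub.refl _))
  let f (n : ℕ) : ℕ := Nat.rec 0 (fun _ m ↦ (p m).1) n
  have hf : StrictMono f := strictMono_nat_of_lt_succ fun n ↦ hsize _
  obtain ⟨m, n, hmn, hs⟩ := hD.wreath_pwo.exists_lt fun n ↦ hp (f n)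
  exact hpD _ (hβ _ _ (hf.monotone (Nat.succ_le_of_lt hmn) : f (m + 1) ≤ f n) hs)

end SPerm

namespace BiOrd

variable {α β γ κ : Type}

/-- `A` placed to the upper left of `B`. -/
def skew (A : BiOrd α) (B : BiOrd β) : BiOrd (α ⊕ β) where
  r b
    | .inl x, .inl y => A.r b x y
    | .inr x, .inr y => B.r b x y
    | .inl _, .inr _ => b = false
    | .inr _, .inl _ => b = true
  irrefl b x := by
    rcases x with x | x
    exacts [A.irrefl b x, B.irrefl b x]
  trans b x y z := by
    rcases x with x | x <;> rcases y with y | y <;> rcases z with z | z <;> cases b <;> simp <;>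
      first | exact A.trans _ _ _ _ | exact B.trans _ _ _ _
  total b x y := by
    rcases x with x | x <;> rcases y with y | y <;> cases b <;> simp <;>
      first | exact A.total _ _ _ | exact B.total _ _ _

theorem skew_congr {α' β' : Type} {A : BiOrd α} {B : BiOrd β} {A' : BiOrd α'} {B' : BiOrd β'}
    (hA : A.Iso A') (hB : B.Iso B') : (A.skew B).Iso (A'.skew B') := by
  obtain ⟨e, he⟩ := hA
  obtain ⟨f, hf⟩ := hB
  refine ⟨e.sumCongr f, ?_⟩
  rintro b (x | x) (y | y) h
  exacts [he _ _ _ h, h, h, hf _ _ _ h]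

theorem skew_assoc (A : BiOrd α) (B : BiOrd β) (C : BiOrd γ) :
    ((A.skew B).skew C).Iso (A.skew (B.skew C)) := by
  refine ⟨Equiv.sumAssoc α β γ, ?_⟩
  rintro b ((x | x) | x) ((y | y) | y) h <;> exact h

theorem Dec.swap {S : BiOrd κ} {A : BiOrd α} (h : S.Dec A) : S.swap.Dec A.swap := by
  obtain ⟨q, hq, hp⟩ := h
  exact ⟨q, hq, hp.swap⟩

theorem Simple.swap {A : BiOrd α} (h : A.Simple) : A.swap.Simple :=
  fun I hI ↦ h I fun b ↦ by simpa [BiOrd.swap] using hI !b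

end BiOrd

/-- The permutation `21`. -/
def skewPerm : Perm 2 := Equiv.swap 0 1

namespace SPerm

/-- The skew sum of two permutations. -/
noncomputable def sk (p q : SPerm) : SPerm := (p.biOrd.skew q.biOrd).std

theorem sk_assoc (p q r : SPerm) : sk (sk p q) r = sk p (sk q r) :=
  BiOrd.Iso.std_eq_std <| (BiOrd.skew_congr (BiOrd.std_iso _) (.refl _)).trans <|
    (BiOrd.skew_assoc _ _ _).trans (BiOrd.skew_congr (.refl _) (BiOrd.std_iso _).symm)

theorem sk_eq_inflate (p q : SPerm) : sk p q = inflate skewPerm ![p, q] := by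
  have hp : (p.biOrd.skew q.biOrd).IsProj (biOrd ⟨2, skewPerm⟩)
      (Sum.elim (fun _ ↦ (0 : Fin 2)) fun _ ↦ (1 : Fin 2)) := by
    rintro b (x | x) (y | y) h hne
    · exact absurd rfl hne
    · obtain rfl : b = false := h
      exact (by decide : (0 : Fin 2) < 1)
    · obtain rfl : b = true := h
      exact (by decide : skewPerm 1 < skewPerm 0)
    · exact absurd rfl hne
  refine std_eq_inflate hp (e := Equiv.refl _) (fun _ _ _ h ↦ h) ?_
  refine Fin.forall_fin_two.2 ⟨.symm ?_, .symm ?_⟩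
  · refine BiOrd.IsEmb.restrict_iso (f := Sum.inl) (fun b x y h ↦ h) ?_
    ext (x | x)
    · exact ⟨fun _ ↦ rfl, fun _ ↦ ⟨x, rfl⟩⟩
    · exact ⟨fun ⟨_, h⟩ ↦ (nomatch h), fun h ↦ absurd h (by decide : (1 : Fin 2) ≠ 0)⟩
  · refine BiOrd.IsEmb.restrict_iso (f := Sum.inr) (fun b x y h ↦ h) ?_
    ext (x | x)
    · exact ⟨fun ⟨_, h⟩ ↦ (nomatch h), fun h ↦ absurd h (by decide : (0 : Fin 2) ≠ 1)⟩
    · exact ⟨fun _ ↦ rfl, fun _ ↦ ⟨x, rfl⟩⟩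

theorem sk_fst (p q : SPerm) : (sk p q).1 = p.1 + q.1 := by
  simp [sk_eq_inflate, inflate_fst]

theorem inv_sk (p q : SPerm) : (sk p q).inv = sk q.inv p.inv := by
  rw [sk_eq_inflate, sk_eq_inflate, inv_inflate]
  have : skewPerm⁻¹ = skewPerm := by decide
  rw [this]
  congr 1
  funext i
  have h0 : skewPerm 0 = 1 := by decide
  have h1 : skewPerm 1 = 0 := by decide
  revert i
  refine Fin.forall_fin_two.2 ⟨?_, ?_⟩
  · rw [h0]; rfl
  · rw [h1]; rfl

theorem sub_sk_left (p q : SPerm) : p.Sub (sk p q) :=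
  sk_eq_inflate p q ▸ component_sub_inflate skewPerm ![p, q] 0

theorem sub_sk_right (p q : SPerm) : q.Sub (sk p q) :=
  sk_eq_inflate p q ▸ component_sub_inflate skewPerm ![p, q] 1

theorem dec_inv {p : SPerm} {τ : Perm 2} (h : (biOrd ⟨2, τ⟩).Dec p.biOrd) :
    (biOrd ⟨2, τ⟩).Dec p.inv.biOrd := by
  have hτ : inv ⟨2, τ⟩ = ⟨2, τ⟩ := by
    have : ∀ τ : Perm 2, τ⁻¹ = τ := by decide
    exact Sigma.ext rfl (heq_of_eq (this τ))
  have h1 := (h.swap.congr p.inv_iso.symm).congr_left (inv_iso ⟨2, τ⟩).symm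
  rwa [hτ] at h1

theorem dec_inv_iff {p : SPerm} {τ : Perm 2} :
    (biOrd ⟨2, τ⟩).Dec p.inv.biOrd ↔ (biOrd ⟨2, τ⟩).Dec p.biOrd :=
  ⟨fun h ↦ p.inv_inv ▸ dec_inv h, dec_inv⟩

/-- `p` is not a skew sum. -/
def SkIndec (p : SPerm) : Prop := ¬ (biOrd ⟨2, skewPerm⟩).Dec p.biOrd

theorem SkIndec.inv {p : SPerm} (h : p.SkIndec) : p.inv.SkIndec := fun h' ↦ h (dec_inv_iff.1 h')

theorem canon_skewPerm {a : Fin 2 → SPerm} (ha : 0 < (a 0).1) (ha' : 0 < (a 1).1)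
    (h : (a 0).SkIndec) : Canon skewPerm a where
  two_le := le_rfl
  simple := BiOrd.simple_of_card_two (by simp)
  pos := Fin.forall_fin_two.2 ⟨ha, ha'⟩
  indec i _ hi := by
    obtain rfl : i = 0 := Fin.ext hi
    exact h

theorem sk_inj {a b a' b' : SPerm} (ha : a.SkIndec) (ha' : a'.SkIndec) (h0 : 0 < a.1)
    (h1 : 0 < b.1) (h0' : 0 < a'.1) (h1' : 0 < b'.1) (h : sk a b = sk a' b') : a = a' ∧ b = b' := by
  rw [sk_eq_inflate, sk_eq_inflate] at h
  have := (canon_skewPerm (a := ![a, b]) h0 h1 ha).unique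
    (canon_skewPerm (a := ![a', b']) h0' h1' ha') h
  simpa using this

theorem dec_sk {p q : SPerm} (hp : 0 < p.1) (hq : 0 < q.1) :
    (biOrd ⟨2, skewPerm⟩).Dec (sk p q).biOrd := by
  rw [sk_eq_inflate]
  obtain ⟨r, hr, hi⟩ := exists_isProj_inflate skewPerm ![p, q]
  refine ⟨r, fun i ↦ ?_, hr⟩
  obtain ⟨e, -⟩ := hi i
  have : 0 < (![p, q] i).1 := by
    revert i
    exact Fin.forall_fin_two.2 ⟨fun _ ↦ hp, fun _ ↦ hq⟩
  exact ⟨_, (e.symm ⟨0, this⟩).2⟩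

theorem dec_unique {p : SPerm} {τ τ' : Perm 2} (h : (biOrd ⟨2, τ⟩).Dec p.biOrd)
    (h' : (biOrd ⟨2, τ'⟩).Dec p.biOrd) : τ = τ' := by
  obtain ⟨q, hq⟩ := BiOrd.exists_isCanon_of_dec h
  simpa using hq.dec_iff.1 h'

theorem exists_sk {p : SPerm} (h : ¬ p.SkIndec) :
    ∃ a b, a.SkIndec ∧ 0 < a.1 ∧ 0 < b.1 ∧ p = sk a b := by
  obtain ⟨q, hq⟩ := BiOrd.exists_isCanon_of_dec (not_not.1 h)
  have hpos (i : Fin 2) : 0 < (p.biOrd.restrict {x | q x = i}).std.1 := by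
    obtain ⟨x, hx⟩ := hq.surj i
    rw [BiOrd.std_fst]
    exact Nat.card_pos_iff.2 ⟨⟨⟨x, hx⟩⟩, inferInstance⟩
  refine ⟨(p.biOrd.restrict {x | q x = 0}).std, (p.biOrd.restrict {x | q x = 1}).std,
    fun hd ↦ hq.indec 0 rfl rfl (hd.congr (BiOrd.std_iso _)), hpos 0, hpos 1, ?_⟩
  rw [sk_eq_inflate]
  refine eq_inflate hq.proj (Fin.forall_fin_two.2 ⟨?_, ?_⟩) <;> exact (BiOrd.std_iso _).symm

/-- A skew decomposable involution is `a ⊖ a⁻¹` or `a ⊖ m ⊖ a⁻¹` with `m` an involution. -/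
theorem exists_sk_of_inv_eq {p : SPerm} (hp : p.inv = p) (h : ¬ p.SkIndec) :
    ∃ a, a.SkIndec ∧ 0 < a.1 ∧
      (p = sk a a.inv ∨ ∃ m, 0 < m.1 ∧ m.inv = m ∧ p = sk a (sk m a.inv)) := by
  obtain ⟨a, b, ha, ha0, hb0, rfl⟩ := exists_sk h
  refine ⟨a, ha, ha0, ?_⟩
  rw [inv_sk] at hp
  by_cases hb : b.SkIndec
  · left
    rw [(sk_inj (b := a.inv) hb.inv ha hb0 ha0 ha0 hb0 hp).2]
  · right
    obtain ⟨c, d, hc, hc0, hd0, hcd⟩ := exists_sk fun h' : b.inv.SkIndec ↦ hb (b.inv_inv ▸ h'.inv)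
    rw [hcd, sk_assoc] at hp
    obtain ⟨rfl, rfl⟩ := sk_inj hc ha hc0 (by rw [sk_fst]; exact Nat.add_pos_left hd0 _) ha0 hb0 hp
    rw [inv_sk, inv_inv] at hcd
    exact ⟨d, hd0, (sk_inj (b := d.inv) hc hc hc0 hd0 hc0 hd0 hcd).2, rfl⟩

theorem Canon.of_inv {k : ℕ} {s : Perm k} {a : Fin k → SPerm} (h : Canon s a)
    (hs : (⟨k, s⟩ : SPerm) ≠ ⟨2, skewPerm⟩) : Canon s⁻¹ fun i ↦ (a (s⁻¹ i)).inv where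
  two_le := h.two_le
  simple := h.simple.swap.of_iso (inv_iso ⟨k, s⟩).symm
  pos i := h.pos _
  indec i hk hi hd := by
    subst hk
    obtain rfl : i = 0 := Fin.ext hi
    have hs' : ∀ s : Perm 2, s ≠ skewPerm → s = 1 := by decide
    obtain rfl := hs' s fun h ↦ hs (h ▸ rfl)
    exact h.indec 0 rfl rfl (dec_inv_iff.1 hd)

/-- The canonical presentation of an involution that is not a skew sum. -/
theorem Canon.symm_of_inv_eq {k : ℕ} {s : Perm k} {a : Fin k → SPerm} (h : Canon s a)
    (hs : (⟨k, s⟩ : SPerm) ≠ ⟨2, skewPerm⟩) (hp : (inflate s a).inv = inflate s a) :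
    s⁻¹ = s ∧ ∀ i, a (s i) = (a i).inv := by
  rw [inv_inflate] at hp
  have := (h.of_inv hs).unique h hp
  obtain ⟨-, h1⟩ := Sigma.mk.inj_iff.1 this
  obtain ⟨h1, h2⟩ := Prod.mk_inj.1 (eq_of_heq h1)
  refine ⟨h1, fun i ↦ ?_⟩
  have := congrFun h2 (s i)
  rw [← this]
  exact congrArg (fun j ↦ (a j).inv) (s.symm_apply_apply i)

theorem inv_inflate_eq {k : ℕ} {s : Perm k} {a : Fin k → SPerm} (hs : s⁻¹ = s)
    (ha : ∀ i, a (s i) = (a i).inv) : (inflate s a).inv = inflate s a := by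
  rw [inv_inflate, hs]
  congr 1
  funext i
  rw [ha, inv_inv]

end SPerm

namespace SPerm

/-- The subpermutations of length at most `N`, and the ways to split into two blocks. -/
abbrev Color (N : ℕ) := Set (Σ n : Fin (N + 1), Perm n) × Set (Perm 2)

/-- The colour of a permutation. -/
def color (N : ℕ) (p : SPerm) : Color N :=
  ({β | Sub ⟨β.1, β.2⟩ p}, {τ | (biOrd ⟨2, τ⟩).Dec p.biOrd})

variable {N : ℕ}

theorem color_eq_iff {p q : SPerm} : color N p = color N q ↔
    (∀ β : SPerm, β.1 ≤ N → (β.Sub p ↔ β.Sub q)) ∧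
      ∀ τ : Perm 2, (biOrd ⟨2, τ⟩).Dec p.biOrd ↔ (biOrd ⟨2, τ⟩).Dec q.biOrd := by
  rw [color, color, Prod.mk_inj, Set.ext_iff, Set.ext_iff]
  refine and_congr ⟨fun h β hβ ↦ h ⟨⟨β.1, Nat.lt_succ_of_le hβ⟩, β.2⟩, fun h β ↦ ?_⟩ Iff.rfl
  exact h ⟨β.1, β.2⟩ (Nat.le_of_lt_succ β.1.2)

theorem color_inv {p q : SPerm} (h : color N p = color N q) : color N p.inv = color N q.inv := by
  rw [color_eq_iff] at h ⊢
  refine ⟨fun β hβ ↦ ?_, fun τ ↦ ?_⟩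
  · rw [sub_inv_iff, sub_inv_iff]
    exact h.1 _ hβ
  · rw [dec_inv_iff, dec_inv_iff]
    exact h.2 τ

theorem SkIndec.of_color_eq {p q : SPerm} (h : color N p = color N q) (hp : p.SkIndec) :
    q.SkIndec := fun hq ↦ hp (((color_eq_iff.1 h).2 _).2 hq)

theorem sub_inflate_of_color {k : ℕ} {s : Perm k} {a a' : Fin k → SPerm}
    (h : ∀ i, color N (a i) = color N (a' i)) {β : SPerm} (hβ : β.1 ≤ N)
    (hs : β.Sub (inflate s a)) : β.Sub (inflate s a') := by
  obtain ⟨f, hf⟩ := hs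
  obtain ⟨q, hq, hi⟩ := exists_isProj_inflate s a
  rw [eq_inflate (hq.comp_emb hf) fun i ↦ (BiOrd.std_iso _).symm]
  refine inflate_sub_inflate s fun i ↦ ((color_eq_iff.1 (h i)).1 _ ?_).1 ?_
  · rw [BiOrd.std_fst]
    refine le_trans ?_ hβ
    exact (Nat.card_le_card_of_injective (Subtype.val : {x | (q ∘ f) x = i} → _)
      Subtype.val_injective).trans_eq (Nat.card_fin _)
  · obtain ⟨e, he⟩ := hi i
    exact BiOrd.IsEmb.std_sub (f := fun x ↦ e ⟨f x, x.2⟩) fun b x y hxy ↦ he b _ _ (hf b _ _ hxy)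

theorem color_inflate_of_dec {k : ℕ} {s : Perm k} {a a' : Fin k → SPerm}
    (h : ∀ i, color N (a i) = color N (a' i))
    (hd : ∀ τ : Perm 2, (biOrd ⟨2, τ⟩).Dec (inflate s a).biOrd ↔
      (biOrd ⟨2, τ⟩).Dec (inflate s a').biOrd) :
    color N (inflate s a) = color N (inflate s a') :=
  color_eq_iff.2 ⟨fun _ hβ ↦ ⟨sub_inflate_of_color h hβ,
    sub_inflate_of_color (fun i ↦ (h i).symm) hβ⟩,
    hd⟩

theorem Canon.of_color {k : ℕ} {s : Perm k} {a a' : Fin k → SPerm} (hc : Canon s a)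
    (h : ∀ i, color N (a i) = color N (a' i)) (hpos : ∀ i, 0 < (a' i).1) : Canon s a' where
  two_le := hc.two_le
  simple := hc.simple
  pos := hpos
  indec i hk hi hd := by
    subst hk
    exact hc.indec i rfl hi (((color_eq_iff.1 (h i)).2 s).2 hd)

theorem Canon.color_inflate {k : ℕ} {s : Perm k} {a a' : Fin k → SPerm} (hc : Canon s a)
    (hc' : Canon s a') (h : ∀ i, color N (a i) = color N (a' i)) :
    color N (inflate s a) = color N (inflate s a') :=
  color_inflate_of_dec h fun τ ↦ by rw [hc.dec_iff, hc'.dec_iff]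

theorem color_sk {a b a' b' : SPerm} (ha : color N a = color N a') (hb : color N b = color N b')
    (ha0 : 0 < a.1) (hb0 : 0 < b.1) (ha0' : 0 < a'.1) (hb0' : 0 < b'.1) :
    color N (sk a b) = color N (sk a' b') := by
  have h1 := dec_sk ha0 hb0
  have h2 := dec_sk ha0' hb0'
  rw [sk_eq_inflate] at h1 h2 ⊢
  rw [sk_eq_inflate]
  refine color_inflate_of_dec (Fin.forall_fin_two.2 ⟨ha, hb⟩) fun τ ↦ ⟨fun h ↦ ?_, fun h ↦ ?_⟩
  · rwa [dec_unique h h1]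
  · rwa [dec_unique h h2]

/-- A class closed under inverses whose colours of depth `N` control membership of inflations. -/
structure IsColored (D : Set SPerm) (N : ℕ) : Prop extends IsFinSimpleClass D where
  inv : ∀ {p : SPerm}, p ∈ D → p.inv ∈ D
  bound : ∀ p ∈ wreath D, p ∉ D → ∃ β : SPerm, β.1 ≤ N ∧ β.Sub p ∧ β ∉ D

theorem IsColored.inflate_mem {D : Set SPerm} (hD : IsColored D N) {k : ℕ} {s : Perm k}
    {a a' : Fin k → SPerm} (hpos : ∀ i, 0 < (a i).1) (h : ∀ i, color N (a i) = color N (a' i))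
    (ha : inflate s a ∈ D) (ha' : ∀ i, a' i ∈ D) : inflate s a' ∈ D := by
  by_contra hn
  obtain ⟨β, hβ, hs, hβD⟩ := hD.bound _ (hD.inflate_mem_wreath (hD.down (sub_inflate s a hpos) ha)
    fun i ↦ hD.subset_wreath (ha' i)) hn
  exact hβD (hD.down (sub_inflate_of_color (fun i ↦ (h i).symm) hβ hs) ha)

theorem IsColored.sk_mem {D : Set SPerm} (hD : IsColored D N) {a b a' b' : SPerm}
    (ha : color N a = color N a') (hb : color N b = color N b') (ha0 : 0 < a.1) (hb0 : 0 < b.1)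
    (h : sk a b ∈ D) (ha' : a' ∈ D) (hb' : b' ∈ D) : sk a' b' ∈ D := by
  rw [sk_eq_inflate] at h ⊢
  exact hD.inflate_mem (Fin.forall_fin_two.2 ⟨ha0, hb0⟩) (Fin.forall_fin_two.2 ⟨ha, hb⟩) h
    (Fin.forall_fin_two.2 ⟨ha', hb'⟩)

end SPerm

namespace PowerSeries

variable {α β ι : Type}

/-- The generating function of a type with a weight. -/
noncomputable def gfw (w : α → ℕ) : ℚ⟦X⟧ := mk fun n ↦ (Nat.card {x // w x = n} : ℚ)

theorem gfw_congr {w : α → ℕ} {w' : β → ℕ} (e : α ≃ β) (h : ∀ x, w' (e x) = w x) :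
    gfw w = gfw w' := by
  ext n
  rw [gfw, gfw, coeff_mk, coeff_mk, Nat.card_congr (e.subtypeEquiv (p := fun x ↦ w x = n)
    (q := fun y ↦ w' y = n) fun x ↦ by rw [h])]

theorem gfw_of_isEmpty [IsEmpty α] (w : α → ℕ) : gfw w = 0 := by
  ext n
  simp [gfw]

theorem constantCoeff_gfw {w : α → ℕ} (h : ∀ x, 0 < w x) : constantCoeff (gfw w) = 0 := by
  have : IsEmpty {x // w x = 0} := ⟨fun x ↦ (h x.1).ne' x.2⟩
  rw [← coeff_zero_eq_constantCoeff_apply, gfw, coeff_mk]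
  simp

theorem gfw_sigma [Fintype ι] {A : ι → Type} (w : ∀ i, A i → ℕ)
    (hw : ∀ i n, Finite {x // w i x = n}) :
    gfw (fun x : Σ i, A i ↦ w x.1 x.2) = ∑ i, gfw (w i) := by
  ext n
  rw [gfw, coeff_mk, map_sum]
  let e : {x : Σ i, A i // w x.1 x.2 = n} ≃ Σ i, {x // w i x = n} :=
    { toFun := fun x ↦ ⟨x.1.1, x.1.2, x.2⟩
      invFun := fun x ↦ ⟨⟨x.1, x.2.1⟩, x.2.2⟩
      left_inv := fun _ ↦ rfl
      right_inv := fun _ ↦ rfl }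
  rw [Nat.card_congr e, Nat.card_sigma]
  simp [gfw]

/-- Split a generating function along a partition. -/
theorem gfw_eq_sum [Fintype ι] (w : α → ℕ) (hw : ∀ n, Finite {x // w x = n}) (P : ι → α → Prop)
    (h : ∀ x, ∃! i, P i x) : gfw w = ∑ i, gfw fun x : {x // P i x} ↦ w x := by
  rw [← gfw_sigma]
  · choose g hg hg' using h
    let e : α ≃ Σ i, {x // P i x} :=
      { toFun := fun x ↦ ⟨g x, x, hg x⟩
        invFun := fun x ↦ x.2.1
        left_inv := fun _ ↦ rfl
        right_inv := by
          rintro ⟨i, x, hx⟩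
          obtain rfl := hg' x i hx
          rfl }
    exact gfw_congr e fun _ ↦ rfl
  · intro i n
    have := hw n
    exact Finite.of_injective (fun x : {x : {x // P i x} // w x = n} ↦
      (⟨x.1.1, x.2⟩ : {x // w x = n})) fun x y h ↦
        Subtype.ext (Subtype.ext (by simpa using h))

theorem finite_sum_eq [Fintype ι] {A : ι → Type} {w : ∀ i, A i → ℕ}
    (hw : ∀ i n, Finite {x // w i x = n}) (n : ℕ) :
    Finite {x : ∀ i, A i // ∑ i, w i (x i) = n} := by
  have hle (x : ∀ i, A i) (h : ∑ i, w i (x i) = n) (i) : w i (x i) < n + 1 := by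
    rw [← h, Nat.lt_succ_iff]
    exact Finset.single_le_sum (f := fun i ↦ w i (x i)) (fun _ _ ↦ Nat.zero_le _)
      (Finset.mem_univ i)
  refine Finite.of_injective (β := Σ l : ι → Fin (n + 1), ∀ i, {y // w i y = l i})
    (fun x ↦ ⟨fun i ↦ ⟨w i (x.1 i), hle x.1 x.2 i⟩, fun i ↦ ⟨x.1 i, rfl⟩⟩) fun x y h ↦ ?_
  exact Subtype.ext (congrArg (fun z : Σ l : ι → Fin (n + 1), ∀ i, {y // w i y = l i} ↦
    fun i ↦ (z.2 i).1) h)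

theorem gfw_pi [Fintype ι] {A : ι → Type} (w : ∀ i, A i → ℕ)
    (hw : ∀ i n, Finite {x // w i x = n}) :
    gfw (fun x : ∀ i, A i ↦ ∑ i, w i (x i)) = ∏ i, gfw (w i) := by
  classical
  ext n
  rw [gfw, coeff_mk, coeff_prod]
  let e : {x : ∀ i, A i // ∑ i, w i (x i) = n} ≃
      Σ l : Finset.finsuppAntidiag (Finset.univ : Finset ι) n, ∀ i, {y // w i y = l.1 i} :=
    { toFun := fun x ↦ ⟨⟨Finsupp.equivFunOnFinite.symm fun i ↦ w i (x.1 i), by simpa using x.2⟩,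
        fun i ↦ ⟨x.1 i, rfl⟩⟩
      invFun := fun x ↦ ⟨fun i ↦ (x.2 i).1, by
        have := (Finset.mem_finsuppAntidiag.1 x.1.2).1
        exact (Finset.sum_congr rfl fun i _ ↦ (x.2 i).2).trans this⟩
      left_inv := fun _ ↦ rfl
      right_inv := by
        rintro ⟨⟨l, hl⟩, x⟩
        obtain ⟨y, hy, rfl⟩ : ∃ (y : ∀ i, A i) (hy : ∀ i, w i (y i) = l i),
          x = fun i ↦ ⟨y i, hy i⟩ := ⟨fun i ↦ (x i).1, fun i ↦ (x i).2, rfl⟩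
        obtain rfl : (Finsupp.equivFunOnFinite.symm fun i ↦ w i (y i)) = l := by
          ext i
          exact hy i
        rfl }
  rw [Nat.card_congr e, Nat.card_sigma, Nat.cast_sum,
    ← Finset.sum_coe_sort (Finset.finsuppAntidiag (Finset.univ : Finset ι) n)]
  refine Finset.sum_congr rfl fun l _ ↦ ?_
  rw [Nat.card_pi, Nat.cast_prod]
  simp [gfw]

theorem gfw_prod (w : α → ℕ) (w' : β → ℕ) (hw : ∀ n, Finite {x // w x = n})
    (hw' : ∀ n, Finite {x // w' x = n}) :
    gfw (fun x : α × β ↦ w x.1 + w' x.2) = gfw w * gfw w' := by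
  ext n
  rw [gfw, coeff_mk, coeff_mul]
  let e : {x : α × β // w x.1 + w' x.2 = n} ≃
      Σ l : Finset.HasAntidiagonal.antidiagonal n, {x // w x = l.1.1} × {x // w' x = l.1.2} :=
    { toFun := fun x ↦ ⟨⟨(w x.1.1, w' x.1.2), by simpa using x.2⟩, ⟨x.1.1, rfl⟩, ⟨x.1.2, rfl⟩⟩
      invFun := fun x ↦ ⟨(x.2.1.1, x.2.2.1), by
        rw [x.2.1.2, x.2.2.2]
        exact Finset.HasAntidiagonal.mem_antidiagonal.1 x.1.2⟩
      left_inv := fun _ ↦ rfl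
      right_inv := by
        rintro ⟨⟨⟨i, j⟩, hl⟩, ⟨x, hx⟩, ⟨y, hy⟩⟩
        obtain rfl : w x = i := hx
        obtain rfl : w' y = j := hy
        rfl }
  rw [Nat.card_congr e, Nat.card_sigma, Nat.cast_sum,
    ← Finset.sum_coe_sort (Finset.HasAntidiagonal.antidiagonal n)]
  refine Finset.sum_congr rfl fun l _ ↦ ?_
  rw [Nat.card_prod]
  simp [gfw]

theorem isAlgebraic_gfw_of_finite [Finite α] (w : α → ℕ) : IsAlgebraic (Polynomial ℚ) (gfw w) := by
  classical
  have := Fintype.ofFinite α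
  have : gfw w = algebraMap (Polynomial ℚ) ℚ⟦X⟧ (∑ x, Polynomial.X ^ w x) := by
    ext n
    have h : coeff n (algebraMap (Polynomial ℚ) ℚ⟦X⟧ (∑ x, Polynomial.X ^ w x)) =
      (∑ x, Polynomial.X ^ w x : Polynomial ℚ).coeff n := Polynomial.coeff_coe _ _
    rw [h, Polynomial.finsetSum_coeff]
    simp [gfw, Polynomial.coeff_X_pow, Fintype.card_subtype, eq_comm]
  rw [this]
  exact isAlgebraic_algebraMap _

end PowerSeries

open PowerSeries

namespace SPerm

variable {D : Set SPerm} {N : ℕ}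

theorem finite_weight_eq {P : SPerm → Prop} {w : {p // P p} → ℕ} (h : ∀ x, x.1.1 ≤ w x) (n : ℕ) :
    Finite {x // w x = n} :=
  have := (finite_size_le n).to_subtype
  Finite.of_injective
    (fun x : {x // w x = n} ↦ (⟨x.1.1, (h x.1).trans_eq x.2⟩ : {p : SPerm | p.1 ≤ n}))
    fun _ _ h ↦ Subtype.ext (Subtype.ext (congrArg Subtype.val h :))

/-- The nonempty members of `D` of colour `t`. -/
abbrev Colored (D : Set SPerm) (N : ℕ) (t : Color N) : Type :=
  {p : SPerm // p ∈ D ∧ 0 < p.1 ∧ color N p = t}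

/-- A simple member of `D` with a colour for each of its entries. -/
abbrev Rule (D : Set SPerm) (N : ℕ) : Type :=
  Σ σ : {p ∈ D | p.biOrd.Simple}, Fin σ.1.1 → Color N

/-- `p` is the canonical inflation of a simple permutation by blocks of given colours. -/
def Rule.Holds (r : Rule D N) (p : SPerm) : Prop :=
  ∃ a, Canon r.1.1.2 a ∧ (∀ i, color N (a i) = r.2 i) ∧ inflate r.1.1.2 a = p

theorem Rule.Holds.two_le {r : Rule D N} {p : SPerm} (h : r.Holds p) : 2 ≤ p.1 := by
  obtain ⟨a, ha, -, rfl⟩ := h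
  exact ha.two_le_size

theorem Rule.Holds.unique {r r' : Rule D N} {p : SPerm} (h : r.Holds p) (h' : r'.Holds p) :
    r = r' := by
  obtain ⟨⟨⟨k, s⟩, hσ⟩, c⟩ := r
  obtain ⟨⟨⟨k', s'⟩, hσ'⟩, c'⟩ := r'
  obtain ⟨a, ha, hc, rfl⟩ := h
  obtain ⟨a', ha', hc', he⟩ := h'
  cases ha.unique ha' he.symm
  obtain rfl : c = c' := funext fun i ↦ (hc i).symm.trans (hc' i)
  rfl

theorem IsFinSimpleClass.exists_holds (hD : IsFinSimpleClass D) {p : SPerm} (hp : p ∈ D)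
    (h2 : 2 ≤ p.1) : ∃ r : Rule D N, r.Holds p := by
  obtain ⟨k, s, a, ha, rfl⟩ := exists_canon p h2
  exact ⟨⟨⟨⟨k, s⟩, hD.down (sub_inflate s a ha.pos) hp, ha.simple⟩, fun i ↦ color N (a i)⟩,
    a, ha, fun _ ↦ rfl, rfl⟩

/-- A rule which produces a permutation of colour `t` maps blocks bijectively to permutations. -/
noncomputable def IsColored.ruleEquiv (hD : IsColored D N) {t : Color N} {r : Rule D N}
    (p : {p : Colored D N t // r.Holds p.1}) :
    (∀ i, Colored D N (r.2 i)) ≃ {p : Colored D N t // r.Holds p.1} := by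
  have key (x : ∀ i, Colored D N (r.2 i)) : Canon r.1.1.2 (fun i ↦ (x i).1) ∧
      inflate r.1.1.2 (fun i ↦ (x i).1) ∈ D ∧
      color N (inflate r.1.1.2 fun i ↦ (x i).1) = t := by
    obtain ⟨⟨-, hp, -, rfl⟩, a, ha, hc, rfl⟩ := p
    have hx (i) : color N (a i) = color N (x i).1 := (hc i).trans (x i).2.2.2.symm
    have hcan := ha.of_color hx fun i ↦ (x i).2.2.1
    exact ⟨hcan, hD.inflate_mem ha.pos hx hp fun i ↦ (x i).2.1, (ha.color_inflate hcan hx).symm⟩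
  refine Equiv.ofBijective (fun x ↦ ⟨⟨inflate r.1.1.2 fun i ↦ (x i).1, (key x).2.1,
    two_pos.trans_le (key x).1.two_le_size, (key x).2.2⟩, _, (key x).1, fun i ↦ (x i).2.2.2, rfl⟩)
    ⟨fun x y h ↦ ?_, ?_⟩
  · have := (key x).1.unique (key y).1 (congrArg (fun z ↦ z.1.1) h)
    simp only [Sigma.mk.injEq, heq_eq_eq, Prod.mk.injEq, true_and] at this
    exact funext fun i ↦ Subtype.ext (congrFun this i)
  · rintro ⟨⟨p, hp, hp0, ht⟩, h⟩
    obtain ⟨a, ha, hc, rfl⟩ := id h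
    exact ⟨fun i ↦ ⟨a i, hD.down (component_sub_inflate _ _ i) hp, ha.pos i, hc i⟩, rfl⟩

theorem IsColored.ruleEquiv_fst (hD : IsColored D N) {t : Color N} {r : Rule D N}
    (p : {p : Colored D N t // r.Holds p.1}) (x : ∀ i, Colored D N (r.2 i)) :
    (hD.ruleEquiv p x).1.1 = inflate r.1.1.2 fun i ↦ (x i).1 := rfl

theorem IsFinSimpleClass.finite_rule (hD : IsFinSimpleClass D) : Finite (Rule D N) :=
  have := hD.fin.to_subtype
  inferInstance

/-- The generating function of the permutations of a given colour, in `x ^ 2`. -/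
noncomputable def coloredGf (D : Set SPerm) (N : ℕ) (t : Color N) : ℚ⟦X⟧ :=
  gfw fun p : Colored D N t ↦ 2 * p.1.1

theorem constantCoeff_coloredGf (t : Color N) : constantCoeff (coloredGf D N t) = 0 :=
  constantCoeff_gfw fun p ↦ by have := p.2.2.1; omega

theorem finite_colored (t : Color N) (n : ℕ) : Finite {p : Colored D N t // 2 * p.1.1 = n} :=
  finite_weight_eq (w := fun p : Colored D N t ↦ 2 * p.1.1) (fun p ↦ by omega) n

theorem finite_size_one {α : Type} (f : α → SPerm) (hf : Function.Injective f) :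
    Finite {x // (f x).1 = 1} :=
  have := (finite_size_le 1).to_subtype
  Finite.of_injective
    (fun x : {x // (f x).1 = 1} ↦ (⟨f x.1, x.2.le⟩ : {p : SPerm | p.1 ≤ 1}))
    fun _ _ h ↦ Subtype.ext (hf (congrArg Subtype.val h :))

open Classical in
theorem IsColored.isAlgebraic_coloredGf (hD : IsColored D N) (t : Color N) :
    IsAlgebraic (Polynomial ℚ) (coloredGf D N t) := by
  have := hD.finite_rule (N := N)
  have := Fintype.ofFinite (Rule D N)
  have := Fintype.ofFinite (Color N)
  let Cond (o : Option (Rule D N)) (p : SPerm) : Prop := o.elim (p.1 = 1) fun r ↦ r.Holds p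
  have hCond {p : SPerm} (hp : p ∈ D) (hp0 : 0 < p.1) : ∃! o, Cond o p := by
    by_cases h1 : p.1 = 1
    · refine ⟨none, h1, ?_⟩
      rintro (_ | r) hr
      · rfl
      · have := Rule.Holds.two_le hr
        omega
    · obtain ⟨r, hr⟩ := hD.exists_holds (N := N) hp (by omega)
      refine ⟨some r, hr, ?_⟩
      rintro (_ | r') hr'
      · exact absurd hr' h1
      · exact congrArg some (Rule.Holds.unique hr' hr)
  refine isAlgebraic_of_system (coloredGf D N) constantCoeff_coloredGf (O := fun _ ↦ Rule D N)
    (I := fun _ r ↦ Fin r.1.1.1) (fun _ r ↦ r.2)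
    (fun t ↦ gfw fun p : {p : Colored D N t // p.1.1 = 1} ↦ 2 * p.1.1.1)
    (fun t r ↦ if Nonempty {p : Colored D N t // r.Holds p.1} then 1 else 0) (fun t ↦ ?_)
    (fun t r ↦ ?_) (fun t r ↦ ?_) (fun t ↦ ?_) t
  · have := finite_size_one (fun p : Colored D N t ↦ p.1) Subtype.val_injective
    exact isAlgebraic_gfw_of_finite _
  · split_ifs
    · exact isAlgebraic_one
    · exact isAlgebraic_zero
  · split_ifs with h
    · obtain ⟨-, a, ha, -⟩ := h
      refine Or.inl ?_
      have := ha.two_le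
      rw [Fintype.card_fin]
      omega
    · exact Or.inr (map_zero _)
  · rw [coloredGf, gfw_eq_sum _ (finite_colored t) (fun o (p : Colored D N t) ↦ Cond o p.1)
      fun p ↦ hCond p.2.1 p.2.2.1, Fintype.sum_option]
    refine congrArg₂ _ rfl (Finset.sum_congr rfl fun r _ ↦ ?_)
    split_ifs with h
    · obtain ⟨p⟩ := h
      rw [one_mul]
      refine Eq.trans ?_ (gfw_pi (fun (i : Fin r.1.1.1) (p : Colored D N (r.2 i)) ↦ 2 * p.1.1)
        fun i ↦ finite_colored _)
      refine (gfw_congr (hD.ruleEquiv p) fun x ↦ ?_).symm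
      rw [hD.ruleEquiv_fst, inflate_fst, Finset.mul_sum]
    · rw [zero_mul]
      have : IsEmpty {p : Colored D N t // Cond (some r) p.1} := not_nonempty_iff.1 h
      exact gfw_of_isEmpty _

end SPerm

open PowerSeries

namespace SPerm

variable {D : Set SPerm} {N : ℕ}

theorem sum_eq_of_involutive {k : ℕ} {s : Perm k} (hs : ∀ i, s (s i) = i) {f : Fin k → ℕ}
    (hf : ∀ i, f (s i) = f i) :
    ∑ i, f i = ∑ i : {i // s i = i}, f i + ∑ i : {i // i < s i}, 2 * f i := by
  have h (p : Fin k → Prop) [DecidablePred p] (g : Fin k → ℕ) :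
      ∑ i : {i // p i}, g i = ∑ i, if p i then g i else 0 := by
    rw [← Finset.sum_filter]
    exact (Finset.sum_subtype _ (by simp) _).symm
  have h' : (∑ i, if s i < i then f i else 0) = ∑ i, if i < s i then f i else 0 := by
    rw [← Equiv.sum_comp s]
    simp only [hs, hf]
  rw [h, h _ fun i ↦ 2 * f i]
  calc ∑ i, f i = ∑ i, ((if s i = i then f i else 0) + ((if i < s i then f i else 0) +
        if s i < i then f i else 0)) := Finset.sum_congr rfl fun i _ ↦ by
          rcases lt_trichotomy (s i) i with h | h | h
          · simp [h, h.ne, h.not_gt]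
          · simp [h]
          · simp [h, h.ne', h.not_gt]
    _ = _ := by
      rw [Finset.sum_add_distrib, Finset.sum_add_distrib, h', ← two_mul, Finset.mul_sum]
      simp

/-- A symmetric sequence of permutations is determined by its restriction to a half. -/
theorem exists_symm {k : ℕ} {s : Perm k} (hs : ∀ i, s (s i) = i) (x : {i // s i = i} → SPerm)
    (hx : ∀ i, (x i).inv = x i) (y : {i // i < s i} → SPerm) :
    ∃ a : Fin k → SPerm, (∀ i, a (s i) = (a i).inv) ∧ (∀ i : {i // s i = i}, a i = x i) ∧
      ∀ i : {i // i < s i}, a i = y i := by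
  have hlt {i : Fin k} (h : s i < i) : s i < s (s i) := by rwa [hs]
  refine ⟨fun i ↦ if h : s i = i then x ⟨i, h⟩ else if h' : i < s i then y ⟨i, h'⟩ else
    (y ⟨s i, hlt (lt_of_le_of_ne (not_lt.1 h') h)⟩).inv, fun i ↦ ?_, fun i ↦ ?_, fun i ↦ ?_⟩
  · rcases lt_trichotomy (s i) i with h | h | h
    · simp [h, h.ne, h.ne', h.not_gt, hs, inv_inv]
    · simp [h, hx]
    · simp [h, h.ne, h.ne', h.not_gt, hs]
  · simp [i.2]
  · simp [i.2, i.2.ne']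

/-- The nonempty involutions of `D` of colour `t`. -/
abbrev InvColored (D : Set SPerm) (N : ℕ) (t : Color N) : Type :=
  {p : SPerm // (p ∈ D ∧ 0 < p.1 ∧ color N p = t) ∧ p.inv = p}

/-- `p` is the canonical inflation of a simple permutation other than `21`. -/
def Rule.HoldsInv (r : Rule D N) (p : SPerm) : Prop :=
  r.1.1 ≠ ⟨2, skewPerm⟩ ∧ r.Holds p

theorem Rule.HoldsInv.involutive {r : Rule D N} {p : SPerm} (h : r.HoldsInv p) (hp : p.inv = p)
    (i : Fin r.1.1.1) : r.1.1.2 (r.1.1.2 i) = i := by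
  obtain ⟨h2, a, ha, -, rfl⟩ := h
  have := (ha.symm_of_inv_eq h2 hp).1
  exact Equiv.Perm.inv_eq_iff_eq.1 (by rw [this]) |>.symm

/-- A rule other than `21` maps symmetric sequences of blocks bijectively to involutions. -/
noncomputable def IsColored.invRuleEquiv (hD : IsColored D N) {t : Color N} {r : Rule D N}
    (p : {p : InvColored D N t // r.HoldsInv p.1}) :
    {a : ∀ i, Colored D N (r.2 i) // ∀ i, (a (r.1.1.2 i)).1 = (a i).1.inv} ≃
      {p : InvColored D N t // r.HoldsInv p.1} := by
  let p' : {p : Colored D N t // r.Holds p.1} := ⟨⟨p.1.1, p.1.2.1⟩, p.2.2⟩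
  have hs : r.1.1.2⁻¹ = r.1.1.2 := by
    obtain ⟨p, h2, a, ha, -, h⟩ := p
    exact (ha.symm_of_inv_eq h2 (by rw [h]; exact p.2.2)).1
  refine Equiv.ofBijective (fun a ↦ ⟨⟨(hD.ruleEquiv p' a.1).1.1, (hD.ruleEquiv p' a.1).1.2,
    inv_inflate_eq hs a.2⟩, p.2.1, (hD.ruleEquiv p' a.1).2⟩) ⟨fun a b h ↦ ?_, fun q ↦ ?_⟩
  · exact Subtype.ext ((hD.ruleEquiv p').injective
      (Subtype.ext (Subtype.ext (congrArg (fun z ↦ z.1.1) h))))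
  · obtain ⟨h2, a, ha, hc, h⟩ := q.2
    exact ⟨⟨fun i ↦ ⟨a i, hD.down (component_sub_inflate _ a i) (h ▸ q.1.2.1.1), ha.pos i, hc i⟩,
      (ha.symm_of_inv_eq h2 (by rw [h]; exact q.1.2.2)).2⟩, Subtype.ext (Subtype.ext h)⟩

/-- Symmetric sequences of blocks are determined by a half. -/
noncomputable def IsColored.symmEquiv (hD : IsColored D N) {k : ℕ} {s : Perm k}
    (hs : ∀ i, s (s i) = i) {c : Fin k → Color N}
    (hc : ∀ i p, color N p = c i → color N p.inv = c (s i)) :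
    {a : ∀ i, Colored D N (c i) // ∀ i, (a (s i)).1 = (a i).1.inv} ≃
      (∀ i : {i // s i = i}, InvColored D N (c i)) × ∀ i : {i // i < s i}, Colored D N (c i) := by
  refine Equiv.ofBijective (fun a ↦ ⟨fun i ↦ ⟨(a.1 i).1, (a.1 i).2, ?_⟩, fun i ↦ a.1 i⟩)
    ⟨fun a b h ↦ ?_, fun ⟨x, y⟩ ↦ ?_⟩
  · have := a.2 i
    rw [← this]
    exact congrArg (fun j ↦ (a.1 j).1) i.2
  · have h1 (i : {i // s i = i}) : (a.1 i).1 = (b.1 i).1 := congrArg (fun z ↦ (z.1 i).1) h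
    have h2 (i : {i // i < s i}) : (a.1 i).1 = (b.1 i).1 := congrArg (fun z ↦ (z.2 i).1) h
    have h3 {i j} (hij : s j = i) (h : (a.1 j).1 = (b.1 j).1) : (a.1 i).1 = (b.1 i).1 := by
      rw [← hij, a.2, b.2, h]
    refine Subtype.ext (funext fun i ↦ Subtype.ext ?_)
    rcases lt_trichotomy (s i) i with h | h | h
    · exact h3 (hs i) (h2 ⟨s i, by rwa [hs]⟩)
    · exact h1 ⟨i, h⟩
    · exact h2 ⟨i, h⟩
  · obtain ⟨a, ha, hx, hy⟩ := exists_symm hs (fun i ↦ (x i).1) (fun i ↦ (x i).2.2) fun i ↦ (y i).1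
    have hmem (i) : a i ∈ D ∧ 0 < (a i).1 ∧ color N (a i) = c i := by
      rcases lt_trichotomy (s i) i with h | h | h
      · have h' := hy ⟨s i, by rwa [hs]⟩
        have h3 := (y ⟨s i, by rwa [hs]⟩).2
        rw [← h'] at h3
        have := ha (s i)
        rw [hs] at this
        rw [this]
        refine ⟨hD.inv h3.1, h3.2.1, ?_⟩
        rw [hc _ _ h3.2.2]
        simp only [hs]
      · have h' := hx ⟨i, h⟩
        rw [h']
        exact (x ⟨i, h⟩).2.1
      · have h' := hy ⟨i, h⟩
        rw [h']
        exact (y ⟨i, h⟩).2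
    refine ⟨⟨fun i ↦ ⟨a i, hmem i⟩, ha⟩, Prod.ext ?_ ?_⟩
    · exact funext fun i ↦ Subtype.ext (hx i)
    · exact funext fun i ↦ Subtype.ext (hy i)

end SPerm

open PowerSeries

namespace SPerm

variable {D : Set SPerm} {N : ℕ}

theorem Rule.HoldsInv.skIndec {r : Rule D N} {p : SPerm} (h : r.HoldsInv p) : p.SkIndec := by
  obtain ⟨h2, a, ha, -, rfl⟩ := h
  exact fun hd ↦ h2 (ha.dec_iff.1 hd)

theorem not_skIndec_sk {a b : SPerm} (ha : 0 < a.1) (hb : 0 < b.1) : ¬ (sk a b).SkIndec :=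
  fun h ↦ h (dec_sk ha hb)

theorem size_sk_pos {a b : SPerm} (ha : 0 < a.1) : 0 < (sk a b).1 :=
  (sk_fst a b).symm ▸ Nat.add_pos_left ha _

/-- The kinds of decompositions of involutions. -/
inductive InvRule (D : Set SPerm) (N : ℕ) : Type
  | atom
  | simple (r : Rule D N)
  | pair (c : Color N)
  | triple (c d : Color N)

/-- `p` has a decomposition of the given kind. -/
def InvRule.Holds : InvRule D N → SPerm → Prop
  | atom, p => p.1 = 1
  | simple r, p => r.HoldsInv p
  | pair c, p => ∃ a : SPerm, a.SkIndec ∧ 0 < a.1 ∧ color N a = c ∧ sk a a.inv = p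
  | triple c d, p => ∃ a m : SPerm, a.SkIndec ∧ 0 < a.1 ∧ color N a = c ∧
      0 < m.1 ∧ m.inv = m ∧ color N m = d ∧ sk a (sk m a.inv) = p

theorem IsFinSimpleClass.exists_invRule (hD : IsFinSimpleClass D) {p : SPerm} (hp : p ∈ D)
    (hp0 : 0 < p.1) (hi : p.inv = p) : ∃ o : InvRule D N, o.Holds p := by
  by_cases h1 : p.1 = 1
  · exact ⟨.atom, h1⟩
  by_cases h : p.SkIndec
  · obtain ⟨r, hr⟩ := hD.exists_holds (N := N) hp (by omega)
    refine ⟨.simple r, fun h2 ↦ ?_, hr⟩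
    obtain ⟨a, ha, -, rfl⟩ := hr
    exact h (ha.dec_iff.2 h2)
  · obtain ⟨a, ha, ha0, rfl | ⟨m, hm0, hm, rfl⟩⟩ := exists_sk_of_inv_eq hi h
    · exact ⟨.pair _, a, ha, ha0, rfl, rfl⟩
    · exact ⟨.triple _ _, a, m, ha, ha0, rfl, hm0, hm, rfl, rfl⟩

theorem sk_sk_inj {a m a' m' : SPerm} (ha : a.SkIndec) (ha0 : 0 < a.1) (hm0 : 0 < m.1)
    (hm : m.inv = m) (ha' : a'.SkIndec) (ha0' : 0 < a'.1) (hm0' : 0 < m'.1) (hm' : m'.inv = m')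
    (h : sk a (sk m a.inv) = sk a' (sk m' a'.inv)) : a = a' ∧ m = m' := by
  obtain ⟨rfl, h⟩ := sk_inj ha ha' ha0 (size_sk_pos hm0) ha0' (size_sk_pos hm0') h
  have := congrArg inv h
  rw [inv_sk, inv_sk, inv_inv, hm, hm'] at this
  exact ⟨rfl, (sk_inj ha ha ha0 hm0 ha0 hm0' this).2⟩

theorem sk_ne_sk_sk {a m a' : SPerm} (ha : a.SkIndec) (ha0 : 0 < a.1) (hm0 : 0 < m.1)
    (ha' : a'.SkIndec) (ha0' : 0 < a'.1) : sk a' a'.inv ≠ sk a (sk m a.inv) := fun h ↦ by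
  obtain ⟨rfl, h⟩ := sk_inj ha' ha ha0' (b := a'.inv) ha0' ha0 (size_sk_pos hm0) h
  exact not_skIndec_sk hm0 (b := inv a') ha0 (h ▸ ha.inv)

theorem InvRule.Holds.unique {o o' : InvRule D N} {p : SPerm} (h : o.Holds p) (h' : o'.Holds p) :
    o = o' := by
  have hle {a b : SPerm} (ha : 0 < a.1) (hb : 0 < b.1) : (sk a b).1 ≠ 1 := by
    rw [sk_fst]
    omega
  cases o <;> cases o'
  · rfl
  · exact absurd h (Nat.ne_of_gt (Rule.Holds.two_le h'.2))
  · obtain ⟨a, ha, ha0, hc, rfl⟩ := h'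
    exact absurd h (hle ha0 ha0)
  · obtain ⟨a, m, ha, ha0, hc, hm0, hm, hd, rfl⟩ := h'
    exact absurd h (hle ha0 (size_sk_pos hm0))
  · exact absurd h' (Nat.ne_of_gt (Rule.Holds.two_le h.2))
  · exact congrArg _ (Rule.Holds.unique h.2 h'.2)
  · obtain ⟨a, ha, ha0, hc, rfl⟩ := h'
    exact absurd (Rule.HoldsInv.skIndec h) (not_skIndec_sk ha0 ha0)
  · obtain ⟨a, m, ha, ha0, hc, hm0, hm, hd, rfl⟩ := h'
    exact absurd (Rule.HoldsInv.skIndec h) (not_skIndec_sk ha0 (size_sk_pos hm0))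
  · obtain ⟨a, ha, ha0, hc, rfl⟩ := h
    exact absurd h' (hle ha0 ha0)
  · obtain ⟨a, ha, ha0, hc, rfl⟩ := h
    exact absurd (Rule.HoldsInv.skIndec h') (not_skIndec_sk ha0 ha0)
  · obtain ⟨a, ha, ha0, rfl, rfl⟩ := h
    obtain ⟨a', ha', ha0', rfl, h'⟩ := h'
    rw [(sk_inj (b := a'.inv) (b' := a.inv) ha' ha ha0' ha0' ha0 ha0 h').1]
  · obtain ⟨a, ha, ha0, hc, rfl⟩ := h
    obtain ⟨a', m', ha', ha0', hc', hm0', hm', hd', h'⟩ := h'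
    exact absurd h'.symm (sk_ne_sk_sk ha' ha0' hm0' ha ha0)
  · obtain ⟨a, m, ha, ha0, hc, hm0, hm, hd, rfl⟩ := h
    exact absurd h' (hle ha0 (size_sk_pos hm0))
  · obtain ⟨a, m, ha, ha0, hc, hm0, hm, hd, rfl⟩ := h
    exact absurd (Rule.HoldsInv.skIndec h') (not_skIndec_sk ha0 (size_sk_pos hm0))
  · obtain ⟨a', m', ha', ha0', hc', hm0', hm', hd', rfl⟩ := h
    obtain ⟨a, ha, ha0, hc, h'⟩ := h'
    exact absurd h' (sk_ne_sk_sk ha' ha0' hm0' ha ha0)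
  · obtain ⟨a, m, ha, ha0, rfl, hm0, hm, rfl, rfl⟩ := h
    obtain ⟨a', m', ha', ha0', rfl, hm0', hm', rfl, h'⟩ := h'
    obtain ⟨rfl, rfl⟩ := sk_sk_inj ha' ha0' hm0' hm' ha ha0 hm0 hm h'
    rfl

theorem IsFinSimpleClass.finite_invRule (hD : IsFinSimpleClass D) : Finite (InvRule D N) := by
  have := hD.finite_rule (N := N)
  let f : Unit ⊕ Rule D N ⊕ Color N ⊕ Color N × Color N → InvRule D N :=
    Sum.elim (fun _ ↦ .atom) (Sum.elim .simple (Sum.elim .pair fun x ↦ .triple x.1 x.2))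
  refine Finite.of_surjective f ?_
  rintro (_ | r | c | ⟨c, d⟩)
  · exact ⟨.inl (), rfl⟩
  · exact ⟨.inr (.inl r), rfl⟩
  · exact ⟨.inr (.inr (.inl c)), rfl⟩
  · exact ⟨.inr (.inr (.inr (c, d))), rfl⟩

/-- The involutions `a ⊖ a⁻¹` correspond to their first blocks. -/
noncomputable def IsColored.pairEquiv (hD : IsColored D N) {t c : Color N}
    (p : {p : InvColored D N t // (InvRule.pair c : InvRule D N).Holds p.1}) :
    Colored D N c ≃ {p : InvColored D N t // (InvRule.pair c : InvRule D N).Holds p.1} := by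
  have key (x : Colored D N c) : x.1.SkIndec ∧ sk x.1 x.1.inv ∈ D ∧
      color N (sk x.1 x.1.inv) = t := by
    obtain ⟨⟨-, ⟨hp, -, rfl⟩, -⟩, a, ha, ha0, hc, rfl⟩ := p
    have hx : color N a = color N x.1 := hc.trans x.2.2.2.symm
    exact ⟨ha.of_color_eq hx, hD.sk_mem (b := a.inv) hx (color_inv hx) ha0 ha0 hp x.2.1
      (hD.inv x.2.1), (color_sk (b := a.inv) (b' := x.1.inv) hx (color_inv hx) ha0 ha0 x.2.2.1
        x.2.2.1).symm⟩
  refine Equiv.ofBijective (fun x ↦ ⟨⟨sk x.1 x.1.inv, ⟨(key x).2.1, size_sk_pos x.2.2.1,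
    (key x).2.2⟩, by rw [inv_sk, inv_inv]⟩, x.1, (key x).1, x.2.2.1, x.2.2.2, rfl⟩)
    ⟨fun x y h ↦ ?_, fun q ↦ ?_⟩
  · exact Subtype.ext (sk_inj (b := x.1.inv) (b' := y.1.inv) (key x).1 (key y).1 x.2.2.1 x.2.2.1
      y.2.2.1 y.2.2.1 (congrArg (fun z ↦ z.1.1) h)).1
  · obtain ⟨a, ha, ha0, hc, h⟩ := q.2
    exact ⟨⟨a, hD.down (h ▸ sub_sk_left a a.inv) q.1.2.1.1, ha0, hc⟩, Subtype.ext (Subtype.ext h)⟩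

/-- The involutions `a ⊖ m ⊖ a⁻¹` correspond to their first two blocks. -/
noncomputable def IsColored.tripleEquiv (hD : IsColored D N) {t c d : Color N}
    (p : {p : InvColored D N t // (InvRule.triple c d : InvRule D N).Holds p.1}) :
    Colored D N c × InvColored D N d ≃
      {p : InvColored D N t // (InvRule.triple c d : InvRule D N).Holds p.1} := by
  have key (x : Colored D N c × InvColored D N d) : x.1.1.SkIndec ∧
      sk x.1.1 (sk x.2.1 x.1.1.inv) ∈ D ∧ color N (sk x.1.1 (sk x.2.1 x.1.1.inv)) = t := by
    obtain ⟨⟨-, ⟨hp, -, rfl⟩, -⟩, a, m, ha, ha0, hc, hm0, hm, hd, rfl⟩ := p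
    have hx : color N a = color N x.1.1 := hc.trans x.1.2.2.2.symm
    have hy : color N m = color N x.2.1 := hd.trans x.2.2.1.2.2.symm
    have hxy := color_sk (b := a.inv) (b' := x.1.1.inv) hy (color_inv hx) hm0 ha0 x.2.2.1.2.1
      x.1.2.2.1
    have hmem : sk x.2.1 x.1.1.inv ∈ D := hD.sk_mem (b := a.inv) hy (color_inv hx) hm0 ha0
      (hD.down (sub_sk_right _ _) hp) x.2.2.1.1 (hD.inv x.1.2.1)
    exact ⟨ha.of_color_eq hx, hD.sk_mem hx hxy ha0 (size_sk_pos hm0) hp x.1.2.1 hmem,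
      (color_sk hx hxy ha0 (size_sk_pos hm0) x.1.2.2.1 (size_sk_pos x.2.2.1.2.1)).symm⟩
  refine Equiv.ofBijective (fun x ↦ ⟨⟨sk x.1.1 (sk x.2.1 x.1.1.inv), ⟨(key x).2.1,
    size_sk_pos x.1.2.2.1, (key x).2.2⟩, by rw [inv_sk, inv_sk, inv_inv, x.2.2.2, sk_assoc]⟩,
    x.1.1, x.2.1, (key x).1, x.1.2.2.1, x.1.2.2.2, x.2.2.1.2.1, x.2.2.2, x.2.2.1.2.2, rfl⟩)
    ⟨fun x y h ↦ ?_, fun q ↦ ?_⟩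
  · obtain ⟨h1, h2⟩ := sk_sk_inj (key x).1 x.1.2.2.1 x.2.2.1.2.1 x.2.2.2 (key y).1 y.1.2.2.1
      y.2.2.1.2.1 y.2.2.2 (congrArg (fun z ↦ z.1.1) h)
    exact Prod.ext (Subtype.ext h1) (Subtype.ext h2)
  · obtain ⟨a, m, ha, ha0, hc, hm0, hm, hd, h⟩ := q.2
    have hmem := q.1.2.1.1
    rw [← h] at hmem
    exact ⟨⟨⟨a, hD.down (sub_sk_left _ _) hmem, ha0, hc⟩,
      ⟨m, ⟨hD.down ((sub_sk_left _ _).trans (sub_sk_right _ _)) hmem, hm0, hd⟩, hm⟩⟩,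
      Subtype.ext (Subtype.ext h)⟩

/-- The generating function of the involutions of a given colour. -/
noncomputable def invGf (D : Set SPerm) (N : ℕ) (t : Color N) : ℚ⟦X⟧ :=
  gfw fun p : InvColored D N t ↦ p.1.1

theorem constantCoeff_invGf (t : Color N) : constantCoeff (invGf D N t) = 0 :=
  constantCoeff_gfw fun p ↦ p.2.1.2.1

theorem finite_invColored (t : Color N) (n : ℕ) : Finite {p : InvColored D N t // p.1.1 = n} :=
  finite_weight_eq (w := fun p : InvColored D N t ↦ p.1.1) (fun _ ↦ le_rfl) n

/-- Each kind of decomposition contributes a monomial in the generating functions. -/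
theorem IsColored.exists_invGf_eq (hD : IsColored D N) (t : Color N) (o : InvRule D N) :
    ∃ (J : Type) (_ : Fintype J) (col : J → Color N) (s : ℚ⟦X⟧), IsAlgebraic (Polynomial ℚ) s ∧
      (Fintype.card J ≠ 1 ∨ constantCoeff s = 0) ∧
      gfw (fun p : {p : InvColored D N t // o.Holds p.1} ↦ p.1.1.1) =
        s * ∏ j, invGf D N (col j) := by
  rcases isEmpty_or_nonempty {p : InvColored D N t // o.Holds p.1} with he | ⟨⟨p⟩⟩
  · exact ⟨Empty, inferInstance, Empty.elim, 0, isAlgebraic_zero, .inr (map_zero _),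
      by rw [gfw_of_isEmpty, zero_mul]⟩
  cases o with
  | atom =>
    have : Finite {p : InvColored D N t // (InvRule.atom : InvRule D N).Holds p.1} :=
      finite_size_one (fun p : InvColored D N t ↦ p.1) Subtype.val_injective
    exact ⟨Empty, inferInstance, Empty.elim, _, isAlgebraic_gfw_of_finite _, .inl (by simp),
      by rw [Finset.univ_eq_empty, Finset.prod_empty, mul_one]⟩
  | simple r =>
    have hs := p.2.involutive p.1.2.2
    have hc : ∀ i q, color N q = r.2 i → color N q.inv = r.2 (r.1.1.2 i) := by
      obtain ⟨p, h2, a, ha, hc, h⟩ := p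
      intro i q hq
      rw [← hc, (ha.symm_of_inv_eq h2 (by rw [h]; exact p.2.2)).2]
      exact color_inv (hq.trans (hc i).symm)
    refine ⟨{i // r.1.1.2 i = i}, inferInstance, fun i ↦ r.2 i,
      ∏ i : {i // i < r.1.1.2 i}, coloredGf D N (r.2 i),
      Finset.prod_induction _ _ (fun _ _ ↦ IsAlgebraic.mul) isAlgebraic_one
        fun i _ ↦ hD.isAlgebraic_coloredGf _, ?_, ?_⟩
    · by_cases h : ∃ i, i < r.1.1.2 i
      · obtain ⟨i, hi⟩ := h
        refine .inr ?_
        rw [map_prod]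
        exact Finset.prod_eq_zero (Finset.mem_univ ⟨i, hi⟩) (constantCoeff_coloredGf _)
      · push Not at h
        have hfix (i) : r.1.1.2 i = i :=
          le_antisymm (h i) ((hs i).symm.trans_le (h _))
        obtain ⟨a, ha, -⟩ := p.2.2
        have := ha.two_le
        refine .inl ?_
        rw [Fintype.card_congr (Equiv.subtypeUnivEquiv hfix), Fintype.card_fin]
        omega
    · rw [mul_comm]
      have h1 := gfw_pi (fun (i : {i // r.1.1.2 i = i}) (p : InvColored D N (r.2 i)) ↦ p.1.1)
        fun i ↦ finite_invColored _
      have h2 := gfw_pi (fun (i : {i // i < r.1.1.2 i}) (p : Colored D N (r.2 i)) ↦ 2 * p.1.1)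
        fun i ↦ finite_colored _
      refine Eq.trans ?_ (congrArg₂ _ h1 h2)
      rw [← gfw_prod]
      · refine Eq.trans (b := gfw fun a : {a : ∀ i, Colored D N (r.2 i) //
          ∀ i, (a (r.1.1.2 i)).1 = (a i).1.inv} ↦ ∑ i, (a.1 i).1.1)
          (gfw_congr (hD.invRuleEquiv p) fun x ↦ ?_).symm
          (gfw_congr (hD.symmEquiv hs hc) fun x ↦ ?_)
        · exact inflate_fst _ _
        · exact (sum_eq_of_involutive (f := fun i ↦ (x.1 i).1.1) hs fun i ↦
            (congrArg Sigma.fst (x.2 i) :)).symm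
      · exact finite_sum_eq fun i ↦ finite_invColored _
      · exact finite_sum_eq fun i ↦ finite_colored _
  | pair c =>
    refine ⟨Empty, inferInstance, Empty.elim, coloredGf D N c, hD.isAlgebraic_coloredGf c,
      .inl (by simp), ?_⟩
    rw [Finset.univ_eq_empty, Finset.prod_empty, mul_one]
    refine (gfw_congr (hD.pairEquiv p) fun x ↦ ?_).symm
    refine (sk_fst _ _).trans (two_mul _).symm
  | triple c d =>
    refine ⟨Unit, inferInstance, fun _ ↦ d, coloredGf D N c, hD.isAlgebraic_coloredGf c,
      .inr (constantCoeff_coloredGf c), ?_⟩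
    rw [Finset.univ_unique, Finset.prod_singleton]
    refine Eq.trans ?_ (gfw_prod (fun p : Colored D N c ↦ 2 * p.1.1)
      (fun p : InvColored D N d ↦ p.1.1) (finite_colored c) (finite_invColored d))
    refine (gfw_congr (hD.tripleEquiv p) fun x ↦ ?_).symm
    refine (sk_fst _ _).trans ?_
    rw [sk_fst]
    change _ + (_ + x.1.1.1) = _
    omega

theorem IsColored.isAlgebraic_invGf (hD : IsColored D N) (t : Color N) :
    IsAlgebraic (Polynomial ℚ) (invGf D N t) := by
  have := hD.finite_invRule (N := N)
  have := Fintype.ofFinite (InvRule D N)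
  have := Fintype.ofFinite (Color N)
  choose J hJ col s hs hdeg heq using hD.exists_invGf_eq (N := N)
  refine isAlgebraic_of_system (invGf D N) constantCoeff_invGf col (fun _ ↦ 0) s
    (fun _ ↦ isAlgebraic_zero) hs hdeg (fun t ↦ ?_) t
  rw [zero_add, ← Finset.sum_congr rfl fun o _ ↦ heq t o]
  exact gfw_eq_sum _ (finite_invColored t) (fun (o : InvRule D N) (p : InvColored D N t) ↦
    o.Holds p.1) fun p ↦ by
      obtain ⟨o, ho⟩ := hD.exists_invRule (N := N) p.2.1.1 p.2.1.2.1 p.2.2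
      exact ⟨o, ho, fun o' ho' ↦ ho'.unique ho⟩

end SPerm

open SPerm in
/-- The generating function of the involutions of a class with finitely many simple permutations
is algebraic. -/
theorem isAlgebraic_genFun (C : ∀ n, Set (Perm n)) (hC : IsPermClass C)
    (hfin : FinitelyManySimples C) :
    IsAlgebraic (Polynomial ℚ) (genFun fun n => {π : Perm n | π ∈ C n ∧ π⁻¹ = π}) := by
  let D : Set SPerm := {p | p.2 ∈ C p.1 ∧ p.inv.2 ∈ C p.1}
  have hD : IsFinSimpleClass D :=
    { down := fun h hq ↦ ⟨hC _ _ hq.1 h.contains, hC _ _ hq.2 h.inv.contains⟩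
      fin := hfin.subset fun p hp ↦ ⟨hp.1.1, isSimple_of_simple hp.2⟩ }
  obtain ⟨N, hN⟩ := hD.exists_bound
  have hDN : IsColored D N :=
    { hD with
      inv := fun {p} hp ↦ ⟨hp.2, (congrArg (fun q : SPerm ↦ q.2 ∈ C q.1) p.inv_inv).mpr hp.1⟩
      bound := hN }
  have := Fintype.ofFinite (Color N)
  have h : (genFun fun n => {π : Perm n | π ∈ C n ∧ π⁻¹ = π}) = ∑ t, invGf D N t := by
    trans gfw fun p : {p : SPerm // (p ∈ D ∧ 0 < p.1) ∧ p.inv = p} ↦ p.1.1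
    · ext n
      rw [genFun, gfw, coeff_mk, coeff_mk]
      split_ifs with h0
      · subst h0
        have : IsEmpty {p : {p : SPerm // (p ∈ D ∧ 0 < p.1) ∧ p.inv = p} // p.1.1 = 0} :=
          ⟨fun p ↦ p.1.2.1.2.ne' p.2⟩
        simp
      · refine congrArg _ (Nat.card_congr (Equiv.ofBijective (fun π ↦ ⟨⟨⟨n, π.1⟩,
          ⟨⟨π.2.1, show π.1⁻¹ ∈ C n from π.2.2.symm ▸ π.2.1⟩, Nat.pos_of_ne_zero h0⟩,
          congrArg (Sigma.mk n) π.2.2⟩, rfl⟩) ⟨fun π π' h ↦ ?_, ?_⟩))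
        · simpa [Subtype.ext_iff] using h
        · rintro ⟨⟨⟨n, π⟩, ⟨hπ, -⟩, hi⟩, rfl⟩
          exact ⟨⟨π, hπ.1, by simpa [inv] using hi⟩, rfl⟩
    · rw [gfw_eq_sum _ (finite_weight_eq
        (w := fun p : {p : SPerm // (p ∈ D ∧ 0 < p.1) ∧ p.inv = p} ↦ p.1.1) fun _ ↦ le_rfl) (fun t p ↦ color N p.1 = t) fun p ↦ ⟨_, rfl, fun _ h ↦ h.symm⟩]
      refine Finset.sum_congr rfl fun t _ ↦ ?_
      let e : {p : {p : SPerm // (p ∈ D ∧ 0 < p.1) ∧ p.inv = p} // color N p.1 = t} ≃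
          InvColored D N t :=
        { toFun := fun p ↦ ⟨p.1.1, ⟨p.1.2.1.1, p.1.2.1.2, p.2⟩, p.1.2.2⟩
          invFun := fun p ↦ ⟨⟨p.1, ⟨p.2.1.1, p.2.1.2.1⟩, p.2.2⟩, p.2.1.2.2⟩
          left_inv := fun _ ↦ rfl
          right_inv := fun _ ↦ rfl }
      exact gfw_congr e fun _ ↦ rfl
  rw [h]
  exact Finset.sum_induction _ _ (fun _ _ ↦ IsAlgebraic.add) isAlgebraic_zero
    fun t _ ↦ hDN.isAlgebraic_invGf t

/-- If `C` is a permutation class containing only finitely many simple permutations,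
then the generating function of the set of involutions in `C` is algebraic over `ℚ[x]`. -/
theorem statement5 (C : ∀ n, Set (Perm n)) (hC : IsPermClass C)
    (hfin : FinitelyManySimples C) :
    IsAlgebraicOverQx (genFun fun n => {π : Perm n | π ∈ C n ∧ π⁻¹ = π}) :=
  isAlgebraic_genFun C hC hfin
end

section
/- Let C be a wreath-closed permutation class containing only finitely many simple permutations, let 𝒫 be a finite query-complete set of properties, and let 𝒬 ⊆ 𝒫. Then the generating function of the set of permutations in C that satisfy every property in 𝒬 is algebraic over ℚ[x]. -/
/-- `π` is the inflation `σ[α 0, …, α (m-1)]` of `σ` by the nonempty permutations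
`α i` (of lengths `k i ≥ 1`): `π` has length `∑ i, k i` and its value at position
`(∑_{t < i} k t) + j` equals `(∑_{t : σ t < σ i} k t) + α i j`. -/
def IsInflation {N m : ℕ} {k : Fin m → ℕ} (σ : Perm m) (α : ∀ i, Perm (k i))
    (π : Perm N) : Prop :=
  (∀ i, 0 < k i) ∧ N = ∑ i, k i ∧
    ∀ (i : Fin m) (j : Fin (k i)) (p : Fin N),
      (p : ℕ) = (∑ t ∈ Finset.univ.filter fun t => t < i, k t) + (j : ℕ) →
      (π p : ℕ) = (∑ t ∈ Finset.univ.filter fun t => σ t < σ i, k t) + (α i j : ℕ)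

/-- `C` is wreath-closed: any inflation of a member of `C` by members of `C`
lies in `C`. -/
def WreathClosed (C : ∀ n, Set (Perm n)) : Prop :=
  ∀ ⦃m N : ℕ⦄ (σ : Perm m) (k : Fin m → ℕ) (α : ∀ i, Perm (k i)) (π : Perm N),
    σ ∈ C m → (∀ i, α i ∈ C (k i)) → IsInflation σ α π → π ∈ C N

/-- A set `Ps` of properties (a property is a set of permutations) is query-complete:
whether an inflation `σ[α 0, …, α (m-1)]` satisfies a property `P ∈ Ps` depends only on
`σ` and on which properties of `Ps` each `α i` satisfies. -/
def QueryComplete (Ps : Set (∀ n, Set (Perm n))) : Prop :=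
  ∀ ⦃m : ℕ⦄ (σ : Perm m) (k k' : Fin m → ℕ)
    (α : ∀ i, Perm (k i)) (α' : ∀ i, Perm (k' i)),
    (∀ i : Fin m, ∀ Q ∈ Ps, α i ∈ Q (k i) ↔ α' i ∈ Q (k' i)) →
    ∀ P ∈ Ps, ∀ ⦃N N' : ℕ⦄ (π : Perm N) (π' : Perm N'),
      IsInflation σ α π → IsInflation σ α' π' → (π ∈ P N ↔ π' ∈ P N')

theorem Derivation.apply_aeval_mvPolynomial {ι R K E M : Type*} [Fintype ι] [CommRing R]
    [CommRing K] [CommRing E] [Algebra R K] [Algebra R E] [Algebra K E] [IsScalarTower R K E]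
    [AddCommGroup M] [Module K M] [Module E M]
    (d : Derivation K E M) (z : ι → E) (p : MvPolynomial ι R) :
    d (MvPolynomial.aeval z p) =
      ∑ j, MvPolynomial.aeval z (MvPolynomial.pderiv j p) • d (z j) := by
  classical
  induction p using MvPolynomial.induction_on with
  | C r =>
    simp [IsScalarTower.algebraMap_apply R K E]
  | add p q hp hq => simp [hp, hq, add_smul, Finset.sum_add_distrib]
  | mul_X p i hp =>
    simp only [map_mul, Derivation.leibniz, hp, MvPolynomial.aeval_X, Finset.smul_sum, map_add,
      MvPolynomial.pderiv_X, smul_eq_mul, add_smul, Finset.sum_add_distrib, mul_smul]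
    congr 1
    rw [Finset.sum_eq_single i]
    · simp
    · intro b _ hb
      simp [hb.symm]
    · simp

theorem Matrix.eq_zero_of_sum_smul_eq_zero {ι E M : Type*} [Fintype ι] [DecidableEq ι] [Field E]
    [AddCommGroup M] [Module E M] (J : Matrix ι ι E) (hJ : J.det ≠ 0) (v : ι → M)
    (h : ∀ i, ∑ j, J i j • v j = 0) (k : ι) : v k = 0 := by
  have h1 : ∑ i, J.adjugate k i • ∑ j, J i j • v j = J.det • v k := by
    simp_rw [Finset.smul_sum, smul_smul]
    rw [Finset.sum_comm]
    simp_rw [← Finset.sum_smul, ← Matrix.mul_apply, Matrix.adjugate_mul]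
    rw [Finset.sum_eq_single k] <;> simp +contextual [eq_comm]
  simp only [h, smul_zero, Finset.sum_const_zero] at h1
  exact (smul_eq_zero.1 h1.symm).resolve_left hJ

theorem isAlgebraic_of_jacobian_ne_zero {ι R A : Type*} [Fintype ι] [DecidableEq ι]
    [CommRing R] [IsDomain R] [CommRing A] [IsDomain A] [Algebra R A]
    [FaithfulSMul R A] (y : ι → A) (F : ι → MvPolynomial ι R)
    (hF : ∀ i, MvPolynomial.aeval y (F i) = 0)
    (hJ : (Matrix.of fun i j => MvPolynomial.aeval y (MvPolynomial.pderiv j (F i))).det ≠ 0)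
    (i : ι) : IsAlgebraic R (y i) := by
  let K := FractionRing R
  let L := FractionRing A
  let : Algebra K L := FractionRing.liftAlgebra R L
  have : IsScalarTower R K L := FractionRing.isScalarTower_liftAlgebra R L
  let z : ι → L := fun i => algebraMap A L (y i)
  let E := IntermediateField.adjoin K (Set.range z)
  let z' : ι → E := fun i => ⟨z i, IntermediateField.subset_adjoin K _ ⟨i, rfl⟩⟩
  have : IsScalarTower R E L := IsScalarTower.of_algebraMap_eq fun r => by
    rw [IsScalarTower.algebraMap_apply R K L, IsScalarTower.algebraMap_apply R K E]
    rfl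
  have hinj : Function.Injective (algebraMap A L) := IsFractionRing.injective A L
  have hz (p : MvPolynomial ι R) :
      algebraMap E L (MvPolynomial.aeval z' p) = algebraMap A L (MvPolynomial.aeval y p) := by
    rw [← MvPolynomial.aeval_algebraMap_apply, ← MvPolynomial.aeval_algebraMap_apply]
    rfl
  have hF' (i : ι) : MvPolynomial.aeval z' (F i) = 0 := by
    apply (algebraMap E L).injective
    rw [hz, hF, map_zero, map_zero]
  have hJ' :
      (Matrix.of fun i j => MvPolynomial.aeval z' (MvPolynomial.pderiv j (F i))).det ≠ 0 := by
    intro h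
    apply hJ
    apply hinj
    rw [map_zero, ← map_zero (algebraMap E L), ← h, RingHom.map_det, RingHom.map_det]
    congr 1
    ext i j
    simp only [RingHom.mapMatrix_apply, Matrix.map_apply, Matrix.of_apply, hz]
  have : Algebra.EssFiniteType K E :=
    IntermediateField.essFiniteType_iff.2 (IntermediateField.fg_adjoin_of_finite (Set.finite_range z))
  have : Algebra.FormallyUnramified K E := by
    constructor
    let d := KaehlerDifferential.D K E
    have hd (i : ι) : d (z' i) = 0 := by
      refine Matrix.eq_zero_of_sum_smul_eq_zero _ hJ' (fun i => d (z' i)) (fun i => ?_) i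
      have := Derivation.apply_aeval_mvPolynomial d z' (F i)
      rw [hF', map_zero] at this
      exact this.symm
    have hall (e : E) : d e = 0 := by
      obtain ⟨e, he⟩ := e
      induction he using IntermediateField.adjoin_induction with
      | mem x hx =>
        obtain ⟨i, rfl⟩ := hx
        exact hd i
      | algebraMap x => exact d.map_algebraMap x
      | add x y hx hy h1 h2 =>
        have := d.map_add ⟨x, hx⟩ ⟨y, hy⟩
        rw [h1, h2, add_zero] at this
        exact this
      | inv x hx h =>
        have := d.leibniz_inv ⟨x, hx⟩
        rw [h, smul_zero] at this
        exact this
      | mul x y hx hy h1 h2 =>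
        have := d.leibniz ⟨x, hx⟩ ⟨y, hy⟩
        rw [h1, h2, smul_zero, smul_zero, add_zero] at this
        exact this
    rw [← Submodule.subsingleton_iff E, ← subsingleton_iff_bot_eq_top,
      ← KaehlerDifferential.span_range_derivation, eq_comm, Submodule.span_eq_bot]
    rintro _ ⟨e, rfl⟩
    exact hall e
  have : Algebra.IsSeparable K E := (Algebra.FormallyUnramified.iff_isSeparable K E).1 inferInstance
  have h1 : IsAlgebraic K (z' i) := Algebra.IsAlgebraic.isAlgebraic _
  have h2 : IsAlgebraic K (z i) := IntermediateField.isAlgebraic_iff.1 h1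
  have h3 : IsAlgebraic R (z i) := (IsFractionRing.isAlgebraic_iff R K L).2 h2
  exact (isAlgebraic_algebraMap_iff hinj).1 h3

theorem isAlgebraic_of_contracting_system {ι : Type*} [Fintype ι]
    (y : ι → PowerSeries ℚ) (Φ : ι → MvPolynomial ι (Polynomial ℚ))
    (hΦ : ∀ i, y i = MvPolynomial.aeval y (Φ i))
    (hd : ∀ i j, PowerSeries.constantCoeff
      (MvPolynomial.aeval y (MvPolynomial.pderiv j (Φ i))) = 0) (i : ι) :
    IsAlgebraic (Polynomial ℚ) (y i) := by
  classical
  have : FaithfulSMul (Polynomial ℚ) (PowerSeries ℚ) := by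
    rw [faithfulSMul_iff_algebraMap_injective]
    intro p q h
    exact Polynomial.coe_injective ℚ (by simpa [PowerSeries.algebraMap_apply'] using h)
  refine isAlgebraic_of_jacobian_ne_zero y (fun i => MvPolynomial.X i - Φ i)
    (fun i => by simp [← hΦ i]) (fun h => ?_) i
  have h2 := congrArg (PowerSeries.constantCoeff (R := ℚ)) h
  rw [RingHom.map_det, map_zero] at h2
  have h3 : (PowerSeries.constantCoeff (R := ℚ)).mapMatrix (Matrix.of fun i j =>
      MvPolynomial.aeval y (MvPolynomial.pderiv j (MvPolynomial.X i - Φ i))) = 1 := by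
    ext i j
    simp only [RingHom.mapMatrix_apply, Matrix.map_apply, Matrix.of_apply, map_sub, hd, sub_zero,
      MvPolynomial.pderiv_X, Pi.single_apply, Matrix.one_apply]
    split_ifs <;> simp
  rw [h3, Matrix.det_one] at h2
  exact one_ne_zero h2

/-- The generating function of a type weighted by `w`. -/
noncomputable def weightGF {A : Type*} (w : A → ℕ) : PowerSeries ℚ :=
  PowerSeries.mk fun n => (Nat.card {a // w a = n} : ℚ)

theorem weightGF_congr {A B : Type*} {w : A → ℕ} {w' : B → ℕ} (e : A ≃ B)
    (h : ∀ a, w' (e a) = w a) : weightGF w = weightGF w' := by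
  ext n
  simp only [weightGF, PowerSeries.coeff_mk, Nat.cast_inj]
  exact Nat.card_congr (e.subtypeEquiv fun a => by rw [h])

theorem weightGF_sum {A B : Type*} {w : A → ℕ} {w' : B → ℕ}
    (hw : ∀ n, Finite {a // w a = n}) (hw' : ∀ n, Finite {a // w' a = n}) :
    weightGF (Sum.elim w w') = weightGF w + weightGF w' := by
  ext n
  have := hw n
  have := hw' n
  simp only [weightGF, PowerSeries.coeff_mk, map_add]
  have e : {c : A ⊕ B // Sum.elim w w' c = n} ≃ {a // w a = n} ⊕ {b // w' b = n} :=
    Equiv.subtypeSum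
  rw [Nat.card_congr e, Nat.card_sum, Nat.cast_add]

/-- An element of a sigma type of weight `n` is an element of weight `n` of a summand. -/
def sigmaWeightEquiv {I : Type*} {A : I → Type*} (w : ∀ i, A i → ℕ) (n : ℕ) :
    {p : Σ i, A i // w p.1 p.2 = n} ≃ Σ i, {a : A i // w i a = n} where
  toFun p := ⟨p.1.1, p.1.2, p.2⟩
  invFun p := ⟨⟨p.1, p.2.1⟩, p.2.2⟩
  left_inv _ := rfl
  right_inv _ := rfl

theorem finite_sigmaWeight {I : Type*} [Finite I] {A : I → Type*} {w : ∀ i, A i → ℕ}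
    (hw : ∀ i n, Finite {a // w i a = n}) (n : ℕ) :
    Finite {p : Σ i, A i // w p.1 p.2 = n} := by
  have := hw
  exact Finite.of_equiv _ (sigmaWeightEquiv w n).symm

theorem weightGF_sigma {I : Type*} [Fintype I] {A : I → Type*} {w : ∀ i, A i → ℕ}
    (hw : ∀ i n, Finite {a // w i a = n}) :
    weightGF (fun p : Σ i, A i => w p.1 p.2) = ∑ i, weightGF (w i) := by
  ext n
  have := fun i => hw i n
  simp only [weightGF, PowerSeries.coeff_mk, map_sum]
  rw [Nat.card_congr (sigmaWeightEquiv w n), Nat.card_sigma, Nat.cast_sum]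

/-- A tuple of total weight `n` splits as a composition of `n` and elements of prescribed
weights. -/
noncomputable def piWeightEquiv {I : Type*} [Fintype I] [DecidableEq I] {A : I → Type*}
    (w : ∀ i, A i → ℕ) (n : ℕ) :
    {x : ∀ i, A i // ∑ i, w i (x i) = n} ≃
      Σ l : Finset.finsuppAntidiag (Finset.univ : Finset I) n, ∀ i, {a : A i // w i a = l.1 i} where
  toFun x := ⟨⟨Finsupp.equivFunOnFinite.symm fun i => w i (x.1 i), by
    simp [Finset.mem_finsuppAntidiag, x.2]⟩, fun i => ⟨x.1 i, rfl⟩⟩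
  invFun p := ⟨fun i => (p.2 i).1, by
    have := (Finset.mem_finsuppAntidiag.1 p.1.2).1
    simpa only [(p.2 _).2] using this⟩
  left_inv _ := rfl
  right_inv p := by
    obtain ⟨⟨l, hl⟩, x⟩ := p
    have h : (Finsupp.equivFunOnFinite.symm fun i => w i (x i).1) = l := by
      ext i
      exact (x i).2
    refine Sigma.ext (Subtype.ext h) (Function.hfunext rfl fun i j hij => ?_)
    obtain rfl := eq_of_heq hij
    exact (Subtype.heq_iff_coe_eq fun a => by simp [h]).2 rfl

theorem finite_piWeight {I : Type*} [Fintype I] {A : I → Type*} {w : ∀ i, A i → ℕ}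
    (hw : ∀ i n, Finite {a // w i a = n}) (n : ℕ) :
    Finite {x : ∀ i, A i // ∑ i, w i (x i) = n} := by
  classical
  have := hw
  exact Finite.of_equiv _ (piWeightEquiv w n).symm

theorem weightGF_pi {I : Type*} [Fintype I] {A : I → Type*} {w : ∀ i, A i → ℕ}
    (hw : ∀ i n, Finite {a // w i a = n}) :
    weightGF (fun x : ∀ i, A i => ∑ i, w i (x i)) = ∏ i, weightGF (w i) := by
  classical
  have := hw
  ext n
  rw [PowerSeries.coeff_prod]
  simp only [weightGF, PowerSeries.coeff_mk]
  rw [Nat.card_congr (piWeightEquiv w n), Nat.card_sigma]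
  simp only [Nat.card_pi, Nat.cast_sum, Nat.cast_prod]
  exact Finset.sum_coe_sort (Finset.finsuppAntidiag (Finset.univ : Finset I) n)
    fun l => ∏ i, (Nat.card {a // w i a = l i} : ℚ)

theorem constantCoeff_weightGF {A : Type*} {w : A → ℕ} (h : ∀ a, 0 < w a) :
    PowerSeries.constantCoeff (weightGF w) = 0 := by
  have : IsEmpty {a // w a = 0} := ⟨fun a => (h a.1).ne' a.2⟩
  rw [← PowerSeries.coeff_zero_eq_constantCoeff_apply, weightGF, PowerSeries.coeff_mk]
  simp

theorem constantCoeff_aeval_pderiv_prod_X {ι : Type*} (y : ι → PowerSeries ℚ)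
    (hy : ∀ i, PowerSeries.constantCoeff (y i) = 0) {m : ℕ} (hm : 2 ≤ m) (c : Fin m → ι) (j : ι) :
    PowerSeries.constantCoeff (MvPolynomial.aeval y (MvPolynomial.pderiv j
      (∏ i, (MvPolynomial.X (c i) : MvPolynomial ι (Polynomial ℚ))))) = 0 := by
  obtain ⟨k, rfl⟩ := Nat.exists_eq_add_of_le' hm
  simp [Fin.prod_univ_succ, hy]

/-- A weighted coloured combinatorial class in which every object is either an atom of weight one
or is built in a unique way, by one of finitely many operations of arity at least two, from a tuple
of objects whose colours are admissible, has algebraic generating functions, provided the colour of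
an object depends only on the operation and the colours of its components. -/
theorem isAlgebraic_weightGF_of_decomposition {X τ S : Type*} [Finite τ] [Finite S]
    (w : X → ℕ) (hw : ∀ n, Finite {x // w x = n}) (hpos : ∀ x, 0 < w x) (κ : X → τ)
    (m : S → ℕ) (hm : ∀ s, 2 ≤ m s) (adm : ∀ s, (Fin (m s) → τ) → Prop)
    (Φ : Unit ⊕ (Σ s, {x : Fin (m s) → X // adm s (κ ∘ x)}) ≃ X)
    (hatom : w (Φ (.inl ())) = 1)
    (hsum : ∀ s x, w (Φ (.inr ⟨s, x⟩)) = ∑ i, w (x.1 i))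
    (hκ : ∀ s x x', κ ∘ x.1 = κ ∘ x'.1 → κ (Φ (.inr ⟨s, x⟩)) = κ (Φ (.inr ⟨s, x'⟩)))
    (t : τ) : IsAlgebraic (Polynomial ℚ) (weightGF fun x : {x // κ x = t} => w x) := by
  classical
  have := Fintype.ofFinite τ
  have := Fintype.ofFinite S
  let good (t : τ) (p : Σ s, (Fin (m s) → τ)) : Prop :=
    ∃ x, κ ∘ x.1 = p.2 ∧ κ (Φ (.inr ⟨p.1, x⟩)) = t
  let y : τ → PowerSeries ℚ := fun t => weightGF fun x : {x // κ x = t} => w x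
  have hfin (t : τ) (n : ℕ) : Finite {x : {x // κ x = t} // w x = n} :=
    Finite.of_injective (β := {x // w x = n}) (fun x => ⟨x.1.1, x.2⟩) fun a b h => by
      ext
      exact congrArg (fun z => z.1) h
  let P : τ → MvPolynomial τ (Polynomial ℚ) := fun t =>
    MvPolynomial.C (if κ (Φ (.inl ())) = t then Polynomial.X else 0) +
      ∑ p : {p // good t p}, ∏ i, MvPolynomial.X (p.1.2 i)
  have hy0 (t : τ) : PowerSeries.constantCoeff (y t) = 0 :=
    constantCoeff_weightGF fun a => hpos a.1
  refine isAlgebraic_of_contracting_system y P (fun t => ?_) (fun t j => ?_) t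
  · let B := {u : Unit // κ (Φ (.inl u)) = t} ⊕
      Σ p : {p // good t p}, ∀ i, {x // κ x = p.1.2 i}
    let F : B → {x // κ x = t} := Sum.elim (fun u => ⟨Φ (.inl u.1), u.2⟩) fun q =>
      have h1 : κ ∘ (fun i => (q.2 i).1) = q.1.1.2 := funext fun i => (q.2 i).2
      ⟨Φ (.inr ⟨q.1.1.1, fun i => (q.2 i).1, by
        obtain ⟨x, hx, -⟩ := q.1.2
        rw [h1, ← hx]
        exact x.2⟩), by
        obtain ⟨x, hx, hx'⟩ := q.1.2
        exact (hκ _ _ _ (h1.trans hx.symm)).trans hx'⟩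
    have hF : Function.Bijective F := by
      constructor
      · rintro (⟨u, hu⟩ | ⟨⟨⟨s, c⟩, hg⟩, x⟩) (⟨u', hu'⟩ | ⟨⟨⟨s', c'⟩, hg'⟩, x'⟩) h
        · rfl
        · simp [F] at h
        · simp [F] at h
        · have h1 := Φ.injective (congrArg Subtype.val h)
          simp only [Sum.inr.injEq, Sigma.mk.injEq] at h1
          obtain ⟨rfl, h2⟩ := h1
          have h3 := congrArg Subtype.val (eq_of_heq h2)
          have h4 (i) : (x i).1 = (x' i).1 := congrFun h3 i
          have h5 : c = c' := funext fun i => by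
            have := (x i).2
            rw [h4, (x' i).2] at this
            exact this.symm
          subst h5
          have h6 : x = x' := funext fun i => Subtype.ext (h4 i)
          rw [h6]
      · rintro ⟨x, hx⟩
        obtain ⟨z, rfl⟩ := Φ.surjective x
        obtain u | ⟨s, x⟩ := z
        · exact ⟨.inl ⟨u, hx⟩, rfl⟩
        · exact ⟨.inr ⟨⟨⟨s, κ ∘ x.1⟩, x, rfl, hx⟩, fun i => ⟨x.1 i, rfl⟩⟩, rfl⟩
    have h1 : y t = weightGF (Sum.elim (fun _ : {u : Unit // κ (Φ (.inl u)) = t} => 1)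
        fun q : (Σ p : {p // good t p}, ∀ i, {x // κ x = p.1.2 i}) =>
          ∑ i, w (q.2 i)) := by
      refine (weightGF_congr (Equiv.ofBijective F hF) ?_).symm
      rintro (u | q)
      · exact hatom
      · exact hsum _ _
    let W (p : {p // good t p}) (x : ∀ i, {x // κ x = p.1.2 i}) : ℕ := ∑ i, w (x i)
    have hW (p : {p // good t p}) (n : ℕ) : Finite {x // W p x = n} :=
      finite_piWeight (w := fun i (x : {x // κ x = p.1.2 i}) => w x) (fun i => hfin _) n
    rw [h1, weightGF_sum (fun n => inferInstance) ?_, weightGF_sigma (w := W) hW]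
    · simp only [P, map_add, map_sum, map_prod, MvPolynomial.aeval_X, MvPolynomial.aeval_C]
      congr 1
      · ext n
        simp only [weightGF, PowerSeries.coeff_mk]
        split_ifs with h
        · simp only [PowerSeries.algebraMap_apply', Polynomial.coe_X,
            PowerSeries.map_X, PowerSeries.coeff_X]
          split_ifs with hn
          · subst hn
            simp [h]
          · have : IsEmpty {a : {u : Unit // κ (Φ (.inl ())) = t} // 1 = n} :=
              ⟨fun a => hn a.2.symm⟩
            simp
        · have : IsEmpty {a : {u : Unit // κ (Φ (.inl ())) = t} // 1 = n} := ⟨fun a => h a.1.2⟩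
          simp
      · exact Finset.sum_congr rfl fun p _ =>
          weightGF_pi (w := fun i (x : {x // κ x = p.1.2 i}) => w x) fun i => hfin _
    · exact finite_sigmaWeight (w := W) hW
  · simp only [P, map_add, map_sum, MvPolynomial.pderiv_C, zero_add]
    exact Finset.sum_eq_zero fun p _ => constantCoeff_aeval_pderiv_prod_X y hy0 (hm _) _ j

theorem Perm.ext_of_lt_iff {n : ℕ} {σ τ : Perm n} (h : ∀ s t, σ s < σ t ↔ τ s < τ t) : σ = τ := by
  let e : Fin n ≃o Fin n :=
    { toEquiv := σ.symm.trans τ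
      map_rel_iff' := by
        intro a b
        have := h (σ.symm b) (σ.symm a)
        simp only [Equiv.apply_symm_apply] at this
        simp only [Equiv.trans_apply]
        rw [← not_lt, ← not_lt, this] }
  have he : e = OrderIso.refl _ := Subsingleton.elim _ _
  ext i
  have := congrArg (fun g : Fin n ≃o Fin n => g (σ i)) he
  simp only [OrderIso.refl_apply] at this
  rw [← this]
  simp [e]

theorem Perm.exists_lt_iff {n : ℕ} {L : Type*} [LinearOrder L] (g : Fin n → L)
    (hg : Function.Injective g) : ∃ σ : Perm n, ∀ s t, σ s < σ t ↔ g s < g t := by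
  refine ⟨(Tuple.sort g).symm, fun s t => ?_⟩
  have h : StrictMono (g ∘ Tuple.sort g) :=
    (Tuple.monotone_sort g).strictMono_of_injective (hg.comp (Tuple.sort g).injective)
  have := h.lt_iff_lt (a := (Tuple.sort g).symm s) (b := (Tuple.sort g).symm t)
  simpa using this.symm

/-- `α` is the pattern formed by the entries of `π` at the positions in `A`. -/
def IsPattern {N k : ℕ} (π : Perm N) (A : Set (Fin N)) (α : Perm k) : Prop :=
  ∃ h : Fin k → Fin N, StrictMono h ∧ Set.range h = A ∧ ∀ s t, π (h s) < π (h t) ↔ α s < α t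

theorem exists_isPattern {N : ℕ} (π : Perm N) (A : Set (Fin N)) :
    ∃ p : Σ k, Perm k, IsPattern π A p.2 := by
  classical
  let h := A.toFinset.orderEmbOfFin rfl
  obtain ⟨α, hα⟩ := Perm.exists_lt_iff (fun s => π (h s)) (π.injective.comp h.injective)
  exact ⟨⟨_, α⟩, h, h.strictMono, by simp [h], fun s t => (hα s t).symm⟩

theorem IsPattern.unique {N : ℕ} {π : Perm N} {A : Set (Fin N)} {p q : Σ k, Perm k}
    (hp : IsPattern π A p.2) (hq : IsPattern π A q.2) : p = q := by
  obtain ⟨k, α⟩ := p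
  obtain ⟨l, β⟩ := q
  obtain ⟨h, hm, hr, hl⟩ := hp
  obtain ⟨h', hm', hr', hl'⟩ := hq
  dsimp only at *
  obtain rfl : k = l := by
    have h1 := Set.ncard_range_of_injective hm.injective
    have h2 := Set.ncard_range_of_injective hm'.injective
    rw [hr] at h1
    rw [hr'] at h2
    simpa using h1.symm.trans h2
  obtain rfl : h = h' := (hm.range_inj hm').1 (hr.trans hr'.symm)
  rw [Perm.ext_of_lt_iff fun s t => (hl s t).symm.trans (hl' s t)]

theorem IsPattern.contains {N k : ℕ} {π : Perm N} {A : Set (Fin N)} {α : Perm k}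
    (h : IsPattern π A α) : Contains α π := by
  obtain ⟨g, hg, -, hl⟩ := h
  exact ⟨g, hg, hl⟩

/-- The fibres of `f` are nonempty intervals of `π` arranged according to `σ`. -/
structure IsBlockMap {N m : ℕ} (π : Perm N) (σ : Perm m) (f : Fin N → Fin m) : Prop where
  surjective : Function.Surjective f
  lt_of_lt : ∀ p q, f p < f q → p < q
  apply_lt_of_lt : ∀ p q, σ (f p) < σ (f q) → π p < π q

namespace IsBlockMap

variable {N m m' : ℕ} {π : Perm N} {σ : Perm m} {σ' : Perm m'} {f : Fin N → Fin m}
  {f' : Fin N → Fin m'}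

theorem id (π : Perm N) : IsBlockMap π π _root_.id :=
  ⟨Function.surjective_id, fun _ _ h => h, fun _ _ h => h⟩

theorem le_of_le (hf : IsBlockMap π σ f) {p q : Fin N} (h : p ≤ q) : f p ≤ f q :=
  not_lt.1 fun h' => (hf.lt_of_lt _ _ h').not_ge h

theorem apply_le_of_le (hf : IsBlockMap π σ f) {p q : Fin N} (h : π p ≤ π q) :
    σ (f p) ≤ σ (f q) :=
  not_lt.1 fun h' => (hf.apply_lt_of_lt _ _ h').not_ge h

theorem apply_lt_iff (hf : IsBlockMap π σ f) {p q : Fin N} (h : f p ≠ f q) :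
    π p < π q ↔ σ (f p) < σ (f q) :=
  ⟨fun h' => (hf.apply_le_of_le h'.le).lt_of_ne (σ.injective.ne h), hf.apply_lt_of_lt p q⟩

theorem contains (hf : IsBlockMap π σ f) : Contains σ π := by
  obtain ⟨r, hr⟩ := hf.surjective.hasRightInverse
  have hr' : StrictMono r := fun i j h => hf.lt_of_lt _ _ (by rwa [hr, hr])
  refine ⟨r, hr', fun s t => ?_⟩
  by_cases hst : s = t
  · simp [hst]
  · rw [hf.apply_lt_iff (by rwa [hr, hr]), hr, hr]

/-- Two block maps with the same fibres agree. -/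
theorem eq_of_fibres (hf : IsBlockMap π σ f) (hf' : IsBlockMap π σ' f')
    (h : ∀ p q, f p = f q ↔ f' p = f' q) :
    (⟨m, σ⟩ : Σ n, Perm n) = ⟨m', σ'⟩ ∧ ∀ p, (f p : ℕ) = f' p := by
  obtain ⟨r, hr⟩ := hf.surjective.hasRightInverse
  have hr' : StrictMono r := fun i j h => hf.lt_of_lt _ _ (by rwa [hr, hr])
  have hfr (p) : f' (r (f p)) = f' p := (h _ _).1 (hr _)
  have hg : StrictMono (f' ∘ r) := fun i j hij =>
    (hf'.le_of_le (hr' hij).le).lt_of_ne fun h' => hij.ne (by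
      have := (h _ _).2 h'
      rwa [hr, hr] at this)
  have hgs : Function.Surjective (f' ∘ r) := fun j => by
    obtain ⟨p, rfl⟩ := hf'.surjective j
    exact ⟨f p, hfr p⟩
  obtain rfl : m = m' := by
    simpa using Fintype.card_of_bijective (f := f' ∘ r) ⟨hg.injective, hgs⟩
  have hid : f' ∘ r = _root_.id :=
    (hg.range_inj strictMono_id).1 (by rw [hgs.range_eq, Set.range_id])
  have hff (p) : f p = f' p := by
    rw [← hfr p]
    exact (congrFun hid (f p)).symm
  refine ⟨?_, fun p => by rw [hff]⟩
  congr 1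
  apply Perm.ext_of_lt_iff
  intro s t
  by_cases hst : s = t
  · simp [hst]
  have h1 := hf.apply_lt_iff (p := r s) (q := r t) (by rwa [hr, hr])
  have h2 := hf'.apply_lt_iff (p := r s) (q := r t) (by rwa [← hff, ← hff, hr, hr])
  rw [← hff, ← hff] at h2
  rw [hr, hr] at h1 h2
  exact h1.symm.trans h2

end IsBlockMap

/-- The set `A` is convex both in position and in value. -/
def IsBiconvex {N : ℕ} (π : Perm N) (A : Set (Fin N)) : Prop :=
  (∀ p q r, p ∈ A → r ∈ A → p ≤ q → q ≤ r → q ∈ A) ∧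
    ∀ p q r, p ∈ A → r ∈ A → π p ≤ π q → π q ≤ π r → q ∈ A

theorem IsPermInterval.isBiconvex {n : ℕ} {π : Perm n} {I : Finset (Fin n)}
    (h : IsPermInterval π I) : IsBiconvex π I := by
  refine ⟨fun p q r hp hr h1 h2 => h.1 hp hr h1 h2, fun p q r hp hr h1 h2 => ?_⟩
  have := h.2 (Finset.mem_image_of_mem π hp) (Finset.mem_image_of_mem π hr) h1 h2
  simpa using this

theorem IsBiconvex.isPermInterval {n : ℕ} {π : Perm n} {I : Finset (Fin n)}
    (h : IsBiconvex π I) : IsPermInterval π I := by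
  refine ⟨fun p q r hp hr h1 h2 => h.1 p q r hp hr h1 h2, fun a b c ha hc h1 h2 => ?_⟩
  obtain ⟨p, hp, rfl⟩ := Finset.mem_image.1 ha
  obtain ⟨r, hr, rfl⟩ := Finset.mem_image.1 hc
  obtain ⟨q, rfl⟩ := π.surjective b
  exact Finset.mem_image_of_mem π (h.2 p q r hp hr h1 h2)

theorem IsSimple.subsingleton_or_eq_univ {n : ℕ} {π : Perm n} (hπ : IsSimple π)
    {A : Set (Fin n)} (hA : IsBiconvex π A) : A.Subsingleton ∨ A = Set.univ := by
  classical
  rw [← Set.coe_toFinset A] at hA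
  rcases hπ _ hA.isPermInterval with h | h
  · left
    rw [Finset.card_le_one] at h
    exact fun a ha b hb => h a (by simpa) b (by simpa)
  · right
    rw [← Set.toFinset_eq_univ, ← Finset.card_eq_iff_eq_univ, h, Fintype.card_fin]

namespace IsBlockMap

variable {N m m' : ℕ} {π : Perm N} {σ : Perm m} {σ' : Perm m'} {f : Fin N → Fin m}
  {f' : Fin N → Fin m'}

theorem isBiconvex_image (hf : IsBlockMap π σ f) {A : Set (Fin N)} (hA : IsBiconvex π A) :
    IsBiconvex σ (f '' A) := by
  constructor
  · rintro _ j _ ⟨p, hp, rfl⟩ ⟨q, hq, rfl⟩ h1 h2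
    rcases h1.eq_or_lt with rfl | h1
    · exact ⟨p, hp, rfl⟩
    rcases h2.eq_or_lt with rfl | h2
    · exact ⟨q, hq, rfl⟩
    obtain ⟨r, rfl⟩ := hf.surjective j
    exact ⟨r, hA.1 p r q hp hq (hf.lt_of_lt _ _ h1).le (hf.lt_of_lt _ _ h2).le, rfl⟩
  · rintro _ j _ ⟨p, hp, rfl⟩ ⟨q, hq, rfl⟩ h1 h2
    rcases h1.eq_or_lt with h1 | h1
    · exact ⟨p, hp, σ.injective h1⟩
    rcases h2.eq_or_lt with h2 | h2
    · exact ⟨q, hq, (σ.injective h2).symm⟩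
    obtain ⟨r, rfl⟩ := hf.surjective j
    exact ⟨r, hA.2 p r q hp hq (hf.apply_lt_of_lt _ _ h1).le (hf.apply_lt_of_lt _ _ h2).le, rfl⟩

theorem isBiconvex_fibre (hf : IsBlockMap π σ f) (i : Fin m) : IsBiconvex π (f ⁻¹' {i}) := by
  constructor
  · rintro p q r rfl hr h1 h2
    exact le_antisymm ((hf.le_of_le h2).trans_eq hr) (hf.le_of_le h1)
  · rintro p q r rfl hr h1 h2
    refine σ.injective (le_antisymm ((hf.apply_le_of_le h2).trans_eq (congrArg σ hr))
      (hf.apply_le_of_le h1))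

/-- If the fibres of one simple block map refine those of another one, they have the same
fibres. -/
theorem fibres_eq_of_refines (hf : IsBlockMap π σ f) (hf' : IsBlockMap π σ' f')
    (hσ' : IsSimple σ') (hm : 2 ≤ m) (h : ∀ j, (f '' (f' ⁻¹' {j})).Subsingleton) (p q : Fin N) :
    f p = f q ↔ f' p = f' q := by
  have h1 (p q) (hpq : f' p = f' q) : f p = f q :=
    h (f' q) ⟨p, hpq, rfl⟩ ⟨q, rfl, rfl⟩
  refine ⟨fun hpq => ?_, h1 p q⟩
  rcases hσ'.subsingleton_or_eq_univ (hf'.isBiconvex_image (hf.isBiconvex_fibre (f q))) with h2 | h2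
  · exact h2 ⟨p, hpq, rfl⟩ ⟨q, rfl, rfl⟩
  · have hall (r) : f r = f q := by
      obtain ⟨r', hr', hrr⟩ : f' r ∈ f' '' (f ⁻¹' {f q}) := h2 ▸ Set.mem_univ _
      rw [← h1 _ _ hrr]
      exact hr'
    obtain ⟨a, ha⟩ := hf.surjective ⟨0, by omega⟩
    obtain ⟨b, hb⟩ := hf.surjective ⟨1, by omega⟩
    have := ha.symm.trans ((hall a).trans ((hall b).symm.trans hb))
    simp at this

/-- Two blocks of two simple decompositions that meet every block of the other one cover
everything. -/
theorem mem_or_mem_of_image_eq_univ (hf : IsBlockMap π σ f) (hf' : IsBlockMap π σ' f')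
    {i : Fin m} {j : Fin m'} (hj : f '' (f' ⁻¹' {j}) = Set.univ)
    (hi : f' '' (f ⁻¹' {i}) = Set.univ) (p : Fin N) : f p = i ∨ f' p = j := by
  by_contra! hp
  obtain ⟨h1, h2⟩ := hp
  obtain ⟨c, hc, hc'⟩ : i ∈ f '' (f' ⁻¹' {j}) := hj ▸ Set.mem_univ _
  obtain ⟨a, ha, ha'⟩ : f p ∈ f '' (f' ⁻¹' {j}) := hj ▸ Set.mem_univ _
  obtain ⟨b, hb, hb'⟩ : f' p ∈ f' '' (f ⁻¹' {i}) := hi ▸ Set.mem_univ _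
  simp only [Set.mem_preimage, Set.mem_singleton_iff] at ha hb hc
  have k1 := hf.lt_of_lt
  have k2 := hf'.lt_of_lt
  have := k1 p c
  have := k1 c p
  have := k2 p c
  have := k2 c p
  have := k1 a b
  have := k1 b a
  have := k2 a b
  have := k2 b a
  grind

theorem two_of_image_eq_univ (hf : IsBlockMap π σ f) (hf' : IsBlockMap π σ' f')
    (hσ' : IsSimple σ') (hm : 2 ≤ m) (hm' : 2 ≤ m')
    {i : Fin m} {j : Fin m'} (hj : f '' (f' ⁻¹' {j}) = Set.univ)
    (hi : f' '' (f ⁻¹' {i}) = Set.univ) : m' = 2 := by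
  have hcov := hf.mem_or_mem_of_image_eq_univ hf' hj hi
  obtain ⟨i', hi'⟩ : ∃ i', i' ≠ i := by
    have : Nontrivial (Fin m) := Fin.nontrivial_iff_two_le.2 hm
    exact exists_ne i
  obtain ⟨c, hc, hc'⟩ : i' ∈ f '' (f' ⁻¹' {j}) := hj ▸ Set.mem_univ _
  simp only [Set.mem_preimage, Set.mem_singleton_iff] at hc
  have hA : IsBiconvex π {p | f' p ≠ j} := by
    constructor
    · intro p q r hp hr h1 h2 hq
      have hp' := (hcov p).resolve_right hp
      have hr' := (hcov r).resolve_right hr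
      have k1 := (hf'.le_of_le h1).trans_eq hq
      have k2 := hq.symm.trans_le (hf'.le_of_le h2)
      have k3 := hf'.lt_of_lt p c (by rw [hc]; exact k1.lt_of_ne hp)
      have k4 := hf'.lt_of_lt c r (by rw [hc]; exact k2.lt_of_ne (Ne.symm hr))
      exact hi' (hc' ▸ (hf.isBiconvex_fibre i).1 p c r hp' hr' k3.le k4.le)
    · intro p q r hp hr h1 h2 hq
      have hp' := (hcov p).resolve_right hp
      have hr' := (hcov r).resolve_right hr
      have k1 := (hf'.apply_le_of_le h1).trans_eq (congrArg σ' hq)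
      have k2 := (congrArg σ' hq).symm.trans_le (hf'.apply_le_of_le h2)
      have k3 := hf'.apply_lt_of_lt p c (by rw [hc]; exact k1.lt_of_ne (σ'.injective.ne hp))
      have k4 := hf'.apply_lt_of_lt c r
        (by rw [hc]; exact k2.lt_of_ne (σ'.injective.ne (Ne.symm hr)))
      exact hi' (hc' ▸ (hf.isBiconvex_fibre i).2 p c r hp' hr' k3.le k4.le)
  have himg : f' '' {p | f' p ≠ j} = {j}ᶜ := by
    ext l
    constructor
    · rintro ⟨p, hp, rfl⟩
      exact hp
    · intro hl
      obtain ⟨p, rfl⟩ := hf'.surjective l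
      exact ⟨p, hl, rfl⟩
  have hB := hf'.isBiconvex_image hA
  rw [himg] at hB
  rcases hσ'.subsingleton_or_eq_univ hB with h | h
  · have h1 : ({j}ᶜ : Finset (Fin m')).card ≤ 1 := by
      rw [Finset.card_le_one]
      exact fun a ha b hb => h (by simpa using ha) (by simpa using hb)
    rw [Finset.card_compl, Finset.card_singleton, Fintype.card_fin] at h1
    omega
  · have : j ∈ ({j}ᶜ : Set (Fin m')) := h ▸ Set.mem_univ j
    exact absurd rfl this

theorem eq_of_two {σ τ : Perm 2} {f g : Fin N → Fin 2} (hf : IsBlockMap π σ f)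
    (hg : IsBlockMap π τ g) : σ = τ := by
  obtain ⟨p, hp⟩ : ∃ p, f p = 0 ∧ g p = 0 := by
    obtain ⟨p, hp⟩ := hf.surjective 0
    obtain ⟨q, hq⟩ := hg.surjective 0
    rcases le_total p q with h | h
    · exact ⟨p, hp, le_antisymm (hq ▸ hg.le_of_le h) (Fin.zero_le _)⟩
    · exact ⟨q, le_antisymm (hp ▸ hf.le_of_le h) (Fin.zero_le _), hq⟩
  obtain ⟨q, hq⟩ : ∃ q, f q = 1 ∧ g q = 1 := by
    obtain ⟨p, hp⟩ := hf.surjective 1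
    obtain ⟨q, hq⟩ := hg.surjective 1
    rcases le_total p q with h | h
    · exact ⟨q, le_antisymm (Fin.le_last _) (hp ▸ hf.le_of_le h), hq⟩
    · exact ⟨p, hp, le_antisymm (Fin.le_last _) (hq ▸ hg.le_of_le h)⟩
  have h1 := hf.apply_lt_iff (p := p) (q := q) (by simp [hp, hq])
  have h2 := hg.apply_lt_iff (p := p) (q := q) (by simp [hp, hq])
  have h3 := hf.apply_lt_iff (p := q) (q := p) (by simp [hp, hq])
  have h4 := hg.apply_lt_iff (p := q) (q := p) (by simp [hp, hq])
  simp only [hp, hq] at h1 h2 h3 h4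
  apply Perm.ext_of_lt_iff
  intro s t
  fin_cases s <;> fin_cases t
  · simp
  · exact h1.symm.trans h2
  · exact h3.symm.trans h4
  · simp

/-- The simple quotient of a permutation is unique, and so is the corresponding decomposition
into blocks unless there are only two of them. -/
theorem simple_unique (hf : IsBlockMap π σ f) (hf' : IsBlockMap π σ' f')
    (hσ : IsSimple σ) (hσ' : IsSimple σ') (hm : 2 ≤ m) (hm' : 2 ≤ m') :
    (⟨m, σ⟩ : Σ n, Perm n) = ⟨m', σ'⟩ ∧ (m ≠ 2 → ∀ p, (f p : ℕ) = f' p) := by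
  by_cases h : ∀ j, (f '' (f' ⁻¹' {j})).Subsingleton
  · have := hf.eq_of_fibres hf' (hf.fibres_eq_of_refines hf' hσ' hm h)
    exact ⟨this.1, fun _ => this.2⟩
  by_cases h' : ∀ i, (f' '' (f ⁻¹' {i})).Subsingleton
  · have := hf'.eq_of_fibres hf (hf'.fibres_eq_of_refines hf hσ hm' h')
    exact ⟨this.1.symm, fun _ p => (this.2 p).symm⟩
  push Not at h h'
  obtain ⟨j, hj⟩ := h
  obtain ⟨i, hi⟩ := h'
  have hj := (hσ.subsingleton_or_eq_univ
    (hf.isBiconvex_image (hf'.isBiconvex_fibre j))).resolve_left (by simpa using hj)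
  have hi := (hσ'.subsingleton_or_eq_univ
    (hf'.isBiconvex_image (hf.isBiconvex_fibre i))).resolve_left (by simpa using hi)
  obtain rfl := hf.two_of_image_eq_univ hf' hσ' hm hm' hj hi
  obtain rfl := hf'.two_of_image_eq_univ hf hσ hm' hm hi hj
  exact ⟨by rw [hf.eq_of_two hf'], fun h => absurd rfl h⟩

end IsBlockMap

/-- `π` is decomposed by the block map `f` as the inflation of `σ` by the patterns `x`. -/
structure IsDecomposition {N m : ℕ} (π : Perm N) (σ : Perm m) (x : Fin m → Σ k, Perm k)
    (f : Fin N → Fin m) : Prop where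
  isBlockMap : IsBlockMap π σ f
  isPattern : ∀ i, IsPattern π (f ⁻¹' {i}) (x i).2

theorem Perm.card_filter_apply_lt {N : ℕ} (g : Perm N) (p : Fin N) :
    (Finset.univ.filter fun q => g q < g p).card = g p := by
  rw [← Fin.card_Iio (g p), ← Finset.card_map g.toEmbedding]
  congr 1
  ext q
  simp only [Finset.mem_map, Finset.mem_filter, Finset.mem_univ, true_and, Finset.mem_Iio,
    Equiv.coe_toEmbedding]
  exact ⟨by rintro ⟨q, hq, rfl⟩; exact hq, fun hq => ⟨g.symm q, by simpa using hq, by simp⟩⟩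

theorem rank_eq_of_blocks {N m k₀ : ℕ} (g : Perm N) (τ : Perm m) (f : Fin N → Fin m)
    (k : Fin m → ℕ) (hlt : ∀ p q, τ (f p) < τ (f q) → g p < g q)
    (hk : ∀ t, (Finset.univ.filter fun q => f q = t).card = k t) {i : Fin m} {h : Fin k₀ → Fin N}
    (hinj : Function.Injective h) (hr : Set.range h = f ⁻¹' {i}) (β : Perm k₀)
    (hβ : ∀ s t, g (h s) < g (h t) ↔ β s < β t) (j : Fin k₀) :
    (g (h j) : ℕ) = (∑ t ∈ Finset.univ.filter fun t => τ t < τ i, k t) + (β j : ℕ) := by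
  have hfi (s) : f (h s) = i := by
    have : h s ∈ f ⁻¹' {i} := hr ▸ ⟨s, rfl⟩
    exact this
  rw [← g.card_filter_apply_lt, ← β.card_filter_apply_lt,
    ← Finset.card_map (s := Finset.univ.filter fun s => β s < β j) ⟨h, hinj⟩]
  have h1 : (Finset.univ.filter fun q => τ (f q) < τ i).card =
      ∑ t ∈ Finset.univ.filter fun t => τ t < τ i, k t := by
    rw [Finset.card_eq_sum_card_fiberwise (f := f) (t := Finset.univ.filter fun t => τ t < τ i)]
    · refine Finset.sum_congr rfl fun t ht => ?_
      rw [← hk, Finset.filter_filter]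
      congr 1
      ext q
      simp only [Finset.mem_filter, Finset.mem_univ, true_and] at ht ⊢
      exact ⟨fun h => h.2, fun h => ⟨h ▸ ht, h⟩⟩
    · intro q hq
      simpa using hq
  rw [← h1, ← Finset.card_union_of_disjoint]
  · congr 1
    ext q
    simp only [Finset.mem_filter, Finset.mem_univ, true_and, Finset.mem_union, Finset.mem_map,
      Function.Embedding.coeFn_mk]
    constructor
    · intro hq
      by_cases hqi : f q = i
      · right
        obtain ⟨s, rfl⟩ : q ∈ Set.range h := hr ▸ hqi
        exact ⟨s, (hβ _ _).1 hq, rfl⟩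
      · left
        refine lt_of_le_of_ne (not_lt.1 fun h' => ?_) (τ.injective.ne hqi)
        exact (hlt (h j) q (by rwa [hfi])).asymm hq
    · rintro (hq | ⟨s, hs, rfl⟩)
      · exact hlt _ _ (by rwa [hfi])
      · exact (hβ _ _).2 hs
  · rw [Finset.disjoint_left]
    intro q hq hq'
    obtain ⟨s, -, rfl⟩ := Finset.mem_map.1 hq'
    simp [hfi] at hq

namespace IsDecomposition

variable {N m : ℕ} {π : Perm N} {σ : Perm m} {x : Fin m → Σ k, Perm k} {f : Fin N → Fin m}

theorem card_fibre (hd : IsDecomposition π σ x f) (i : Fin m) :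
    (Finset.univ.filter fun q => f q = i).card = (x i).1 := by
  obtain ⟨h, hm, hr, -⟩ := hd.isPattern i
  have h1 := Set.ncard_range_of_injective hm.injective
  rw [hr, Nat.card_fin] at h1
  rw [← h1, ← Set.ncard_coe_finset]
  congr 1
  ext q
  simp

theorem length_pos (hd : IsDecomposition π σ x f) (i : Fin m) : 0 < (x i).1 := by
  rw [← hd.card_fibre, Finset.card_pos]
  obtain ⟨p, hp⟩ := hd.isBlockMap.surjective i
  exact ⟨p, by simpa⟩

theorem length_eq (hd : IsDecomposition π σ x f) : N = ∑ i, (x i).1 := by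
  have := Finset.card_eq_sum_card_fiberwise (f := f) (s := Finset.univ) (t := Finset.univ)
    (by simp)
  simpa [hd.card_fibre] using this

/-- The position of an entry of a block. -/
theorem exists_position (hd : IsDecomposition π σ x f) (i : Fin m) (j : Fin (x i).1) :
    ∃ p : Fin N, f p = i ∧
      (p : ℕ) = (∑ t ∈ Finset.univ.filter fun t => t < i, (x t).1) + (j : ℕ) ∧
      (π p : ℕ) = (∑ t ∈ Finset.univ.filter fun t => σ t < σ i, (x t).1) + ((x i).2 j : ℕ) := by
  obtain ⟨h, hm, hr, hl⟩ := hd.isPattern i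
  refine ⟨h j, ?_, ?_, ?_⟩
  · have : h j ∈ f ⁻¹' {i} := hr ▸ ⟨j, rfl⟩
    exact this
  · exact rank_eq_of_blocks 1 1 f (fun t => (x t).1) hd.isBlockMap.lt_of_lt hd.card_fibre
      hm.injective hr 1 (fun s t => hm.lt_iff_lt) j
  · exact rank_eq_of_blocks π σ f (fun t => (x t).1) hd.isBlockMap.apply_lt_of_lt hd.card_fibre
      hm.injective hr (x i).2 hl j

theorem isInflation (hd : IsDecomposition π σ x f) : IsInflation σ (fun i => (x i).2) π := by
  refine ⟨hd.length_pos, hd.length_eq, fun i j p hp => ?_⟩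
  obtain ⟨p', -, h1, h2⟩ := hd.exists_position i j
  obtain rfl : p = p' := Fin.ext (hp.trans h1.symm)
  exact h2

theorem eq_of_isInflation (hd : IsDecomposition π σ x f) {N' : ℕ} {π' : Perm N'}
    (h : IsInflation σ (fun i => (x i).2) π') : (⟨N, π⟩ : Σ n, Perm n) = ⟨N', π'⟩ := by
  obtain rfl : N = N' := hd.length_eq.trans h.2.1.symm
  congr 1
  ext p
  obtain ⟨h', hm, hr, hl⟩ := hd.isPattern (f p)
  obtain ⟨j, hj⟩ : p ∈ Set.range h' := hr ▸ rfl
  have h1 := rank_eq_of_blocks 1 1 f (fun t => (x t).1) hd.isBlockMap.lt_of_lt hd.card_fibre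
      hm.injective hr 1 (fun s t => hm.lt_iff_lt) j
  rw [Equiv.Perm.one_apply, hj] at h1
  rw [h.2.2 _ j p h1, hd.isInflation.2.2 _ j p h1]

end IsDecomposition

theorem exists_equiv_sigma_lex {m : ℕ} (k : Fin m → ℕ) (τ : Perm m) (β : ∀ i, Perm (k i)) :
    ∃ e : (Σ i, Fin (k i)) ≃ Fin (∑ i, k i),
      (∀ p q, τ p.1 < τ q.1 → e p < e q) ∧ ∀ i a b, e ⟨i, a⟩ < e ⟨i, b⟩ ↔ β i a < β i b := by
  let key : (Σ i, Fin (k i)) → Fin m ×ₗ ℕ := fun p => toLex (τ p.1, (β p.1 p.2 : ℕ))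
  have hkey : Function.Injective key := by
    rintro ⟨i, a⟩ ⟨j, b⟩ h
    simp only [key, EmbeddingLike.apply_eq_iff_eq, Prod.mk.injEq] at h
    obtain ⟨rfl, h⟩ := h
    rw [Fin.val_inj, EmbeddingLike.apply_eq_iff_eq] at h
    rw [h]
  obtain ⟨ρ, hρ⟩ := Perm.exists_lt_iff (key ∘ finSigmaFinEquiv.symm)
    (hkey.comp finSigmaFinEquiv.symm.injective)
  refine ⟨finSigmaFinEquiv.trans ρ, fun p q h => ?_, fun i a b => ?_⟩
  · simp [hρ, key, Prod.Lex.toLex_lt_toLex, h]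
  · rw [Equiv.trans_apply, Equiv.trans_apply, hρ, Function.comp_apply, Function.comp_apply,
      Equiv.symm_apply_apply, Equiv.symm_apply_apply]
    simp [key, Prod.Lex.toLex_lt_toLex]

theorem exists_isDecomposition {m : ℕ} (σ : Perm m) (x : Fin m → Σ k, Perm k)
    (hx : ∀ i, 0 < (x i).1) :
    ∃ (p : Σ n, Perm n) (f : Fin p.1 → Fin m), IsDecomposition p.2 σ x f := by
  obtain ⟨e, he, he'⟩ := exists_equiv_sigma_lex (fun i => (x i).1) 1 fun i => 1
  obtain ⟨g, hg, hg'⟩ := exists_equiv_sigma_lex (fun i => (x i).1) σ fun i => (x i).2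
  refine ⟨⟨_, e.symm.trans g⟩, fun p => (e.symm p).1, ⟨fun i => ⟨e ⟨i, 0, hx i⟩, by simp⟩,
    fun p q h => ?_, fun p q h => hg _ _ h⟩, fun i => ⟨fun a => e ⟨i, a⟩, fun a b h => ?_, ?_,
    fun s t => ?_⟩⟩
  · simpa using he (e.symm p) (e.symm q) h
  · exact (he' i a b).2 h
  · ext p
    simp only [Set.mem_range, Set.mem_preimage, Set.mem_singleton_iff]
    constructor
    · rintro ⟨a, rfl⟩
      simp
    · intro h
      subst h
      exact ⟨(e.symm p).2, by simp⟩
  · simpa using hg' i s t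

/-- `π` is an inflation of `σ`. -/
def IsInflationOf {N m : ℕ} (σ : Perm m) (π : Perm N) : Prop :=
  ∃ f : Fin N → Fin m, IsBlockMap π σ f

/-- When `σ` has length two, its first block is not itself an inflation of `σ`. -/
def IsAdmissible {m : ℕ} (σ : Perm m) (x : Fin m → Σ k, Perm k) : Prop :=
  m = 2 → ∀ i : Fin m, (i : ℕ) = 0 → ¬ IsInflationOf σ (x i).2

theorem IsBlockMap.eq_zero_of_not_isInflationOf {N k : ℕ} {π : Perm N} {σ : Perm 2}
    {f g : Fin N → Fin 2} (hf : IsBlockMap π σ f) (hg : IsBlockMap π σ g) {α : Perm k}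
    (hα : IsPattern π (g ⁻¹' {0}) α) (hind : ¬ IsInflationOf σ α) {p : Fin N} (hp : g p = 0) :
    f p = 0 := by
  by_contra hfp
  have hfp : f p = 1 := by omega
  obtain ⟨q, hq⟩ := hf.surjective 0
  have hqp : q < p := hf.lt_of_lt _ _ (by simp [hfp, hq])
  have hgq : g q = 0 := le_antisymm (hp ▸ hg.le_of_le hqp.le) (Fin.zero_le _)
  obtain ⟨h, hm, hr, hl⟩ := hα
  obtain ⟨a, ha⟩ : p ∈ Set.range h := hr ▸ hp
  obtain ⟨b, hb⟩ : q ∈ Set.range h := hr ▸ hgq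
  refine hind ⟨f ∘ h, fun i => ?_, fun s t hst => ?_, fun s t hst => ?_⟩
  · fin_cases i
    · exact ⟨b, by simp [hb, hq]⟩
    · exact ⟨a, by simp [ha, hfp]⟩
  · exact hm.lt_iff_lt.1 (hf.lt_of_lt _ _ hst)
  · exact (hl _ _).1 (hf.apply_lt_of_lt _ _ hst)

theorem IsDecomposition.unique {N : ℕ} {π : Perm N} {s s' : Σ n, Perm n}
    {x : Fin s.1 → Σ k, Perm k} {x' : Fin s'.1 → Σ k, Perm k} {f : Fin N → Fin s.1}
    {f' : Fin N → Fin s'.1} (hd : IsDecomposition π s.2 x f) (hd' : IsDecomposition π s'.2 x' f')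
    (hs : IsSimple s.2) (hs' : IsSimple s'.2) (hm : 2 ≤ s.1) (hm' : 2 ≤ s'.1)
    (ha : IsAdmissible s.2 x) (ha' : IsAdmissible s'.2 x') :
    (⟨s, x⟩ : Σ s : Σ n, Perm n, (Fin s.1 → Σ k, Perm k)) = ⟨s', x'⟩ := by
  obtain ⟨h1, h2⟩ := hd.isBlockMap.simple_unique hd'.isBlockMap hs hs' hm hm'
  obtain rfl : s = s' := h1
  have hff : f = f' := by
    by_cases hs2 : s.1 = 2
    · obtain ⟨m, σ⟩ := s
      dsimp only at *
      subst hs2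
      have h3 (p) (hp : f' p = 0) : f p = 0 := hd.isBlockMap.eq_zero_of_not_isInflationOf
        hd'.isBlockMap (hd'.isPattern 0) (ha' rfl 0 rfl) hp
      have h4 (p) (hp : f p = 0) : f' p = 0 := hd'.isBlockMap.eq_zero_of_not_isInflationOf
        hd.isBlockMap (hd.isPattern 0) (ha rfl 0 rfl) hp
      have h5 : ∀ a b : Fin 2, (b = 0 → a = 0) → (a = 0 → b = 0) → a = b := by decide
      exact funext fun p => h5 _ _ (h3 p) (h4 p)
    · exact funext fun p => Fin.ext (h2 hs2 p)
  subst hff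
  rw [funext fun i => (hd.isPattern i).unique (hd'.isPattern i)]

/-- The quotient of `π` by a monotone map compatible with the values. -/
theorem exists_isBlockMap_of_monotone {N : ℕ} (π : Perm N) {L : Type*} [LinearOrder L]
    (c : Fin N → L) (hc : Monotone c)
    (hπ : ∀ p q r s, c p = c r → c q = c s → c p ≠ c q → π p < π q → π r < π s) :
    ∃ (s : Σ n, Perm n) (f : Fin N → Fin s.1),
      s.1 = (Finset.univ.image c).card ∧ IsBlockMap π s.2 f := by
  let e := (Finset.univ.image c).orderIsoOfFin rfl
  let f : Fin N → Fin (Finset.univ.image c).card := fun p => e.symm ⟨c p, by simp⟩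
  have hlt (p q) : f p < f q ↔ c p < c q := by simp [f]
  have heq (p q) : f p = f q ↔ c p = c q := by simp [f]
  have hsurj : Function.Surjective f := fun i => by
    obtain ⟨p, -, hp⟩ := Finset.mem_image.1 (e i).2
    exact ⟨p, by simp [f, hp]⟩
  obtain ⟨r, hr⟩ := hsurj.hasRightInverse
  obtain ⟨σ, hσ⟩ := Perm.exists_lt_iff (π ∘ r) (π.injective.comp hr.injective)
  refine ⟨⟨_, σ⟩, f, rfl, hsurj, fun p q h => ?_, fun p q h => ?_⟩
  · exact lt_of_not_ge fun h' => ((hlt p q).1 h).not_ge (hc h')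
  · refine hπ (r (f p)) (r (f q)) p q ((heq _ _).1 (hr _)) ((heq _ _).1 (hr _)) ?_ ((hσ _ _).1 h)
    rw [Ne, ← heq, hr, hr]
    rintro h'
    simp [h'] at h

theorem IsBlockMap.exists_shorter {N m : ℕ} {π : Perm N} {σ : Perm m} {f : Fin N → Fin m}
    (hf : IsBlockMap π σ f) (hσ : ¬ IsSimple σ) :
    ∃ (s : Σ n, Perm n) (g : Fin N → Fin s.1), 2 ≤ s.1 ∧ s.1 < m ∧ IsBlockMap π s.2 g := by
  classical
  simp only [IsSimple, not_forall, not_or, not_le] at hσ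
  obtain ⟨I, hI, hI1, hIm⟩ := hσ
  have hI := hI.isBiconvex
  obtain ⟨a, ha, b, hb, hab⟩ := Finset.one_lt_card.1 hI1
  obtain ⟨d, hd⟩ : ∃ d, d ∉ I := by
    by_contra! h
    exact hIm (by simp [Finset.eq_univ_iff_forall.2 h])
  let c : Fin m → Fin m := fun i => if i ∈ I then a else i
  have hcm : Monotone c := by
    intro i j hij
    have h1 := hI.1 i j a
    have h2 := hI.1 a i j
    simp only [c, Finset.mem_coe] at *
    split_ifs <;> grind
  obtain ⟨s, g, hs, hg⟩ := exists_isBlockMap_of_monotone π (c ∘ f)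
    (fun p q h => hcm (hf.le_of_le h)) (by
      intro p q r t hpr hqt hpq hlt
      have hfpq : f p ≠ f q := fun h => hpq (congrArg c h)
      have h1 := (hf.apply_lt_iff hfpq).1 hlt
      refine hf.apply_lt_of_lt _ _ ?_
      simp only [Function.comp_apply, c] at hpr hqt hpq
      have k1 := hI.2 (f p) (f q) (f r)
      have k2 := hI.2 (f q) (f p) (f t)
      simp only [Finset.mem_coe] at k1 k2
      by_cases hp : f p ∈ I
      · have hq : f q ∉ I := fun hq => by simp [hp, hq] at hpq
        have ht : f t = f q := by grind
        have hr : f r ∈ I := by grind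
        rw [ht]
        exact lt_of_not_ge fun h => hq (k1 hp hr h1.le h)
      · have hr : f r = f p := by grind
        rw [hr]
        by_cases hq : f q ∈ I
        · have ht : f t ∈ I := by grind
          exact lt_of_not_ge fun h => hp (hI.2 (f t) (f p) (f q) ht hq h h1.le)
        · have ht : f t = f q := by grind
          rwa [ht])
  have himg (i) : c i ∈ Finset.univ.image (c ∘ f) := by
    obtain ⟨p, rfl⟩ := hf.surjective i
    exact Finset.mem_image_of_mem (c ∘ f) (Finset.mem_univ p)
  refine ⟨s, g, ?_, ?_, hg⟩
  · rw [hs, Nat.succ_le_iff, Finset.one_lt_card]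
    refine ⟨_, himg a, _, himg d, ?_⟩
    simp only [c, ha, hd, if_true, if_false]
    exact fun h => hd (h ▸ ha)
  · rw [hs]
    conv_rhs => rw [← Fintype.card_fin m]
    refine Finset.card_lt_univ_of_notMem (x := b) fun h => ?_
    obtain ⟨p, -, hp⟩ := Finset.mem_image.1 h
    simp only [Function.comp_apply, c] at hp
    split_ifs at hp with h'
    · exact hab hp
    · exact h' (hp ▸ hb)

theorem IsBlockMap.exists_smaller_first_block {N k : ℕ} {π : Perm N} {σ : Perm 2}
    {f : Fin N → Fin 2} (hf : IsBlockMap π σ f) {α : Perm k} (hα : IsPattern π (f ⁻¹' {0}) α)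
    (hs : IsInflationOf σ α) : ∃ g : Fin N → Fin 2, IsBlockMap π σ g ∧
      (Finset.univ.filter fun p => g p = 0).card < (Finset.univ.filter fun p => f p = 0).card := by
  classical
  obtain ⟨h, hm, hr, hl⟩ := hα
  obtain ⟨g, hg⟩ := hs
  have hf0 (s) : f (h s) = 0 := by
    have : h s ∈ f ⁻¹' {0} := hr ▸ ⟨s, rfl⟩
    exact this
  let F : Fin N → Fin 2 := fun p => if ∃ s, h s = p ∧ g s = 0 then 0 else 1
  have hF0 (p) : F p = 0 ↔ ∃ s, h s = p ∧ g s = 0 := by simp [F]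
  have hF1 (p) : F p = 1 ↔ ¬ ∃ s, h s = p ∧ g s = 0 := by simp [F]
  have key (p q) (hp : F p = 0) (hq : F q = 1) :
      p < q ∧ (σ 0 < σ 1 → π p < π q) ∧ (σ 1 < σ 0 → π q < π p) := by
    obtain ⟨s, rfl, hs⟩ := (hF0 p).1 hp
    by_cases hfq : f q = 0
    · obtain ⟨t, rfl⟩ : q ∈ Set.range h := hr ▸ hfq
      have ht : g t = 1 := by
        have : g t ≠ 0 := fun h' => (hF1 _).1 hq ⟨t, rfl, h'⟩
        omega
      refine ⟨hm (hg.lt_of_lt _ _ (by simp [hs, ht])), fun h' => (hl _ _).2 ?_,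
        fun h' => (hl _ _).2 ?_⟩
      · exact hg.apply_lt_of_lt _ _ (by rwa [hs, ht])
      · exact hg.apply_lt_of_lt _ _ (by rwa [hs, ht])
    · have hfq : f q = 1 := by omega
      refine ⟨hf.lt_of_lt _ _ (by simp [hf0, hfq]), fun h' => ?_, fun h' => ?_⟩
      · exact hf.apply_lt_of_lt _ _ (by rwa [hf0, hfq])
      · exact hf.apply_lt_of_lt _ _ (by rwa [hf0, hfq])
  have hcases (p) : F p = 0 ∨ F p = 1 := by omega
  obtain ⟨a, ha⟩ := hg.surjective 0
  obtain ⟨b, hb⟩ := hg.surjective 1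
  have hFa : F (h a) = 0 := (hF0 _).2 ⟨a, rfl, ha⟩
  have hFb : F (h b) = 1 := (hF1 _).2 (by
    rintro ⟨s, hs, hs'⟩
    rw [hm.injective hs, hb] at hs'
    simp at hs')
  refine ⟨F, ⟨fun i => ?_, fun p q hpq => ?_, fun p q hpq => ?_⟩, ?_⟩
  · fin_cases i
    · exact ⟨_, hFa⟩
    · exact ⟨_, hFb⟩
  · rcases hcases p with hp | hp <;> rcases hcases q with hq | hq <;> rw [hp, hq] at hpq
    · simp at hpq
    · exact (key p q hp hq).1
    · simp at hpq
    · simp at hpq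
  · rcases hcases p with hp | hp <;> rcases hcases q with hq | hq <;> rw [hp, hq] at hpq
    · simp at hpq
    · exact (key p q hp hq).2.1 hpq
    · exact (key q p hq hp).2.2 hpq
    · simp at hpq
  · apply Finset.card_lt_card
    rw [Finset.ssubset_iff_of_subset]
    · exact ⟨h b, by simp [hf0], by simp [hFb]⟩
    · intro p hp
      obtain ⟨s, rfl, -⟩ := (hF0 p).1 (by simpa using hp)
      simp [hf0]

theorem exists_isDecomposition_of_isBlockMap {N m : ℕ} {π : Perm N} {σ : Perm m}
    {f : Fin N → Fin m} (hf : IsBlockMap π σ f) : ∃ x, IsDecomposition π σ x f := by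
  choose x hx using fun i => exists_isPattern π (f ⁻¹' {i})
  exact ⟨x, hf, hx⟩

/-- Every permutation of length at least two is the inflation of a simple permutation. -/
theorem exists_admissible_decomposition {N : ℕ} (π : Perm N) (hN : 2 ≤ N) :
    ∃ (s : Σ n, Perm n) (x : Fin s.1 → Σ k, Perm k) (f : Fin N → Fin s.1), 2 ≤ s.1 ∧
      IsSimple s.2 ∧ IsDecomposition π s.2 x f ∧ IsAdmissible s.2 x := by
  classical
  have hex : ∃ m, 2 ≤ m ∧ ∃ (σ : Perm m) (f : Fin N → Fin m), IsBlockMap π σ f :=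
    ⟨N, hN, π, _root_.id, .id π⟩
  obtain ⟨m, ⟨hm, σ, f, hf⟩, hmin⟩ : ∃ m, (2 ≤ m ∧ ∃ (σ : Perm m) (f : Fin N → Fin m),
      IsBlockMap π σ f) ∧ ∀ l < m, ¬ (2 ≤ l ∧ ∃ (σ : Perm l) (f : Fin N → Fin l),
      IsBlockMap π σ f) := ⟨_, Nat.find_spec hex, fun l hl => Nat.find_min hex hl⟩
  have hσ : IsSimple σ := by
    by_contra hσ
    obtain ⟨s, g, h2, hs, hg⟩ := hf.exists_shorter hσ
    exact hmin _ hs ⟨h2, s.2, g, hg⟩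
  by_cases hm2 : m = 2
  · subst hm2
    have hex : ∃ n, ∃ f : Fin N → Fin 2, IsBlockMap π σ f ∧
        (Finset.univ.filter fun p => f p = 0).card = n := ⟨_, f, hf, rfl⟩
    obtain ⟨f, hf, hn⟩ := Nat.find_spec hex
    obtain ⟨x, hx⟩ := exists_isDecomposition_of_isBlockMap hf
    refine ⟨⟨2, σ⟩, x, f, hm, hσ, hx, fun _ i hi hs => ?_⟩
    obtain rfl : i = 0 := Fin.ext hi
    obtain ⟨g, hg, hlt⟩ := hf.exists_smaller_first_block (hx.isPattern 0) hs
    exact Nat.find_min hex (hlt.trans_eq hn) ⟨g, hg, rfl⟩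
  · obtain ⟨x, hx⟩ := exists_isDecomposition_of_isBlockMap hf
    exact ⟨⟨m, σ⟩, x, f, hm, hσ, hx, fun h => absurd h hm2⟩

theorem isAlgebraicOverQx_of_isAlgebraic {f : PowerSeries ℚ} (hf : IsAlgebraic (Polynomial ℚ) f) :
    IsAlgebraicOverQx f := by
  obtain ⟨P, hP, h⟩ := hf
  refine ⟨P, hP, ?_⟩
  have hmap : algebraMap (Polynomial ℚ) (PowerSeries ℚ) = Polynomial.coeToPowerSeries.ringHom :=
    RingHom.ext fun p => by simp [PowerSeries.algebraMap_apply']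
  rwa [Polynomial.aeval_def, hmap] at h

/-- The nonempty members of a class. -/
abbrev Member (C : ∀ n, Set (Perm n)) := {p : Σ n, Perm n // 0 < p.1 ∧ p.2 ∈ C p.1}

/-- The simple members of a class, of length at least two. -/
abbrev SimpleMember (C : ∀ n, Set (Perm n)) :=
  {p : Σ n, Perm n // (p.2 ∈ C p.1 ∧ IsSimple p.2) ∧ 2 ≤ p.1}

theorem FinitelyManySimples.finite_simpleMember {C : ∀ n, Set (Perm n)}
    (hfin : FinitelyManySimples C) : Finite (SimpleMember C) :=
  (hfin.subset fun _ (hp : _ ∧ _) => hp.1 : {p : Σ n, Perm n |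
    (p.2 ∈ C p.1 ∧ IsSimple p.2) ∧ 2 ≤ p.1}.Finite).to_subtype

theorem finite_member_length_eq (C : ∀ n, Set (Perm n)) (n : ℕ) :
    Finite {x : Member C // x.1.1 = n} := by
  refine Finite.of_injective (β := Perm n) (fun x => x.2 ▸ x.1.1.2) ?_
  rintro ⟨⟨⟨k, π⟩, h⟩, hk⟩ ⟨⟨⟨k', π'⟩, h'⟩, hk'⟩ heq
  dsimp only at hk hk'
  subst hk hk'
  obtain rfl : π = π' := heq
  rfl

/-- The properties from `Ps` that a member satisfies, and the simple members it inflates. -/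
def memberColour (C : ∀ n, Set (Perm n)) (Ps : Set (∀ n, Set (Perm n))) (x : Member C) :
    Set Ps × Set (SimpleMember C) :=
  ({P | x.1.2 ∈ P.1 x.1.1}, {s | IsInflationOf s.1.2 x.1.2})

/-- The colour tuples of admissible blocks for `s`. -/
def IsAdmissibleColour {C : ∀ n, Set (Perm n)} {Ps : Set (∀ n, Set (Perm n))} (s : SimpleMember C)
    (c : Fin s.1.1 → Set Ps × Set (SimpleMember C)) : Prop :=
  s.1.1 = 2 → ∀ i : Fin s.1.1, (i : ℕ) = 0 → s ∉ (c i).2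

theorem Perm.sigma_eq_of_length_eq_one {p q : Σ n, Perm n} (hp : p.1 = 1) (hq : q.1 = 1) :
    p = q := by
  obtain ⟨n, π⟩ := p
  obtain ⟨k, ρ⟩ := q
  dsimp only at hp hq
  subst hp hq
  rw [Subsingleton.elim π ρ]

theorem exists_member_decomposition {C : ∀ n, Set (Perm n)} (hwc : WreathClosed C)
    (s : SimpleMember C) (x : Fin s.1.1 → Member C) :
    ∃ (p : Member C) (f : Fin p.1.1 → Fin s.1.1),
      IsDecomposition p.1.2 s.1.2 (fun i => (x i).1) f := by
  obtain ⟨p, f, hd⟩ := exists_isDecomposition s.1.2 (fun i => (x i).1) fun i => (x i).2.1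
  refine ⟨⟨p, ?_, hwc s.1.2 _ _ _ s.2.1.1 (fun i => (x i).2.2) hd.isInflation⟩, f, hd⟩
  have h2 := s.2.2
  obtain ⟨q, -⟩ := hd.isBlockMap.surjective ⟨0, by omega⟩
  exact q.pos

theorem isAlgebraic_weightGF_memberColour {C : ∀ n, Set (Perm n)} (hC : IsPermClass C)
    (hwc : WreathClosed C) (hfin : FinitelyManySimples C) {Ps : Set (∀ n, Set (Perm n))}
    (hPs : Ps.Finite) (hqc : QueryComplete Ps) (t : Set Ps × Set (SimpleMember C)) :
    IsAlgebraic (Polynomial ℚ)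
      (weightGF fun x : {x : Member C // memberColour C Ps x = t} => x.1.1.1) := by
  have : Finite Ps := hPs.to_subtype
  have := hfin.finite_simpleMember
  rcases isEmpty_or_nonempty (Member C) with hE | ⟨⟨p₀, h₀, hp₀⟩⟩
  · convert isAlgebraic_zero
    · ext n
      simp [weightGF]
    · infer_instance
  have hone : (1 : Perm 1) ∈ C 1 := by
    refine hC _ p₀.2 hp₀ ⟨fun _ => ⟨0, h₀⟩, Subsingleton.strictMono _, fun s t => ?_⟩
    simp [Subsingleton.elim s t]
  let pt : Member C := ⟨⟨1, 1⟩, one_pos, hone⟩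
  choose infl blk hinfl using fun s => exists_member_decomposition hwc (C := C) s
  have hlen (s : SimpleMember C) (x) : 2 ≤ (infl s x).1.1 := by
    rw [← Fintype.card_fin (infl s x).1.1]
    refine s.2.2.trans ?_
    simpa using Fintype.card_le_of_surjective _ (hinfl s x).isBlockMap.surjective
  let Φ : Unit ⊕ (Σ s : SimpleMember C, {x : Fin s.1.1 → Member C //
      IsAdmissibleColour s (memberColour C Ps ∘ x)}) → Member C :=
    Sum.elim (fun _ => pt) fun y => infl y.1 y.2.1
  have hΦ : Function.Bijective Φ := by
    constructor
    · rintro (⟨⟩ | ⟨s, x, hx⟩) (⟨⟩ | ⟨s', x', hx'⟩) h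
      · rfl
      · have h1 := hlen s' x'
        rw [← show pt = infl s' x' from h] at h1
        exact absurd h1 (by simp [pt])
      · have h1 := hlen s x
        rw [show infl s x = pt from h] at h1
        exact absurd h1 (by simp [pt])
      · have hd := hinfl s x
        have hd' := hinfl s' x'
        have h : infl s x = infl s' x' := h
        obtain ⟨g, hd'⟩ : ∃ g, IsDecomposition (infl s x).1.2 s'.1.2 (fun i => (x' i).1) g := by
          rw [h]
          exact ⟨_, hd'⟩
        have key := hd.unique hd' s.2.1.2 s'.2.1.2 s.2.2 s'.2.2 hx hx'
        obtain ⟨s, hs⟩ := s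
        obtain ⟨s', hs'⟩ := s'
        obtain ⟨rfl, hxx⟩ := Sigma.mk.inj key
        have hxx := congrFun (eq_of_heq hxx)
        obtain rfl : x = x' := funext fun i => Subtype.ext (hxx i)
        rfl
    · intro π
      rcases Nat.lt_or_ge π.1.1 2 with h | h
      · refine ⟨.inl (), Subtype.ext (Perm.sigma_eq_of_length_eq_one rfl ?_)⟩
        have := π.2.1
        omega
      · obtain ⟨s, x, f, hs, hsim, hd, ha⟩ := exists_admissible_decomposition π.1.2 h
        have hx (i) : (x i).2 ∈ C (x i).1 := hC _ _ π.2.2 (hd.isPattern i).contains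
        let s' : SimpleMember C := ⟨s, ⟨hC _ _ π.2.2 hd.isBlockMap.contains, hsim⟩, hs⟩
        let x' : Fin s.1 → Member C := fun i => ⟨x i, hd.length_pos i, hx i⟩
        refine ⟨.inr ⟨s', x', ha⟩, Subtype.ext ?_⟩
        exact (hd.eq_of_isInflation (hinfl s' x').isInflation).symm
  refine isAlgebraic_weightGF_of_decomposition (fun x : Member C => x.1.1)
    (finite_member_length_eq C) (fun x => x.2.1) (memberColour C Ps)
    (fun s : SimpleMember C => s.1.1) (fun s => s.2.2) (fun s => IsAdmissibleColour s)
    (Equiv.ofBijective Φ hΦ) rfl (fun s x => (hinfl s x.1).length_eq) (fun s x x' h => ?_) t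
  have h2 (x : Fin s.1.1 → Member C) :
      {s' : SimpleMember C | IsInflationOf s'.1.2 (infl s x).1.2} = {s} := by
    ext s'
    refine ⟨fun ⟨f, hf⟩ => Subtype.ext ?_, ?_⟩
    · exact (hf.simple_unique (hinfl s x).isBlockMap s'.2.1.2 s.2.1.2 s'.2.2 s.2.2).1
    · rintro rfl
      exact ⟨_, (hinfl s' x).isBlockMap⟩
  refine Prod.ext (Set.ext fun P => ?_) ((h2 x.1).trans (h2 x'.1).symm)
  refine hqc s.1.2 _ _ _ _ (fun i Q hQ => ?_) P.1 P.2 _ _ (hinfl s x.1).isInflation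
    (hinfl s x'.1).isInflation
  exact Set.ext_iff.1 (congrArg Prod.fst (congrFun h i)) ⟨Q, hQ⟩

theorem genFun_eq_weightGF {C : ∀ n, Set (Perm n)} {p : ∀ n, Perm n → Prop} :
    genFun (fun n => {π | π ∈ C n ∧ p n π}) =
      weightGF fun x : {x : Member C // p x.1.1 x.1.2} => x.1.1.1 := by
  ext n
  simp only [genFun, weightGF, PowerSeries.coeff_mk]
  split_ifs with hn
  · have : IsEmpty {x : {x : Member C // p x.1.1 x.1.2} // x.1.1.1 = n} :=
      ⟨fun x => (x.1.1.2.1.trans_eq (x.2.trans hn)).false⟩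
    simp
  · congr 1
    refine Nat.card_congr ⟨fun π => ⟨⟨⟨⟨n, π.1⟩, Nat.pos_of_ne_zero hn, π.2.1⟩, π.2.2⟩, rfl⟩,
      fun x => ⟨x.2 ▸ x.1.1.1.2, ?_⟩, fun π => rfl, ?_⟩
    · obtain ⟨⟨⟨⟨k, π⟩, h, h'⟩, h''⟩, hk⟩ := x
      dsimp only at hk
      subst hk
      exact ⟨h', h''⟩
    · rintro ⟨⟨⟨⟨k, π⟩, h, h'⟩, h''⟩, hk⟩
      dsimp only at hk
      subst hk
      rfl

/-- Let `C` be a wreath-closed permutation class containing only finitely many simple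
permutations, `Ps` a finite query-complete set of properties, and `Qs ⊆ Ps`.  Then the
generating function of the set of permutations in `C` satisfying every property in `Qs`
is algebraic over `ℚ[x]`. -/
theorem statement6 (C : ∀ n, Set (Perm n)) (hC : IsPermClass C) (hwc : WreathClosed C)
    (hfin : FinitelyManySimples C)
    (Ps : Set (∀ n, Set (Perm n))) (hPs : Ps.Finite) (hqc : QueryComplete Ps)
    (Qs : Set (∀ n, Set (Perm n))) (hQs : Qs ⊆ Ps) :
    IsAlgebraicOverQx (genFun fun n => {π : Perm n | π ∈ C n ∧ ∀ P ∈ Qs, π ∈ P n}) := by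
  refine isAlgebraicOverQx_of_isAlgebraic ?_
  have : Finite Ps := hPs.to_subtype
  have := hfin.finite_simpleMember
  let T := {t : Set Ps × Set (SimpleMember C) // ∀ P (hP : P ∈ Qs), ⟨P, hQs hP⟩ ∈ t.1}
  have : Fintype T := Fintype.ofFinite T
  let e : {x : Member C // ∀ P ∈ Qs, x.1.2 ∈ P x.1.1} ≃
      Σ t : T, {x : Member C // memberColour C Ps x = t} :=
    { toFun := fun x => ⟨⟨memberColour C Ps x.1, x.2⟩, x.1, rfl⟩
      invFun := fun y => ⟨y.2.1, fun P hP => by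
        have h := y.1.2 P hP
        rwa [← y.2.2] at h⟩
      left_inv := fun x => rfl
      right_inv := by
        rintro ⟨⟨t, ht⟩, x, hx⟩
        change memberColour C Ps x = t at hx
        subst hx
        rfl }
  rw [genFun_eq_weightGF, weightGF_congr (w := fun x => x.1.1.1) e
    (w' := fun y : Σ t : T, {x : Member C // memberColour C Ps x = t} => y.2.1.1.1)
    (fun x => rfl), weightGF_sigma
    (w := fun (t : T) (x : {x : Member C // memberColour C Ps x = t}) => x.1.1.1)]
  · exact Subalgebra.sum_mem (Subalgebra.algebraicClosure (Polynomial ℚ) (PowerSeries ℚ))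
      fun t _ => isAlgebraic_weightGF_memberColour hC hwc hfin hPs hqc t.1
  · intro t n
    have := finite_member_length_eq C n
    exact Finite.of_injective (β := {x : Member C // x.1.1 = n}) (fun x => ⟨x.1.1, x.2⟩)
      fun x y h => Subtype.ext (Subtype.ext (congrArg (fun z => z.1) h))
end
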